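/- Let K be an algebraic closure of the rational function field 𝔽₂(t) and let R = K[x,y,z,u,v,w]/(z⁴ + xyz² + x³z + y³z + tx²y², x³y³ − ux⁴ − vy⁴ − wz⁴). Then the images of x and y form a Q-sequence in R, but the superheight of (x,y)R is 1: for every Noetherian commutative R-algebra S in which (x,y)S is a proper ideal, the height of (x,y)S is at most 1. -/

import Mathlib

open scoped BigOperators
open MvPolynomial

universe u

/-- A filtration of `M` of length `h` whose factors are cyclic modules killed by `J`. -/
def HasQLFiltration (S : Type u) [CommRing S] (J : Ideal S)
    (M : Type u) [AddCommGroup M] [Module S M] (h : ℕ) : Prop :=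
  ∃ c : Fin (h + 1) → Submodule S M,
    Monotone c ∧ c 0 = ⊥ ∧ c (Fin.last h) = ⊤ ∧
    ∀ i : Fin h,
      (∃ m : M, c i.succ = c i.castSucc ⊔ Submodule.span S {m}) ∧
      ∀ a ∈ J, ∀ x ∈ c i.succ, a • x ∈ c i.castSucc

/-- The `J`-quasilength of `M`. -/
noncomputable def quasilength (S : Type u) [CommRing S] (J : Ideal S)
    (M : Type u) [AddCommGroup M] [Module S M] : ℕ∞ :=
  sInf {n : ℕ∞ | ∃ h : ℕ, n = (h : ℕ∞) ∧ HasQLFiltration S J M h}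

/-- `x₁, …, x_d` is a Q-sequence in `S`. -/
def IsQSequence {d : ℕ} {S : Type u} [CommRing S] (x : Fin d → S) : Prop :=
  Ideal.span (Set.range x) ≠ ⊤ ∧
  ∀ t : ℕ, 0 < t →
    ((t : ℕ∞) ^ d) ≤ quasilength S (Ideal.span (Set.range x))
      (S ⧸ Ideal.span (Set.range fun i => x i ^ t))

/-- The height of an ideal: the infimum of the heights of the primes containing it. -/
noncomputable def idealHeight (S : Type u) [CommRing S] (J : Ideal S) : ℕ∞ :=
  ⨅ (P : PrimeSpectrum S) (_ : J ≤ P.asIdeal), Order.height P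

set_option linter.unusedSimpArgs false
set_option linter.unusedSectionVars false
set_option linter.style.longLine false
set_option linter.style.haveILetI false

namespace BM

/-- binary forms live here -/
abbrev A2 (k : Type*) [Field k] := MvPolynomial (Fin 2) k

section forms
variable {k : Type*} [Field k]

/-- homogeneous of degree `d` (an integer) -/
def Hg (p : A2 k) (d : ℤ) : Prop := IsWeightedHomogeneous (fun _ : Fin 2 => (1 : ℤ)) p d

/-- bigraded piece -/
def W (p : A2 k) (d : ℤ) (e : ZMod 3) : Prop :=
  IsWeightedHomogeneous (![(1, 1), (1, -1)] : Fin 2 → ℤ × ZMod 3) p (d, e)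

/-- exchange of the variables -/
noncomputable def sw : A2 k →ₐ[k] A2 k := aeval ![X 1, X 0]

/-- evaluation at `(1,1)` -/
noncomputable def ev : A2 k →ₐ[k] k := aeval ![1, 1]

@[simp] lemma sw_X0 : sw (X 0 : A2 k) = X 1 := by simp [sw]
@[simp] lemma sw_X1 : sw (X 1 : A2 k) = X 0 := by simp [sw]
@[simp] lemma sw_C (c : k) : sw (C c : A2 k) = C c := by simp [sw]
@[simp] lemma ev_X0 : ev (X 0 : A2 k) = 1 := by simp [ev]
@[simp] lemma ev_X1 : ev (X 1 : A2 k) = 1 := by simp [ev]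
@[simp] lemma ev_C (c : k) : ev (C c : A2 k) = c := by simp [ev]

@[simp] lemma sw_sw (p : A2 k) : sw (sw p) = p := by
  have : (sw.comp sw : A2 k →ₐ[k] A2 k) = AlgHom.id k _ := by
    ext i; fin_cases i <;> simp
  exact DFunLike.congr_fun this p

@[simp] lemma ev_sw (p : A2 k) : ev (sw p) = ev p := by
  have : (ev.comp sw : A2 k →ₐ[k] k) = ev := by
    ext i; fin_cases i <;> simp
  exact DFunLike.congr_fun this p

lemma Hg_iff {p : A2 k} {d : ℤ} :
    Hg p d ↔ ∀ m : Fin 2 →₀ ℕ, coeff m p ≠ 0 → (m 0 : ℤ) + m 1 = d := by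
  unfold Hg IsWeightedHomogeneous
  simp [Finsupp.weight_apply, Finsupp.sum_fintype]

lemma W_iff {p : A2 k} {d : ℤ} {e : ZMod 3} :
    W p d e ↔ ∀ m : Fin 2 →₀ ℕ, coeff m p ≠ 0 →
      (m 0 : ℤ) + m 1 = d ∧ (m 0 : ZMod 3) - m 1 = e := by
  unfold W IsWeightedHomogeneous
  simp [Finsupp.weight_apply, Finsupp.sum_fintype, Prod.ext_iff, sub_eq_add_neg]

lemma W.hg {p : A2 k} {d : ℤ} {e : ZMod 3} (h : W p d e) : Hg p d :=
  Hg_iff.2 fun m hm => (W_iff.1 h m hm).1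

lemma Hg.mul {p q : A2 k} {d d' D : ℤ} (h : Hg p d) (h' : Hg q d') (hD : d + d' = D) :
    Hg (p * q) D := by subst hD; exact IsWeightedHomogeneous.mul h h'
lemma Hg.add {p q : A2 k} {d : ℤ} (h : Hg p d) (h' : Hg q d) :
    Hg (p + q) d := IsWeightedHomogeneous.add h h'
lemma Hg.pow {p : A2 k} {d D : ℤ} (h : Hg p d) (n : ℕ) (hD : n * d = D) :
    Hg (p ^ n) D := by
  subst hD
  have := IsWeightedHomogeneous.pow h n
  rw [nsmul_eq_mul] at this; exact this
lemma Hg.cmul {p : A2 k} {d : ℤ} (c : k) (h : Hg p d) : Hg (C c * p) d := by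
  have := IsWeightedHomogeneous.mul (isWeightedHomogeneous_C _ c) h
  rwa [zero_add] at this
lemma Hg_X (i : Fin 2) : Hg (X i : A2 k) 1 := isWeightedHomogeneous_X _ _ i
lemma Hg_C (c : k) : Hg (C c : A2 k) 0 := isWeightedHomogeneous_C _ c
lemma Hg_zero (d : ℤ) : Hg (0 : A2 k) d := isWeightedHomogeneous_zero _ _ d
lemma Hg_one : Hg (1 : A2 k) 0 := isWeightedHomogeneous_one _ _
lemma Hg_Xpow (i : Fin 2) (n : ℕ) : Hg (X i ^ n : A2 k) n := (Hg_X i).pow n (by simp)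

lemma W.mul {p q : A2 k} {d d' D : ℤ} {e e' E : ZMod 3} (h : W p d e) (h' : W q d' e')
    (hD : d + d' = D) (hE : e + e' = E) :
    W (p * q) D E := by subst hD; subst hE; exact IsWeightedHomogeneous.mul h h'
lemma W.add {p q : A2 k} {d : ℤ} {e : ZMod 3} (h : W p d e) (h' : W q d e) :
    W (p + q) d e := IsWeightedHomogeneous.add h h'
lemma W.pow {p : A2 k} {d D : ℤ} {e E : ZMod 3} (h : W p d e) (n : ℕ)
    (hD : n * d = D) (hE : n * e = E) : W (p ^ n) D E := by
  subst hD; subst hE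
  have := IsWeightedHomogeneous.pow h n
  have h2 : n • (d, e) = ((n : ℤ) * d, (n : ZMod 3) * e) := by
    ext <;> simp
  rw [h2] at this; exact this
lemma W.cmul {p : A2 k} {d : ℤ} {e : ZMod 3} (c : k) (h : W p d e) : W (C c * p) d e := by
  have := IsWeightedHomogeneous.mul (isWeightedHomogeneous_C 
    (![(1, 1), (1, -1)] : Fin 2 → ℤ × ZMod 3) c) h
  rwa [zero_add] at this
lemma W.cast {p : A2 k} {d D : ℤ} {e E : ZMod 3} (h : W p d e) (hD : d = D) (hE : e = E) :
    W p D E := by subst hD; subst hE; exact h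
lemma Hg.cast {p : A2 k} {d D : ℤ} (h : Hg p d) (hD : d = D) : Hg p D := by subst hD; exact h
lemma W_X0 : W (X 0 : A2 k) 1 1 := isWeightedHomogeneous_X _ _ 0
lemma W_X1 : W (X 1 : A2 k) 1 (-1) := isWeightedHomogeneous_X _ _ 1
lemma W_zero (d : ℤ) (e : ZMod 3) : W (0 : A2 k) d e := isWeightedHomogeneous_zero _ _ _
lemma W_one : W (1 : A2 k) 0 0 := isWeightedHomogeneous_one _ _

lemma mon_eq (m : Fin 2 →₀ ℕ) (c : k) :
    monomial m c = C c * X 0 ^ m 0 * X 1 ^ m 1 := by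
  rw [monomial_eq, Finsupp.prod_fintype _ _ (by simp)]; simp [mul_assoc]

lemma expand (p : A2 k) :
    p = ∑ m ∈ p.support, C (coeff m p) * X 0 ^ m 0 * X 1 ^ m 1 := by
  conv_lhs => rw [p.as_sum]
  exact Finset.sum_congr rfl fun m _ => mon_eq m _

lemma W.sw {p : A2 k} {d : ℤ} {e : ZMod 3} (h : W p d e) : W (sw p) d (-e) := by
  rw [expand p, map_sum]
  refine IsWeightedHomogeneous.sum _ _ _ fun m hm => ?_
  obtain ⟨h1, h2⟩ := W_iff.1 h m (mem_support_iff.1 hm)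
  simp only [map_mul, map_pow, sw_X0, sw_X1, sw_C]
  exact ((W_X1.pow (m 0) rfl rfl).cmul _).mul (W_X0.pow (m 1) rfl rfl) (by rw [← h1]; ring)
    (by rw [← h2]; ring)

lemma Hg.sw {p : A2 k} {d : ℤ} (h : Hg p d) : Hg (BM.sw p) d := by
  rw [expand p, map_sum]
  refine IsWeightedHomogeneous.sum _ _ _ fun m hm => ?_
  have h1 := Hg_iff.1 h m (mem_support_iff.1 hm)
  simp only [map_mul, map_pow, sw_X0, sw_X1, sw_C]
  exact (((Hg_X 1).pow (m 0) rfl).cmul _).mul ((Hg_X 0).pow (m 1) rfl) (by rw [← h1]; ring)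

/-- splitting lemma -/
lemma Hg.split {p : A2 k} {d : ℤ} (h : Hg p d) (a b : ℕ) (hab : (a : ℤ) + b ≤ d + 1) :
    ∃ p1 p2 : A2 k, Hg p1 (d - a) ∧ Hg p2 (d - b) ∧ p = p1 * X 0 ^ a + p2 * X 1 ^ b := by
  classical
  refine ⟨∑ m ∈ p.support with a ≤ m 0, C (coeff m p) * X 0 ^ (m 0 - a) * X 1 ^ m 1,
    ∑ m ∈ p.support with ¬ a ≤ m 0, C (coeff m p) * X 0 ^ m 0 * X 1 ^ (m 1 - b), ?_, ?_, ?_⟩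
  · refine IsWeightedHomogeneous.sum _ _ _ fun m hm => ?_
    simp only [Finset.mem_filter, mem_support_iff] at hm
    have h1 := Hg_iff.1 h m hm.1
    exact ((Hg_Xpow 0 _).cmul _).mul (Hg_Xpow 1 _) (by omega)
  · refine IsWeightedHomogeneous.sum _ _ _ fun m hm => ?_
    simp only [Finset.mem_filter, mem_support_iff] at hm
    have h1 := Hg_iff.1 h m hm.1
    exact ((Hg_Xpow 0 _).cmul _).mul (Hg_Xpow 1 _) (by omega)
  · conv_lhs => rw [expand p]
    rw [← Finset.sum_filter_add_sum_filter_not _ (fun m : Fin 2 →₀ ℕ => a ≤ m 0), Finset.sum_mul, Finset.sum_mul]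
    congr 1
    · refine Finset.sum_congr rfl fun m hm => ?_
      simp only [Finset.mem_filter, mem_support_iff] at hm
      have : X 0 ^ m 0 = (X 0 ^ (m 0 - a) * X 0 ^ a : A2 k) := by
        rw [← pow_add]; congr 1; omega
      rw [this]; ring
    · refine Finset.sum_congr rfl fun m hm => ?_
      simp only [Finset.mem_filter, mem_support_iff] at hm
      have h1 := Hg_iff.1 h m hm.1
      have : X 1 ^ m 1 = (X 1 ^ (m 1 - b) * X 1 ^ b : A2 k) := by
        rw [← pow_add]; congr 1; omega
      rw [this]; ring

lemma Hg.coeff_zero {p : A2 k} {d d' : ℤ} (h : Hg p d) (h' : Hg p d') (hd : d ≠ d') : p = 0 := by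
  by_contra hp
  exact hd (IsWeightedHomogeneous.inj_right hp h h')

lemma exists_factor_gen {M : Type*} [AddCommGroup M] (w : Fin 2 → M) {p f : A2 k} {d d' : M}
    (hp : IsWeightedHomogeneous w p d) (hf : IsWeightedHomogeneous w f d')
    (hdvd : f ∣ p) : ∃ p', p = f * p' ∧ IsWeightedHomogeneous w p' (d - d') := by
  obtain ⟨r, rfl⟩ := hdvd
  classical
  refine ⟨weightedHomogeneousComponent w (d - d') r, ?_,
    weightedHomogeneousComponent_isWeightedHomogeneous _ _⟩
  set r0 := weightedHomogeneousComponent w (d - d') r with hr0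
  have h0 : IsWeightedHomogeneous w (f * r0) d := by
    have := hf.mul (weightedHomogeneousComponent_isWeightedHomogeneous (w := w) (d - d') r)
    simpa using this
  have h1 : IsWeightedHomogeneous w (f * r - f * r0) d := hp.sub h0
  rw [← sub_eq_zero]
  ext m
  rw [coeff_zero]
  by_contra hne
  have hm := h1 hne
  apply hne
  rw [← mul_sub, coeff_mul]
  refine Finset.sum_eq_zero fun ab hab => ?_
  by_cases ha : coeff ab.1 f = 0
  · simp [ha]
  have h2 := hf ha
  have h3 : Finsupp.weight w ab.2 = d - d' := by
    rw [← hm, ← h2, ← Finset.HasAntidiagonal.mem_antidiagonal.1 hab, map_add]; abel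
  simp [hr0, coeff_weightedHomogeneousComponent, h3]

lemma exists_factor_W {p f : A2 k} {d d' : ℤ} {e e' : ZMod 3} (hp : W p d e) (hf : W f d' e')
    (hdvd : f ∣ p) : ∃ p', p = f * p' ∧ W p' (d - d') (e - e') :=
  exists_factor_gen _ hp hf hdvd

lemma exists_factor_Hg {p f : A2 k} {d d' : ℤ} (hp : Hg p d) (hf : Hg f d')
    (hdvd : f ∣ p) : ∃ p', p = f * p' ∧ Hg p' (d - d') :=
  exists_factor_gen _ hp hf hdvd

/-- the cubic `x³+y³` -/
noncomputable def s3 : A2 k := X 0 ^ 3 + X 1 ^ 3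

lemma W_s3 : W (s3 : A2 k) 3 0 :=
  (W_X0.pow 3 (by norm_num) (by decide)).add (W_X1.pow 3 (by norm_num) (by decide))

@[simp] lemma sw_s3 : sw (s3 : A2 k) = s3 := by simp [s3]; ring

lemma s3_ne : (s3 : A2 k) ≠ 0 := by
  intro h
  have := congrArg (aeval ![(1 : k), 0]) h
  simp [s3] at this

lemma ev_s3 [CharP k 2] : ev (s3 : A2 k) = 0 := by
  simp [s3]; exact CharTwo.add_self_eq_zero _

lemma dvd_mon [CharP k 2] (i j i' j' : ℕ) (h1 : i + j = i' + j')
    (h2 : (i : ZMod 3) - j = i' - j') :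
    (s3 : A2 k) ∣ X 0 ^ i * X 1 ^ j - X 0 ^ i' * X 1 ^ j' := by
  wlog h : i' ≤ i generalizing i j i' j'
  · rw [← dvd_neg, neg_sub]
    exact this i' j' i j h1.symm h2.symm (by omega)
  have h3 : (3 : ℤ) ∣ ((i : ℤ) - j) - (i' - j') := by
    have : (((((i : ℤ) - j) - (i' - j') : ℤ)) : ZMod 3) = 0 := by
      push_cast; rw [h2]; ring
    exact (ZMod.intCast_zmod_eq_zero_iff_dvd _ 3).1 this
  obtain ⟨n, rfl⟩ : ∃ n, i = i' + 3 * n := ⟨(i - i') / 3, by omega⟩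
  have hj : j' = j + 3 * n := by omega
  subst hj
  have : (X 0 ^ (i' + 3 * n) * X 1 ^ j - X 0 ^ i' * X 1 ^ (j + 3 * n) : A2 k)
      = X 0 ^ i' * X 1 ^ j * ((X 0 ^ 3) ^ n - (X 1 ^ 3) ^ n) := by ring
  rw [this]
  refine Dvd.dvd.mul_left ?_ _
  have h4 : (s3 : A2 k) = X 0 ^ 3 - X 1 ^ 3 := by
    rw [s3, CharTwo.sub_eq_add]
  rw [h4]
  exact sub_dvd_pow_sub_pow _ _ n

lemma W.div_s3 [CharP k 2] {p : A2 k} {d : ℤ} {e : ZMod 3} (h : W p d e) (h0 : ev p = 0) :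
    ∃ p', p = s3 * p' ∧ W p' (d - 3) e := by
  have : (s3 : A2 k) ∣ p := by
    by_cases hp : p = 0
    · simp [hp]
    obtain ⟨m0, hm0⟩ := Finset.nonempty_iff_ne_empty.2 (mt support_eq_empty.1 hp)
    have h1 := W_iff.1 h m0 (mem_support_iff.1 hm0)
    have h2 : p = ∑ m ∈ p.support, C (coeff m p) * (X 0 ^ m 0 * X 1 ^ m 1
        - X 0 ^ m0 0 * X 1 ^ m0 1) := by
      simp_rw [mul_sub, Finset.sum_sub_distrib, ← Finset.sum_mul]
      have h3 : ev p = ∑ m ∈ p.support, coeff m p := by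
        conv_lhs => rw [expand p]
        simp
      rw [← map_sum, ← h3, h0]
      conv_lhs => rw [expand p]
      simp [mul_assoc]
    rw [h2]
    refine Finset.dvd_sum fun m hm => Dvd.dvd.mul_left ?_ _
    have h3 := W_iff.1 h m (mem_support_iff.1 hm)
    exact dvd_mon _ _ _ _ (by omega) (by rw [h3.2, h1.2])
  simpa using exists_factor_W h W_s3 this

/-- Euler-type functional: `∂x+∂y` at `(1,1)` -/
lemma euler {p : A2 k} {d : ℤ} (h : Hg p d) :
    ev (pderiv 0 p) + ev (pderiv 1 p) = (d : k) * ev p := by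
  conv_lhs => rw [expand p]
  conv_rhs => rw [expand p]
  simp only [map_sum, Finset.mul_sum, ← Finset.sum_add_distrib]
  refine Finset.sum_congr rfl fun m hm => ?_
  have h1 := Hg_iff.1 h m (mem_support_iff.1 hm)
  simp [← h1, pderiv_X]
  ring

lemma pderiv_sw (p : A2 k) : pderiv 0 (sw p) = sw (pderiv 1 p) := by
  induction p using MvPolynomial.induction_on with
  | C a => simp
  | add p q hp hq => simp [hp, hq]
  | mul_X p i hp =>
    fin_cases i <;> simp [hp, pderiv_X]

lemma X0_prime : Prime (X 0 : A2 k) := X_prime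
lemma X1_prime : Prime (X 1 : A2 k) := X_prime

lemma not_dvd01 : ¬ (X 1 : A2 k) ∣ X 0 := by
  rintro ⟨c, hc⟩
  have := congrArg (aeval ![(1 : k), 0]) hc
  simp at this

lemma coprime_xy {m n : ℕ} {a b : A2 k} (h : X 0 ^ m * a = X 1 ^ n * b) :
    ∃ c, a = X 1 ^ n * c ∧ b = X 0 ^ m * c := by
  have h1 : (X 1 : A2 k) ^ n ∣ X 0 ^ m * a := ⟨b, h⟩
  have h2 : (X 1 : A2 k) ^ n ∣ a := by
    refine X1_prime.pow_dvd_of_dvd_mul_left n ?_ h1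
    intro h3
    exact not_dvd01 (X1_prime.dvd_of_dvd_pow h3)
  obtain ⟨c, rfl⟩ := h2
  refine ⟨c, rfl, ?_⟩
  have h3 : (X 1 : A2 k) ^ n ≠ 0 := pow_ne_zero _ (X_ne_zero _)
  apply mul_left_cancel₀ h3
  rw [← h]; ring

end forms
end BM

namespace BM
section rec
variable {k : Type*} [Field k] [CharP k 2] (t : k)

/-- coefficients of `z^{2^k}` -/
noncomputable def abc : ℕ → A2 k × A2 k × A2 k
  | 0 => (0, 1, 0)
  | n + 1 => let p := abc n
    (X 0 * X 1 * p.1 ^ 2 + p.2.1 ^ 2, s3 * p.1 ^ 2, p.2.2 ^ 2 + C t * X 0 ^ 2 * X 1 ^ 2 * p.1 ^ 2)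

/-- linear form attached to parity -/
noncomputable def ll (n : ℕ) : A2 k := if Even n then X 1 else X 0
/-- quadratic form attached to parity -/
noncomputable def ll2 (n : ℕ) : A2 k := if Even n then X 0 ^ 2 else X 1 ^ 2

lemma two_eq : (2 : A2 k) = 0 := CharTwo.two_eq_zero

lemma abc_rel (n : ℕ) :
    s3 * (abc t n).1 = X 0 ^ (2 ^ n) * ll n + X 1 ^ (2 ^ n) * sw (ll n) ∧
    s3 * (abc t n).2.1 = X 0 ^ (2 ^ n) * ll2 n + X 1 ^ (2 ^ n) * sw (ll2 n) := by
  induction n with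
  | zero => constructor
            · simp [abc, ll]; linear_combination (-X 0 * X 1) * two_eq (k := k)
            · simp [abc, ll2, s3]; ring
  | succ n ih =>
    obtain ⟨h1, h2⟩ := ih
    constructor
    · apply mul_left_cancel₀ (s3_ne (k := k))
      have e1 : (s3 * (s3 * (abc t (n+1)).1) : A2 k)
        = X 0 * X 1 * (s3 * (abc t n).1) ^ 2 + (s3 * (abc t n).2.1) ^ 2 := by
        simp only [abc]; ring
      rw [e1, h1, h2]
      simp only [CharTwo.add_sq]
      rcases Nat.even_or_odd n with h | h
      · have h' : ¬ Even (n+1) := by simp [h, parity_simps]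
        simp only [ll, ll2, h, h', if_true, if_false, s3, pow_succ 2 n, pow_mul, map_pow, sw_X0, sw_X1]
        ring
      · have h' : Even (n+1) := by rw [Nat.even_add_one]; simpa using h
        have h : ¬ Even n := by simpa using h
        simp only [ll, ll2, h, h', if_true, if_false, s3, pow_succ 2 n, pow_mul, map_pow, sw_X0, sw_X1]
        ring
    · have e1 : (s3 * (abc t (n+1)).2.1 : A2 k) = (s3 * (abc t n).1) ^ 2 := by
        simp only [abc]; ring
      rw [e1, h1]
      simp only [CharTwo.add_sq]
      rcases Nat.even_or_odd n with h | h
      · have h' : ¬ Even (n+1) := by simp [h, parity_simps]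
        simp only [ll, ll2, h, h', if_true, if_false, s3, pow_succ 2 n, pow_mul, map_pow, sw_X0, sw_X1]
        ring
      · have h' : Even (n+1) := by rw [Nat.even_add_one]; simpa using h
        have h : ¬ Even n := by simpa using h
        simp only [ll, ll2, h, h', if_true, if_false, s3, pow_succ 2 n, pow_mul, map_pow, sw_X0, sw_X1]
        ring

lemma z_pow {B : Type*} [CommRing B] [CharP B 2] (F : A2 k →+* B) (z : B)
    (hz : z ^ 4 + F (X 0) * F (X 1) * z ^ 2 + F (X 0) ^ 3 * z + F (X 1) ^ 3 * z
      + F (C t) * F (X 0) ^ 2 * F (X 1) ^ 2 = 0) (n : ℕ) :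
    z ^ (2 ^ n) = F (abc t n).1 * z ^ 2 + F (abc t n).2.1 * z + F (abc t n).2.2 := by
  have h2 : (2 : B) = 0 := CharTwo.two_eq_zero
  induction n with
  | zero => simp [abc]
  | succ n ih =>
    rw [pow_succ, pow_mul, ih]
    simp only [CharTwo.add_sq, abc, map_add, map_mul, map_pow, s3]
    linear_combination (F (abc t n).1) ^ 2 * hz - (F (abc t n).1) ^ 2 * 
      (F (X 0) * F (X 1) * z ^ 2 + F (X 0) ^ 3 * z + F (X 1) ^ 3 * z
      + F (C t) * F (X 0) ^ 2 * F (X 1) ^ 2) * h2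

/-- `φ_n` -/
noncomputable def phi (n : ℕ) : A2 k := s3 * (abc t n).2.2

lemma z_pow' {B : Type*} [CommRing B] [CharP B 2] (F : A2 k →+* B) (z : B)
    (hz : z ^ 4 + F (X 0) * F (X 1) * z ^ 2 + F (X 0) ^ 3 * z + F (X 1) ^ 3 * z
      + F (C t) * F (X 0) ^ 2 * F (X 1) ^ 2 = 0) (n : ℕ) :
    F s3 * z ^ (2 ^ n) = F (phi t n) + F (X 0) ^ (2 ^ n) * (F (ll n) * z ^ 2 + F (ll2 n) * z)
      + F (X 1) ^ (2 ^ n) * (F (sw (ll n)) * z ^ 2 + F (sw (ll2 n)) * z) := by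
  obtain ⟨h1, h2⟩ := abc_rel t n
  have h1 := congrArg F h1
  have h2 := congrArg F h2
  rw [z_pow t F z hz n]
  simp only [map_add, map_mul, map_pow, phi] at *
  linear_combination z ^ 2 * h1 + z * h2

lemma phi_succ (n : ℕ) : s3 * phi t (n + 1) = phi t n ^ 2 + C t * X 0 ^ 2 * X 1 ^ 2 *
    (X 0 ^ (2 ^ n) * ll n + X 1 ^ (2 ^ n) * sw (ll n)) ^ 2 := by
  rw [← (abc_rel t n).1]; simp only [phi, abc]; ring

lemma sw_abc (n : ℕ) : sw (abc t n).1 = (abc t n).1 ∧ sw (abc t n).2.1 = (abc t n).2.1 ∧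
    sw (abc t n).2.2 = (abc t n).2.2 := by
  induction n with
  | zero => simp [abc]
  | succ n ih =>
    obtain ⟨h1, h2, h3⟩ := ih
    simp only [abc, map_add, map_mul, map_pow, sw_X0, sw_X1, sw_C, sw_s3, h1, h2, h3]
    refine ⟨by ring, trivial, by ring⟩

lemma sw_phi (n : ℕ) : sw (phi t n) = phi t n := by
  simp [phi, (sw_abc t n).2.2]

/-- `g_n` -/
noncomputable def gg : ℕ → k
  | 0 => 0
  | 1 => 0
  | n + 2 => gg (n + 1) ^ 2 + t

lemma ev_abc (n : ℕ) : ev (abc t (n+1)).1 = 1 ∧ ev (abc t (n+1)).2.1 = 0 ∧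
    ev (abc t (n+1)).2.2 = gg t (n+1) := by
  induction n with
  | zero => simp [abc, gg, ev_s3]
  | succ n ih =>
    obtain ⟨h1, h2, h3⟩ := ih
    rw [abc]
    simp only [map_add, map_mul, map_pow, ev_X0, ev_X1, ev_C, h1, h2, h3, ev_s3, gg]
    simp

lemma W_ll (n : ℕ) : W (ll n : A2 k) 1 (-(2 : ZMod 3) ^ n) := by
  rcases Nat.even_or_odd n with h | h
  · have : (2 : ZMod 3) ^ n = 1 := by
      obtain ⟨m, rfl⟩ := h
      rw [← two_mul, pow_mul, show (2 : ZMod 3) ^ 2 = 1 by decide, one_pow]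
    rw [this]; simp only [ll, h, if_true]; exact W_X1
  · have : (2 : ZMod 3) ^ n = -1 := by
      obtain ⟨m, rfl⟩ := h
      rw [pow_succ, pow_mul, show (2 : ZMod 3) ^ 2 = 1 by decide, one_pow]; decide
    have h : ¬ Even n := by simpa using h
    rw [this]; simp only [ll, h, if_false, neg_neg]; exact W_X0

@[simp] lemma ev_ll (n : ℕ) : ev (ll n : A2 k) = 1 := by
  unfold ll; split_ifs <;> simp

/-- syzygy data at level `j+2` -/
structure Syz (j : ℕ) (κ : k) (r1 a1 r2 a2 N N' : A2 k) : Prop where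
  hr1 : W r1 (2 * 2 ^ j - 2) 0
  ha1 : W a1 (2 * 2 ^ j + 1) (-(2 : ZMod 3) ^ (j + 2))
  hr2 : W r2 (2 * 2 ^ j - 1) 0
  ha2 : W a2 (2 * 2 ^ j + 2) (-(2 : ZMod 3) ^ (j + 2))
  sw1 : sw r1 = r1
  sw2 : sw r2 = r2
  rel1 : r1 * phi t (j + 2) = a1 * X 0 ^ (2 ^ (j + 2)) + sw a1 * X 1 ^ (2 ^ (j + 2))
  rel2 : r2 * phi t (j + 2) = a2 * X 0 ^ (2 ^ (j + 2)) + sw a2 * X 1 ^ (2 ^ (j + 2))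
  det : a1 * r2 + a2 * r1 = C κ * X 1 ^ (2 ^ (j + 2))
  ev1 : ev r1 = 1
  ev2 : ev r2 = 0
  hN : Hg N (2 ^ j - 2)
  hN' : Hg N' (2 ^ j - 2)
  decomp : r1 = X 0 ^ (2 ^ j) * N + X 1 ^ (2 ^ j) * N' + (X 0 * X 1) ^ (2 ^ j - 1)

/-- auxiliary form -/
noncomputable def UU (n : ℕ) (a r : A2 k) : A2 k := a ^ 2 + C t * X 0 ^ 2 * X 1 ^ 2 * (ll n * r) ^ 2

variable {t}

lemma UU_rel {n Q : ℕ} {a r : A2 k} (hQ : Q = 2 ^ n) (hs : sw r = r) (h : r * phi t n = a * X 0 ^ Q + sw a * X 1 ^ Q) :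
    r ^ 2 * (s3 * phi t (n + 1)) = UU t n a r * X 0 ^ (2 * Q) + sw (UU t n a r) * X 1 ^ (2 * Q) := by
  subst hQ
  have e : r ^ 2 * (s3 * phi t (n + 1)) = (r * phi t n) ^ 2 + C t * X 0 ^ 2 * X 1 ^ 2 * r ^ 2 *
    (X 0 ^ (2 ^ n) * ll n + X 1 ^ (2 ^ n) * sw (ll n)) ^ 2 := by
    rw [phi_succ]; ring
  rw [e, h]
  simp only [CharTwo.add_sq, UU, map_add, map_mul, map_pow, sw_X0, sw_X1, sw_C, hs]
  ring

lemma Syz.ev_a1 {j : ℕ} {κ : k} {r1 a1 r2 a2 N N' : A2 k} (h : Syz t j κ r1 a1 r2 a2 N N') :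
    ev a1 = gg t (j + 2) := by
  have h1 := congrArg (fun p => ev (pderiv 0 p)) h.rel1
  have hQ : ((2 : k) ^ (j + 2)) = 0 := by rw [CharTwo.two_eq_zero, zero_pow (by omega)]
  have h4 := euler h.ha1.hg
  have h5 : (((2 * 2 ^ j + 1 : ℤ)) : k) = 1 := by
    push_cast; rw [CharTwo.two_eq_zero]; simp
  rw [h5] at h4
  have h6 : ev (pderiv 0 (phi t (j+2))) = gg t (j + 2) := by
    simp only [phi, Derivation.leibniz, smul_eq_mul, map_add, map_mul, ev_s3, (ev_abc t (j+1)).2.2]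
    simp [s3, CharTwo.two_eq_zero]
    have : (3 : A2 k) = 1 := by linear_combination (CharTwo.two_eq_zero : (2 : A2 k) = 0)
    rw [this]; simp
  have h7 : ev (phi t (j+2)) = 0 := by simp [phi, ev_s3]
  simp only [Derivation.leibniz, smul_eq_mul, map_add, map_mul, pderiv_sw, h6, h7, h.ev1, ev_sw] at h1
  simp [Derivation.leibniz_pow, CharTwo.two_eq_zero] at h1
  linear_combination -h4 - h1

lemma Syz.ev_a2 {j : ℕ} {κ : k} {r1 a1 r2 a2 N N' : A2 k} (h : Syz t j κ r1 a1 r2 a2 N N') :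
    ev a2 = κ := by
  have := congrArg ev h.det
  simpa [h.ev1, h.ev2] using this

lemma syz_base : Syz t 0 1 1 (C t * (X 0 * X 1 ^ 2)) 0 (X 1 ^ 4) 0 0 where
  hr1 := by simpa using W_one
  ha1 := by
    have := (W_X0 (k := k)).mul ((W_X1 (k := k)).pow 2 rfl rfl) rfl rfl
    have := this.cmul t
    exact this.cast (by norm_num) (by decide)
  hr2 := W_zero _ _
  ha2 := by
    have := ((W_X1 (k := k)).pow 4 rfl rfl)
    exact this.cast (by norm_num) (by decide)
  sw1 := by simp
  sw2 := by simp
  rel1 := by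
    have : ll 1 = (X 0 : A2 k) := by simp [ll]
    simp [phi, abc, s3]; ring
  rel2 := by simp; linear_combination (-X 0 ^ 4 * X 1 ^ 4) * two_eq (k := k)
  det := by simp
  ev1 := by simp
  ev2 := by simp
  hN := Hg_zero _
  hN' := Hg_zero _
  decomp := by simp

lemma UU_W {j : ℕ} {r a : A2 k} {d d' : ℤ} (hr : W r d 0) (ha : W a d' (-(2 : ZMod 3) ^ (j + 2))) (hd : d' = d + 3) :
    W (UU t (j + 2) a r) (2 * d') (-(2 : ZMod 3) ^ (j + 3)) := by
  refine (ha.pow 2 rfl (by push_cast; ring)).add ?_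
  have h1 := ((W_ll (k := k) (j + 2)).mul hr rfl rfl).pow 2 rfl rfl
  have h2 := (((W_X0 (k := k)).pow 2 rfl rfl).cmul t).mul ((W_X1 (k := k)).pow 2 rfl rfl) rfl rfl
  exact h2.mul h1 (by push_cast; subst hd; ring) (by push_cast; ring)

lemma syz_step {j : ℕ} {κ : k} {r1 a1 r2 a2 N N' : A2 k} (h : Syz t j κ r1 a1 r2 a2 N N')
    (hκ : κ ≠ 0) : ∃ r1' a1' r2' a2' M M' : A2 k,
      Syz t (j + 1) (gg t (j + 3)) r1' a1' r2' a2' M M' := by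
  have hU1 := UU_rel rfl h.sw1 h.rel1
  have hU2 := UU_rel rfl h.sw2 h.rel2
  have wU1 := UU_W (t := t) h.hr1 h.ha1 (by ring)
  have wU2 := UU_W (t := t) h.hr2 h.ha2 (by ring)
  set U1 := UU t (j + 2) a1 r1 with hU1d
  set U2 := UU t (j + 2) a2 r2 with hU2d
  have eU1 : ev U1 = gg t (j + 3) := by
    simp [hU1d, UU, h.ev_a1, h.ev1, gg]
  have eU2 : ev U2 = κ ^ 2 := by simp [hU2d, UU, h.ev_a2, h.ev2]
  set c : k := gg t (j + 3) / κ ^ 2 with hc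
  have hcκ : c * κ ^ 2 = gg t (j + 3) := by rw [hc]; field_simp
  obtain ⟨a1', ha1', wa1'⟩ := W.div_s3 (p := C c * U2 + X 0 * X 1 * U1) (d := 2 * (2 * 2 ^ j + 2))
    (e := (-(2 : ZMod 3) ^ (j + 3)))
    ((wU2.cmul c).add (((W_X0 (k := k)).mul W_X1 rfl rfl).mul wU1 (by ring) (by ring)))
    (by simp [eU1, eU2, hcκ]; exact CharTwo.add_self_eq_zero _)
  obtain ⟨p1, p2, hp1, hp2, hp⟩ := h.hr2.hg.split (2 ^ j) (2 ^ j) (by push_cast; linarith)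
  have hs1 := congrArg sw ha1'
  simp only [map_add, map_mul, sw_X0, sw_X1, sw_C, sw_s3] at hs1
  have hQ : (2 : ℕ) ^ (j + 1 + 2) = 2 * 2 ^ (j + 2) := by ring
  refine ⟨C c * r2 ^ 2 + X 0 * X 1 * r1 ^ 2, a1', s3 * r1 ^ 2, U1,
    C c * p1 ^ 2 + X 0 * X 1 * N ^ 2, C c * p2 ^ 2 + X 0 * X 1 * N' ^ 2, ?_⟩
  constructor
  · exact ((h.hr2.pow 2 (by push_cast; ring) (by simp)).cmul c).add
      (((W_X0 (k := k)).mul W_X1 rfl rfl).mul (h.hr1.pow 2 rfl rfl) (by push_cast; ring) (by ring))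
  · exact wa1'.cast (by push_cast; ring) rfl
  · exact W_s3.mul (h.hr1.pow 2 rfl rfl) (by push_cast; ring) (by simp)
  · exact wU1.cast (by push_cast; ring) rfl
  · simp only [map_add, map_mul, map_pow, sw_X0, sw_X1, sw_C, h.sw1, h.sw2]; ring
  · simp [h.sw1]
  · rw [hQ]
    apply mul_left_cancel₀ (s3_ne (k := k))
    linear_combination (C c) * hU2 + X 0 * X 1 * hU1 + X 0 ^ (2 * 2 ^ (j+2)) * ha1' + X 1 ^ (2 * 2 ^ (j+2)) * hs1
  · rw [hQ]; linear_combination hU1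
  · rw [hQ, ← hcκ]
    have h1 : (a1 * r2 + a2 * r1) ^ 2 = a1 ^ 2 * r2 ^ 2 + a2 ^ 2 * r1 ^ 2 := by
      rw [CharTwo.add_sq]; ring
    rw [h.det] at h1
    simp only [map_mul, map_pow]
    have e1 : U1 * r2 ^ 2 + U2 * r1 ^ 2 = a1 ^ 2 * r2 ^ 2 + a2 ^ 2 * r1 ^ 2 := by
      simp only [hU1d, hU2d, UU]
      linear_combination (C t * X 0 ^ 2 * X 1 ^ 2 * ll (j+2) ^ 2 * r1 ^ 2 * r2 ^ 2) * two_eq (k := k)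
    linear_combination (-r1 ^ 2) * ha1' + C c * e1 - C c * h1 + X 0 * X 1 * r1 ^ 2 * U1 * two_eq (k := k)
  · simp [h.ev1, h.ev2]
  · simp [ev_s3]
  · exact ((hp1.pow 2 (by push_cast; ring)).cmul c).add
      (((Hg_X (k := k) 0).mul (Hg_X 1) rfl).mul (h.hN.pow 2 rfl) (by push_cast; ring))
  · exact ((hp2.pow 2 (by push_cast; ring)).cmul c).add
      (((Hg_X (k := k) 0).mul (Hg_X 1) rfl).mul (h.hN'.pow 2 rfl) (by push_cast; ring))
  · have e2 : 2 ^ (j + 1) - 1 = 2 * (2 ^ j - 1) + 1 := by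
      have := Nat.one_le_two_pow (n := j); omega
    rw [e2, hp]
    conv_lhs => rw [h.decomp]
    simp only [CharTwo.add_sq]
    ring

lemma syz_exists (j : ℕ) (h : ∀ i, 3 ≤ i → i < j + 2 → gg t i ≠ 0) :
    ∃ r1 a1 r2 a2 N N' : A2 k, Syz t j (if j = 0 then 1 else gg t (j + 2)) r1 a1 r2 a2 N N' := by
  induction j with
  | zero => exact ⟨_, _, _, _, _, _, by simpa using syz_base⟩
  | succ j ih =>
    obtain ⟨r1, a1, r2, a2, N, N', hS⟩ := ih (fun i h1 h2 => h i h1 (by omega))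
    obtain ⟨r1, a1, r2, a2, N, N', hS⟩ := syz_step hS (by
      split_ifs with h0
      · simp
      · exact h _ (by omega) (by omega))
    exact ⟨r1, a1, r2, a2, N, N', by simpa using hS⟩

end rec
end BM

namespace BM
section count
variable {k : Type*} [Field k] {B : Type*} [CommRing B] [Algebra k B] [Algebra (A2 k) B]
  [IsScalarTower k (A2 k) B]

/-- image of `x` -/
noncomputable abbrev xx (k : Type*) [Field k] (B : Type*) [CommRing B] [Algebra (A2 k) B] : B := algebraMap (A2 k) B (X 0)
/-- image of `y` -/
noncomputable abbrev yy (k : Type*) [Field k] (B : Type*) [CommRing B] [Algebra (A2 k) B] : B := algebraMap (A2 k) B (X 1)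

lemma span_mon (b : Module.Basis (Fin 4) (A2 k) B) (W : Submodule k B)
    (h : ∀ i j c, xx k B ^ i * yy k B ^ j * b c ∈ W) (β : B) : β ∈ W := by
  rw [← b.sum_repr β]
  refine Submodule.sum_mem _ fun c _ => ?_
  rw [expand (b.repr β c), Finset.sum_smul]
  refine Submodule.sum_mem _ fun m _ => ?_
  have : (C (coeff m (b.repr β c)) * X 0 ^ m 0 * X 1 ^ m 1 : A2 k) • b c
    = (coeff m (b.repr β c)) • (xx k B ^ m 0 * yy k B ^ m 1 * b c) := by
    rw [mul_assoc, ← smul_eq_C_mul, smul_assoc, Algebra.smul_def (X 0 ^ m 0 * X 1 ^ m 1 : A2 k), map_mul, map_pow, map_pow]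
  rw [this]
  exact W.smul_mem _ (h _ _ _)

/-- coefficient map -/
noncomputable def Th (b : Module.Basis (Fin 4) (A2 k) B) (m : ℕ) :
    B →ₗ[k] (Fin 4 × Fin m × Fin m → k) :=
  LinearMap.pi fun c =>
    (lcoeff k (Finsupp.single 0 (c.2.1 : ℕ) + Finsupp.single 1 (c.2.2 : ℕ))).comp
      ((b.coord c.1).restrictScalars k)

lemma Th_apply (b : Module.Basis (Fin 4) (A2 k) B) (m : ℕ) (β : B) (c : Fin 4 × Fin m × Fin m) :
    Th b m β c = coeff (Finsupp.single 0 (c.2.1 : ℕ) + Finsupp.single 1 (c.2.2 : ℕ)) (b.repr β c.1) := rfl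

lemma Th_x (b : Module.Basis (Fin 4) (A2 k) B) (m : ℕ) (β : B) : Th b m (xx k B ^ m * β) = 0 := by
  ext c
  rw [Th_apply, xx, ← map_pow, ← Algebra.smul_def, map_smul, Finsupp.smul_apply, smul_eq_mul,
    X_pow_eq_monomial, coeff_monomial_mul', if_neg]
  · simp
  · intro h
    have := h 0
    simp at this
    exact absurd c.2.1.2 (by omega)

lemma Th_y (b : Module.Basis (Fin 4) (A2 k) B) (m : ℕ) (β : B) : Th b m (yy k B ^ m * β) = 0 := by
  ext c
  rw [Th_apply, yy, ← map_pow, ← Algebra.smul_def, map_smul, Finsupp.smul_apply, smul_eq_mul,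
    X_pow_eq_monomial, coeff_monomial_mul', if_neg]
  · simp
  · intro h
    have := h 1
    simp at this
    exact absurd c.2.2.2 (by omega)

lemma Th_surj (b : Module.Basis (Fin 4) (A2 k) B) (m : ℕ) : Function.Surjective (Th b m) := by
  classical
  rw [← LinearMap.range_eq_top, eq_top_iff, ← (Pi.basisFun k (Fin 4 × Fin m × Fin m)).span_eq, Submodule.span_le]
  rintro _ ⟨c, rfl⟩
  refine ⟨(X 0 ^ (c.2.1 : ℕ) * X 1 ^ (c.2.2 : ℕ) : A2 k) • b c.1, ?_⟩
  ext d
  rw [Th_apply, map_smul, Finsupp.smul_apply, b.repr_self, Pi.basisFun_apply, Pi.single_apply, smul_eq_mul,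
    X_pow_eq_monomial, X_pow_eq_monomial, monomial_mul, Finsupp.single_apply]
  by_cases h : d = c
  · subst h; simp
  · rw [if_neg h]
    by_cases h1 : c.1 = d.1
    · rw [if_pos h1]
      rw [mul_one, coeff_monomial, if_neg]
      intro h2
      apply h
      have h3 := DFunLike.congr_fun h2 0
      have h4 := DFunLike.congr_fun h2 1
      simp at h3 h4
      exact Prod.ext h1.symm (Prod.ext (Fin.ext h3.symm) (Fin.ext h4.symm))
    · simp [if_neg h1]

/-- dimension count -/
lemma count (b : Module.Basis (Fin 4) (A2 k) B) (m q N h : ℕ) (nn : ℕ → B)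
    (hx : ∀ i < h, xx k B ^ (N + q) * nn i ∈ Ideal.span ({xx k B ^ m, yy k B ^ m} ∪ nn '' {j | j < i}))
    (hy : ∀ i < h, xx k B ^ N * yy k B ^ q * nn i ∈ Ideal.span ({xx k B ^ m, yy k B ^ m} ∪ nn '' {j | j < i}))
    (h1 : xx k B ^ (2 * N) ∈ Ideal.span ({xx k B ^ m, yy k B ^ m} ∪ nn '' {j | j < h})) :
    m * m ≤ h * (N * m + q * q) + 2 * N * m := by
  classical
  set x := xx k B
  set y := yy k B
  let ι := ((Fin h × ((Fin N × Fin m) ⊕ (Fin q × Fin q))) ⊕ (Fin (2 * N) × Fin m)) × Fin 4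
  let f : ι → (Fin 4 × Fin m × Fin m → k) := fun i => Th b m (match i with
    | (Sum.inl (j, Sum.inl (a, c)), e) => x ^ (a : ℕ) * y ^ (c : ℕ) * b e * nn j
    | (Sum.inl (j, Sum.inr (a, c)), e) => x ^ (N + a : ℕ) * y ^ (c : ℕ) * b e * nn j
    | (Sum.inr (a, c), e) => x ^ (a : ℕ) * y ^ (c : ℕ) * b e)
  let V : Submodule k _ := Submodule.span k (Set.range f)
  have key : ∀ i ≤ h, ∀ β ∈ Ideal.span ({x ^ m, y ^ m} ∪ nn '' {j | j < i}), Th b m β ∈ V := by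
    intro i
    induction i with
    | zero =>
      intro _ β hβ
      simp only [not_lt_zero, Set.ofPred_false, Set.image_empty, Set.union_empty] at hβ
      obtain ⟨p, q, rfl⟩ := Ideal.mem_span_pair.1 hβ
      rw [map_add, mul_comm p, mul_comm q, Th_x, Th_y]; simp
    | succ i ih =>
      intro hi β hβ
      have ih := ih (by omega)
      have e : ({x ^ m, y ^ m} ∪ nn '' {j | j < i + 1} : Set B) = insert (nn i) ({x ^ m, y ^ m} ∪ nn '' {j | j < i}) := by
        have : {j | j < i + 1} = insert i {j | j < i} := by ext j; simp; omega
        rw [this, Set.image_insert_eq, Set.union_insert]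
      rw [e, Ideal.mem_span_insert] at hβ
      obtain ⟨a, γ, hγ, rfl⟩ := hβ
      rw [map_add]
      refine V.add_mem ?_ (ih _ hγ)
      have := span_mon b (V.comap ((Th b m).comp (LinearMap.mulRight k (nn i)))) ?_ a
      · exact this
      intro c d e
      simp only [Submodule.mem_comap, LinearMap.comp_apply, LinearMap.mulRight_apply]
      have hx := hx i (by omega)
      have hy := hy i (by omega)
      by_cases hd : m ≤ d
      · obtain ⟨d, rfl⟩ := Nat.exists_eq_add_of_le hd
        have : x ^ c * y ^ (m + d) * b e * nn i = y ^ m * (x ^ c * y ^ d * b e * nn i) := by ring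
        change Th b m (x ^ c * y ^ (m + d) * b e * nn i) ∈ V
        rw [this, Th_y]; simp
      by_cases hc : c < N
      · exact Submodule.subset_span ⟨(Sum.inl (⟨i, by omega⟩, Sum.inl (⟨c, hc⟩, ⟨d, by omega⟩)), e), rfl⟩
      by_cases hc2 : N + q ≤ c
      · apply ih
        obtain ⟨c, rfl⟩ := Nat.exists_eq_add_of_le hc2
        have : x ^ (N + q + c) * y ^ d * b e * nn i = (x ^ c * y ^ d * b e) * (x ^ (N + q) * nn i) := by ring
        change x ^ (N + q + c) * y ^ d * b e * nn i ∈ _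
        rw [this]; exact Ideal.mul_mem_left _ _ hx
      obtain ⟨c, rfl⟩ := Nat.exists_eq_add_of_le (not_lt.1 hc)
      by_cases hd2 : q ≤ d
      · apply ih
        obtain ⟨d, rfl⟩ := Nat.exists_eq_add_of_le hd2
        have : x ^ (N + c) * y ^ (q + d) * b e * nn i = (x ^ c * y ^ d * b e) * (x ^ N * y ^ q * nn i) := by ring
        change x ^ (N + c) * y ^ (q + d) * b e * nn i ∈ _
        rw [this]; exact Ideal.mul_mem_left _ _ hy
      · exact Submodule.subset_span ⟨(Sum.inl (⟨i, by omega⟩, Sum.inr (⟨c, by omega⟩, ⟨d, by omega⟩)), e), rfl⟩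
  have key2 : ∀ β, Th b m β ∈ V := by
    intro β
    refine span_mon b (V.comap (Th b m)) ?_ β
    intro c d e
    simp only [Submodule.mem_comap]
    by_cases hd : m ≤ d
    · obtain ⟨d, rfl⟩ := Nat.exists_eq_add_of_le hd
      have : x ^ c * y ^ (m + d) * b e = y ^ m * (x ^ c * y ^ d * b e) := by ring
      change Th b m (x ^ c * y ^ (m + d) * b e) ∈ V
      rw [this, Th_y]; simp
    by_cases hc : c < 2 * N
    · exact Submodule.subset_span ⟨(Sum.inr (⟨c, hc⟩, ⟨d, by omega⟩), e), rfl⟩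
    · apply key h le_rfl
      obtain ⟨c, rfl⟩ := Nat.exists_eq_add_of_le (not_lt.1 hc)
      have : x ^ (2 * N + c) * y ^ d * b e = (x ^ c * y ^ d * b e) * x ^ (2 * N) := by ring
      change x ^ (2 * N + c) * y ^ d * b e ∈ _
      rw [this]; exact Ideal.mul_mem_left _ _ h1
  have hV : V = ⊤ := by
    rw [eq_top_iff]
    rintro v -
    obtain ⟨β, rfl⟩ := Th_surj b m v
    exact key2 β
  have h2 := finrank_range_le_card (R := k) f
  change Module.finrank k V ≤ _ at h2
  rw [hV, finrank_top, Module.finrank_fintype_fun_eq_card] at h2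
  simp [ι] at h2
  nlinarith
end count
end BM

namespace BM
section partI
variable {k : Type*} [Field k] [CharP k 2] {t : k}

lemma Syz.mem_h {j : ℕ} {κ : k} {r1 a1 r2 a2 N N' : A2 k} (h : Syz t j κ r1 a1 r2 a2 N N')
    (hκ : κ ≠ 0) : ∃ p ν μ : A2 k, X 0 * (X 0 ^ 3 * X 1 ^ 3) ^ (2 ^ j) =
      p * phi t (j + 2) + ν * X 1 ^ (2 ^ (j + 2)) + μ * X 0 ^ (2 ^ (j + 2)) := by
  have two := two_eq (k := k)
  have hQ : (2 : ℕ) ^ (j + 2) = 4 * 2 ^ j := by ring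
  set H : A2 k := X 0 * (X 0 ^ 3 * X 1 ^ 3) ^ (2 ^ j) with hH
  have hHg : Hg H (6 * 2 ^ j + 1) :=
    (Hg_X 0).mul (((Hg_Xpow 0 3).mul (Hg_Xpow 1 3) rfl).pow (2 ^ j) rfl) (by push_cast; ring)
  obtain ⟨α, β, -, -, e1⟩ := (hHg.mul h.hr1.hg rfl).split (2 ^ (j + 2)) (2 ^ (j + 2)) (by
    push_cast [hQ]; linarith)
  obtain ⟨α', β', -, -, e2⟩ := (hHg.mul h.hr2.hg rfl).split (2 ^ (j + 2)) (2 ^ (j + 2)) (by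
    push_cast [hQ]; linarith)
  have rel1 := h.rel1
  have rel2 := h.rel2
  have det := h.det
  have detsw := congrArg sw det
  simp only [map_add, map_mul, map_pow, sw_X1, sw_C, h.sw1, h.sw2] at detsw
  set Q := 2 ^ (j + 2)
  set φ := phi t (j + 2)
  obtain ⟨p, hp1, hp2⟩ := coprime_xy (m := Q) (n := Q) (a := α * r2 + α' * r1) (b := β' * r1 + β * r2) (by
    linear_combination (norm := (ring_nf; simp only [two, mul_zero, neg_zero, add_zero, sub_zero])) r1 * e2 + r2 * e1)
  obtain ⟨μ, hμ1, hμ2⟩ := coprime_xy (m := Q) (n := Q) (a := a1 * α' + a2 * α) (b := C κ * H + a1 * β' + a2 * β) (by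
    linear_combination (norm := (ring_nf; simp only [two, mul_zero, neg_zero, add_zero, sub_zero])) a1 * e2 + a2 * e1 + H * det)
  obtain ⟨ν, hν1, hν2⟩ := coprime_xy (m := Q) (n := Q) (a := C κ * (a1 * β' + a2 * β + p * φ))
    (b := sw a1 * (κ • β' + p * sw a2) + sw a2 * (κ • β + p * sw a1)) (by
    simp only [smul_eq_C_mul]
    linear_combination (norm := (ring_nf; simp only [two, mul_zero, neg_zero, add_zero, sub_zero])) (a1 * β' + a2 * β + p * φ) * detsw
      + sw a1 * (β' * det + a2 * hp2 + p * rel2) + sw a2 * (β * det + a1 * hp2 + p * rel1))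
  refine ⟨C κ⁻¹ * p, C κ⁻¹ ^ 2 * ν, C κ⁻¹ * μ, ?_⟩
  have hc : (C κ⁻¹ * C κ : A2 k) = 1 := by rw [← C_mul, inv_mul_cancel₀ hκ, C_1]
  have e3 : a1 * β' + a2 * β + p * φ = C κ⁻¹ * (X 1 ^ Q * ν) := by
    rw [← hν1, ← mul_assoc, hc, one_mul]
  have e4 : C κ * H = a1 * β' + a2 * β + X 0 ^ Q * μ := by
    linear_combination (norm := (ring_nf; simp only [two, mul_zero, neg_zero, add_zero, sub_zero])) hμ2
  have e5 : H = C κ⁻¹ * (C κ * H) := by rw [← mul_assoc, hc, one_mul]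
  rw [e5, e4]
  linear_combination (norm := (ring_nf; simp only [two, mul_zero, neg_zero, add_zero, sub_zero])) C κ⁻¹ * e3
end partI
end BM

namespace BM
section partI2
variable {K : Type*} [Field K] {B T : Type*} [CommRing B] [CommRing T] [Algebra (A2 K) B] (ι : B →+* T)
  (J : Ideal (MvPolynomial (Fin 6) K))

/-- a twisted realization -/
structure Good (q : ℕ) (χ : MvPolynomial (Fin 6) K →+* T) : Prop where
  h0 : χ (X 0) = ι (xx K B) ^ q
  h1 : χ (X 1) = ι (yy K B) ^ q
  hX : ∀ i, ∃ b, ι (xx K B) * χ (X i) = ι b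
  hC : ∀ c, ∃ b, χ (C c) = ι b
  hJ : ∀ p ∈ J, χ p = 0

lemma Good.bdd (p : MvPolynomial (Fin 6) K) : ∃ N0 : ℕ, ∀ N ≥ N0, ∀ (q : ℕ) (χ : MvPolynomial (Fin 6) K →+* T),
    Good ι J q χ → ∃ b, ι (xx K B) ^ N * χ p = ι b := by
  induction p using MvPolynomial.induction_on with
  | C a =>
    refine ⟨0, fun N _ q χ h => ?_⟩
    obtain ⟨b, hb⟩ := h.hC a
    exact ⟨xx K B ^ N * b, by rw [hb, map_mul, map_pow]⟩
  | add p p' hp hp' =>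
    obtain ⟨N1, h1⟩ := hp
    obtain ⟨N2, h2⟩ := hp'
    refine ⟨max N1 N2, fun N hN q χ h => ?_⟩
    obtain ⟨b1, e1⟩ := h1 N (le_trans (le_max_left _ _) hN) q χ h
    obtain ⟨b2, e2⟩ := h2 N (le_trans (le_max_right _ _) hN) q χ h
    exact ⟨b1 + b2, by rw [map_add, mul_add, e1, e2, map_add]⟩
  | mul_X p i hp =>
    obtain ⟨N1, h1⟩ := hp
    refine ⟨N1 + 1, fun N hN q χ h => ?_⟩
    obtain ⟨b1, e1⟩ := h1 (N - 1) (by omega) q χ h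
    obtain ⟨b2, e2⟩ := h.hX i
    refine ⟨b1 * b2, ?_⟩
    have : N = (N - 1) + 1 := by omega
    rw [this, map_mul, map_mul, ← e1, ← e2]; ring

lemma Good.span [Algebra B T] (S : Set (MvPolynomial (Fin 6) K)) (p : MvPolynomial (Fin 6) K) (hp : p ∈ Ideal.span S ⊔ J) :
    ∃ N0 : ℕ, ∀ N ≥ N0, ∀ (q : ℕ) (χ : MvPolynomial (Fin 6) K →+* T),
    Good (algebraMap B T) J q χ → algebraMap B T (xx K B) ^ N * χ p ∈ Submodule.span B (χ '' S) := by
  obtain ⟨p, hp', j, hj, rfl⟩ := Submodule.mem_sup.1 hp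
  clear hp
  have hp := hp'
  clear hp'
  have : ∃ N0 : ℕ, ∀ N ≥ N0, ∀ (q : ℕ) (χ : MvPolynomial (Fin 6) K →+* T),
    Good (algebraMap B T) J q χ → algebraMap B T (xx K B) ^ N * χ p ∈ Submodule.span B (χ '' S) := by
    clear hj j
    induction hp using Submodule.span_induction with
    | mem s hs =>
      refine ⟨0, fun N _ q χ _ => ?_⟩
      rw [← map_pow, ← Algebra.smul_def]
      exact Submodule.smul_mem _ _ (Submodule.subset_span ⟨s, hs, rfl⟩)
    | zero => exact ⟨0, fun N _ q χ _ => by simp⟩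
    | add p p' _ _ h1 h2 =>
      obtain ⟨N1, h1⟩ := h1
      obtain ⟨N2, h2⟩ := h2
      refine ⟨max N1 N2, fun N hN q χ h => ?_⟩
      rw [map_add, mul_add]
      exact Submodule.add_mem _ (h1 N (le_trans (le_max_left _ _) hN) q χ h) (h2 N (le_trans (le_max_right _ _) hN) q χ h)
    | smul a p _ h1 =>
      obtain ⟨N1, h1⟩ := h1
      obtain ⟨N2, h2⟩ := Good.bdd (algebraMap B T) J a
      refine ⟨N1 + N2, fun N hN q χ h => ?_⟩
      obtain ⟨b, hb⟩ := h2 (N - N1) (by omega) q χ h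
      have : algebraMap B T (xx K B) ^ N * χ (a • p) = b • (algebraMap B T (xx K B) ^ N1 * χ p) := by
        have : N = (N - N1) + N1 := by omega
        rw [smul_eq_mul, Algebra.smul_def, ← hb, map_mul]
        conv_lhs => rw [this]
        ring
      rw [this]
      exact Submodule.smul_mem _ _ (h1 N1 le_rfl q χ h)
  obtain ⟨N0, h0⟩ := this
  refine ⟨N0, fun N hN q χ h => ?_⟩
  rw [map_add, h.hJ j hj, add_zero]
  exact h0 N hN q χ h

/-- quasilength bound from infinitely many good realizations -/
lemma bound_of_good [Algebra B T] [Algebra K B] [IsScalarTower K (A2 K) B] (hinj : Function.Injective (algebraMap B T))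
    (b : Module.Basis (Fin 4) (A2 K) B) (n h : ℕ) (mm : ℕ → MvPolynomial (Fin 6) K)
    (hx : ∀ i < h, X 0 * mm i ∈ Ideal.span ({X 0 ^ n, X 1 ^ n} ∪ mm '' {j | j < i}) ⊔ J)
    (hy : ∀ i < h, X 1 * mm i ∈ Ideal.span ({X 0 ^ n, X 1 ^ n} ∪ mm '' {j | j < i}) ⊔ J)
    (h1 : 1 ∈ Ideal.span ({X 0 ^ n, X 1 ^ n} ∪ mm '' {j | j < h}) ⊔ J)
    (hgood : ∀ j : ℕ, ∃ χ : MvPolynomial (Fin 6) K →+* T, Good (algebraMap B T) J (2 ^ j) χ) :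
    n ^ 2 ≤ h := by
  set x := xx K B
  set y := yy K B
  have HX : ∀ i, ∃ N0, i < h → ∀ N ≥ N0, ∀ (q : ℕ) (χ : MvPolynomial (Fin 6) K →+* T),
    Good (algebraMap B T) J q χ → algebraMap B T x ^ N * χ (X 0 * mm i) ∈ Submodule.span B (χ '' ({X 0 ^ n, X 1 ^ n} ∪ mm '' {j | j < i})) := by
    intro i
    by_cases hi : i < h
    · obtain ⟨N0, h0⟩ := Good.span (B := B) (T := T) J _ _ (hx i hi)
      exact ⟨N0, fun _ => h0⟩
    · exact ⟨0, fun h => absurd h hi⟩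
  have HY : ∀ i, ∃ N0, i < h → ∀ N ≥ N0, ∀ (q : ℕ) (χ : MvPolynomial (Fin 6) K →+* T),
    Good (algebraMap B T) J q χ → algebraMap B T x ^ N * χ (X 1 * mm i) ∈ Submodule.span B (χ '' ({X 0 ^ n, X 1 ^ n} ∪ mm '' {j | j < i})) := by
    intro i
    by_cases hi : i < h
    · obtain ⟨N0, h0⟩ := Good.span (B := B) (T := T) J _ _ (hy i hi)
      exact ⟨N0, fun _ => h0⟩
    · exact ⟨0, fun h => absurd h hi⟩
  have HM := fun i => Good.bdd (algebraMap B T) J (mm i)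
  obtain ⟨N1, H1⟩ := Good.span (B := B) (T := T) J _ _ h1
  choose NX HX using HX
  choose NY HY using HY
  choose NM HM using HM
  set N := N1 + ∑ i ∈ Finset.range h, (NX i + NY i + NM i) with hN
  have hle : ∀ i < h, NX i ≤ N ∧ NY i ≤ N ∧ NM i ≤ N := by
    intro i hi
    have := Finset.single_le_sum (f := fun i => NX i + NY i + NM i) (fun _ _ => Nat.zero_le _) (Finset.mem_range.2 hi)
    omega
  have main : ∀ j : ℕ, (n * 2 ^ j) * (n * 2 ^ j) ≤ h * (N * (n * 2 ^ j) + 2 ^ j * 2 ^ j) + 2 * N * (n * 2 ^ j) := by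
    intro j
    obtain ⟨χ, hχ⟩ := hgood j
    set q := 2 ^ j
    have : ∀ i, ∃ ni : B, i < h → algebraMap B T x ^ N * χ (mm i) = algebraMap B T ni := by
      intro i
      by_cases hi : i < h
      · obtain ⟨b, hb⟩ := HM i N (hle i hi).2.2 q χ hχ
        exact ⟨b, fun _ => hb⟩
      · exact ⟨0, fun h => absurd h hi⟩
    choose nn hnn using this
    have trans : ∀ i ≤ h, ∀ τ ∈ Submodule.span B (χ '' ({X 0 ^ n, X 1 ^ n} ∪ mm '' {j | j < i})),
        ∀ b, algebraMap B T b = algebraMap B T x ^ N * τ → b ∈ Ideal.span ({x ^ (n * q), y ^ (n * q)} ∪ nn '' {j | j < i}) := by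
      intro i hi τ hτ b hb
      have : algebraMap B T b ∈ Submodule.map (Algebra.linearMap B T) (Ideal.span ({x ^ (n * q), y ^ (n * q)} ∪ nn '' {j | j < i})) := by
        rw [hb]; clear hb
        induction hτ using Submodule.span_induction with
        | mem s hs =>
          obtain ⟨p, hp, rfl⟩ := hs
          rcases hp with (rfl | rfl) | ⟨l, hl, rfl⟩
          · refine ⟨x ^ N * x ^ (n * q), Ideal.mul_mem_left _ _ (Ideal.subset_span (by simp)), ?_⟩
            simp [hχ.h0, x]; ring
          · refine ⟨x ^ N * y ^ (n * q), Ideal.mul_mem_left _ _ (Ideal.subset_span (by simp)), ?_⟩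
            simp [hχ.h1, x, y]; ring
          · refine ⟨nn l, Ideal.subset_span (Or.inr ⟨l, hl, rfl⟩), ?_⟩
            have hl : l < i := hl
            rw [hnn l (by omega)]; rfl
        | zero => simp
        | add a b _ _ h1 h2 => rw [mul_add]; exact Submodule.add_mem _ h1 h2
        | smul a b _ h1 => rw [mul_smul_comm]; exact Submodule.smul_mem _ _ h1
      obtain ⟨b', hb', e⟩ := this
      have e : algebraMap B T b' = algebraMap B T b := e
      rwa [← hinj e]
    refine count b (n * q) q N h nn ?_ ?_ ?_
    · intro i hi
      refine trans i hi.le _ (HX i hi N (hle i hi).1 q χ hχ) _ ?_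
      rw [map_mul, ← hnn i hi, map_mul, hχ.h0, map_pow]; ring
    · intro i hi
      refine trans i hi.le _ (HY i hi N (hle i hi).2.1 q χ hχ) _ ?_
      rw [map_mul, ← hnn i hi, map_mul χ, hχ.h1, map_mul, map_pow, map_pow]; ring
    · refine trans h le_rfl _ (H1 N (by omega) q χ hχ) _ ?_
      rw [map_one, map_pow]; ring
  by_contra hcon
  have hcon : h + 1 ≤ n ^ 2 := by omega
  set c := h * N * n + 2 * N * n
  have h2 := main c
  have h3 : c < 2 ^ c := Nat.lt_two_pow_self
  set q := 2 ^ c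
  have : (h + 1) * (q * q) ≤ n ^ 2 * (q * q) := Nat.mul_le_mul_right _ hcon
  have h4 : q * q ≤ c * q := by simp only [c]; nlinarith
  have h5 : q ≤ c := Nat.le_of_mul_le_mul_right h4 (by omega)
  omega

end partI2

lemma lift_chain {K : Type u} [Field K] (J : Ideal (MvPolynomial (Fin 6) K)) (n h : ℕ) (I : Ideal (MvPolynomial (Fin 6) K ⧸ J))
    (hI : I = Ideal.span (Set.range fun i => ![Ideal.Quotient.mk J (X 0), Ideal.Quotient.mk J (X 1)] i ^ n))
    (H : HasQLFiltration (MvPolynomial (Fin 6) K ⧸ J)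
      (Ideal.span (Set.range ![Ideal.Quotient.mk J (X 0), Ideal.Quotient.mk J (X 1)]))
      ((MvPolynomial (Fin 6) K ⧸ J) ⧸ I) h) :
    ∃ mm : ℕ → MvPolynomial (Fin 6) K, 
    (∀ i < h, X 0 * mm i ∈ Ideal.span ({X 0 ^ n, X 1 ^ n} ∪ mm '' {j | j < i}) ⊔ J) ∧ 
    (∀ i < h, X 1 * mm i ∈ Ideal.span ({X 0 ^ n, X 1 ^ n} ∪ mm '' {j | j < i}) ⊔ J) ∧ 
    1 ∈ Ideal.span ({X 0 ^ n, X 1 ^ n} ∪ mm '' {j | j < h}) ⊔ J := by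
  obtain ⟨c, -, c0, ch, hc⟩ := H
  let π : MvPolynomial (Fin 6) K →+* _ := (Ideal.Quotient.mk I).comp (Ideal.Quotient.mk J)
  have hπ : Function.Surjective π := (Ideal.Quotient.mk_surjective).comp Ideal.Quotient.mk_surjective
  have : ∀ i : ℕ, ∃ p : MvPolynomial (Fin 6) K, ∀ hi : i < h,
      c (Fin.succ ⟨i, hi⟩) = c (Fin.castSucc ⟨i, hi⟩) ⊔ Submodule.span _ {π p} := by
    intro i
    by_cases hi : i < h
    · obtain ⟨m, hm⟩ := (hc ⟨i, hi⟩).1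
      obtain ⟨p, rfl⟩ := hπ m
      exact ⟨p, fun _ => hm⟩
    · exact ⟨0, fun h => absurd h hi⟩
  choose mm hmm using this
  have hsm : ∀ (r p : MvPolynomial (Fin 6) K), (Ideal.Quotient.mk J r) • π p = π (r * p) := by
    intro r p
    rw [map_mul]; rfl
  have key : ∀ i (hi : i < h + 1) (p : MvPolynomial (Fin 6) K), π p ∈ c ⟨i, hi⟩ → p ∈ Ideal.span ({X 0 ^ n, X 1 ^ n} ∪ mm '' {j | j < i}) ⊔ J := by
    intro i
    induction i with
    | zero =>
      intro hi p hp
      have : c ⟨0, hi⟩ = ⊥ := c0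
      rw [this, Submodule.mem_bot] at hp
      have h1 : Ideal.Quotient.mk J p ∈ I := Ideal.Quotient.eq_zero_iff_mem.1 hp
      have h2 : I = Ideal.map (Ideal.Quotient.mk J) (Ideal.span {X 0 ^ n, X 1 ^ n}) := by
        rw [hI, Ideal.map_span]
        congr 1
        ext r; simp [Set.image_insert_eq, Fin.exists_fin_two, eq_comm]
      rw [h2, ← Ideal.mem_comap, Ideal.comap_map_of_surjective _ Ideal.Quotient.mk_surjective] at h1
      have h3 : (⊥ : Ideal (MvPolynomial (Fin 6) K ⧸ J)).comap (Ideal.Quotient.mk J) = J := by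
        rw [← RingHom.ker_eq_comap_bot, Ideal.mk_ker]
      rw [h3] at h1
      simpa using h1
    | succ i ih =>
      intro hi p hp
      have e := hmm i (by omega)
      have : c ⟨i + 1, hi⟩ = c (Fin.succ ⟨i, by omega⟩) := rfl
      rw [this, e, Submodule.mem_sup] at hp
      obtain ⟨a, ha, b, hb, hab⟩ := hp
      obtain ⟨r, rfl⟩ := Submodule.mem_span_singleton.1 hb
      obtain ⟨r, rfl⟩ := Ideal.Quotient.mk_surjective r
      rw [hsm] at hab
      have h1 : π (p - r * mm i) = a := by rw [map_sub, ← hab]; ring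
      have h2 := ih (by omega) (p - r * mm i) (by rw [h1]; exact ha)
      have h3 : Ideal.span ({X 0 ^ n, X 1 ^ n} ∪ mm '' {j | j < i}) ⊔ J ≤ Ideal.span ({X 0 ^ n, X 1 ^ n} ∪ mm '' {j | j < i + 1}) ⊔ J := by
        refine sup_le_sup_right (Ideal.span_mono (Set.union_subset_union_right _ (Set.image_mono ?_))) _
        intro l hl
        exact Nat.lt_succ_of_lt hl
      have h4 : mm i ∈ Ideal.span ({X 0 ^ n, X 1 ^ n} ∪ mm '' {j | j < i + 1}) ⊔ J :=
        Ideal.mem_sup_left (Ideal.subset_span (Or.inr ⟨i, Nat.lt_succ_self i, rfl⟩))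
      have := Ideal.add_mem _ (h3 h2) (Ideal.mul_mem_left _ r h4)
      simpa using this
  have hmem : ∀ i (hi : i < h), π (mm i) ∈ c (Fin.succ ⟨i, hi⟩) := by
    intro i hi
    rw [hmm i hi]
    exact Submodule.mem_sup_right (Submodule.mem_span_singleton_self _)
  refine ⟨mm, fun i hi => ?_, fun i hi => ?_, ?_⟩
  · apply key i (by omega)
    rw [← hsm]
    exact (hc ⟨i, hi⟩).2 _ (Ideal.subset_span ⟨0, rfl⟩) _ (hmem i hi)
  · apply key i (by omega)
    rw [← hsm]
    exact (hc ⟨i, hi⟩).2 _ (Ideal.subset_span ⟨1, rfl⟩) _ (hmem i hi)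
  · apply key h (by omega)
    have : c ⟨h, by omega⟩ = ⊤ := ch
    rw [this]; trivial
end BM

namespace BM
section
variable {K : Type u} [Field K] [CharP K 2] (t : K)

/-- quartic -/
noncomputable def gp : Polynomial (A2 K) := Polynomial.X ^ 4 +
  (Polynomial.C (X 0 * X 1) * Polynomial.X ^ 2 + Polynomial.C s3 * Polynomial.X + Polynomial.C (C t * X 0 ^ 2 * X 1 ^ 2))

lemma gp_aux : (Polynomial.C (X 0 * X 1) * Polynomial.X ^ 2 + Polynomial.C s3 * Polynomial.X + Polynomial.C (C t * X 0 ^ 2 * X 1 ^ 2) : Polynomial (A2 K)).degree < 4 :=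
  lt_of_le_of_lt Polynomial.degree_quadratic_le (by norm_num)

lemma gp_monic : (gp t).Monic := Polynomial.monic_X_pow_add (gp_aux t)

lemma gp_natDegree : (gp t).natDegree = 4 := by
  rw [gp, Polynomial.natDegree_add_eq_left_of_degree_lt]
  · simp
  · rw [Polynomial.degree_X_pow]; exact gp_aux t

/-- the two defining relations -/
noncomputable def JJ : Ideal (MvPolynomial (Fin 6) K) := Ideal.span
      {X 2 ^ 4 + X 0 * X 1 * X 2 ^ 2 + X 0 ^ 3 * X 2 + X 1 ^ 3 * X 2 + C t * X 0 ^ 2 * X 1 ^ 2,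
        X 0 ^ 3 * X 1 ^ 3 - X 3 * X 0 ^ 4 - X 4 * X 1 ^ 4 - X 5 * X 2 ^ 4}

/-- basis of `R₀` -/
noncomputable def bas : Module.Basis (Fin 4) (A2 K) (AdjoinRoot (gp t)) :=
  (AdjoinRoot.powerBasis' (gp_monic t)).basis.reindex (finCongr (by simp [gp_natDegree]))

lemma charP_R0 : CharP (AdjoinRoot (gp t)) 2 := by
  haveI : Nontrivial (AdjoinRoot (gp t)) := (bas t).repr.toEquiv.nontrivial
  exact charP_of_injective_algebraMap (algebraMap K (AdjoinRoot (gp t))).injective 2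

lemma gp_eval {B : Type*} [CommRing B] (F : A2 K →+* B) (z : B) : (gp t).eval₂ F z =
    z ^ 4 + F (X 0) * F (X 1) * z ^ 2 + F (X 0) ^ 3 * z + F (X 1) ^ 3 * z + F (C t) * F (X 0) ^ 2 * F (X 1) ^ 2 := by
  simp only [gp, Polynomial.eval₂_add, Polynomial.eval₂_mul, Polynomial.eval₂_pow, Polynomial.eval₂_X, Polynomial.eval₂_C, map_mul, map_pow, map_add, s3]
  ring

lemma root_eq : AdjoinRoot.root (gp t) ^ 4 + xx K (AdjoinRoot (gp t)) * yy K _ * AdjoinRoot.root (gp t) ^ 2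
   + xx K _ ^ 3 * AdjoinRoot.root (gp t) + yy K _ ^ 3 * AdjoinRoot.root (gp t)
      + algebraMap (A2 K) _ (C t) * xx K _ ^ 2 * yy K _ ^ 2 = 0 := by
  rw [← AdjoinRoot.eval₂_root (gp t), gp_eval]; rfl

lemma x_nzd : Submonoid.powers (xx K (AdjoinRoot (gp t))) ≤ nonZeroDivisors (AdjoinRoot (gp t)) := by
  rw [Submonoid.powers_le, mem_nonZeroDivisors_iff_right]
  intro b hb
  apply (bas t).repr.injective
  ext i : 1
  have h1 : (X 0 : A2 K) • b = 0 := by rw [Algebra.smul_def, mul_comm]; exact hb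
  have := congrArg (fun b => (bas t).repr b i) h1
  simpa [X_ne_zero] using this

lemma T_inj : Function.Injective (algebraMap (AdjoinRoot (gp t)) (Localization.Away (xx K (AdjoinRoot (gp t))))) :=
  IsLocalization.injective _ (x_nzd t)

lemma charP_T : CharP (Localization.Away (xx K (AdjoinRoot (gp t)))) 2 := by
  haveI := charP_R0 t
  exact charP_of_injective_algebraMap (T_inj t) 2

lemma exists_good (hg : ∀ i, 3 ≤ i → gg t i ≠ 0) (j : ℕ) :
    ∃ χ : MvPolynomial (Fin 6) K →+* Localization.Away (xx K (AdjoinRoot (gp t))),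
      Good (algebraMap (AdjoinRoot (gp t)) _) (JJ t) (2 ^ j) χ := by
  haveI := charP_R0 t
  obtain ⟨r1, a1, r2, a2, N, N', hS⟩ := syz_exists (t := t) j (fun i h _ => hg i h)
  obtain ⟨p, ν, μ, hm⟩ := hS.mem_h (by split_ifs; exacts [one_ne_zero, hg _ (by omega)])
  set B := AdjoinRoot (gp t)
  set T := Localization.Away (xx K B)
  set z : B := AdjoinRoot.root (gp t)
  have hz := z_pow' t (algebraMap (A2 K) B) z (root_eq t) (j + 2)
  have hm := congrArg (algebraMap (A2 K) B) hm
  simp only [map_add, map_mul, map_pow] at hm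
  set x := xx K B
  set y := yy K B
  obtain ⟨α, β, γ, e⟩ : ∃ α β γ : B, x * (x ^ 3 * y ^ 3) ^ (2 ^ j) = α * x ^ (2 ^ (j+2)) + β * y ^ (2 ^ (j+2)) + γ * z ^ (2 ^ (j+2)) := by
    refine ⟨algebraMap (A2 K) B μ - algebraMap (A2 K) B p * (algebraMap (A2 K) B (ll (j+2)) * z ^ 2 + algebraMap (A2 K) B (ll2 (j+2)) * z),
     algebraMap (A2 K) B ν - algebraMap (A2 K) B p * (algebraMap (A2 K) B (sw (ll (j+2))) * z ^ 2 + algebraMap (A2 K) B (sw (ll2 (j+2))) * z),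
     algebraMap (A2 K) B p * algebraMap (A2 K) B s3, ?_⟩
    linear_combination hm - algebraMap (A2 K) B p * hz
  have hu : IsUnit (algebraMap B T x) := IsLocalization.Away.algebraMap_isUnit x
  obtain ⟨xi, hxi⟩ := hu.exists_right_inv
  haveI : CharP T 2 := charP_T t
  let χ : MvPolynomial (Fin 6) K →+* T := eval₂Hom ((iterateFrobenius T 2 j).comp (algebraMap B T |>.comp (algebraMap K B)))
    ![algebraMap B T x ^ (2 ^ j), algebraMap B T y ^ (2 ^ j), algebraMap B T z ^ (2 ^ j),
      algebraMap B T α * xi, algebraMap B T β * xi, algebraMap B T γ * xi]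
  refine ⟨χ, by simp [χ]; rfl, by simp [χ]; rfl, ?_, ?_, ?_⟩
  · intro i
    fin_cases i
    · exact ⟨x * x ^ (2 ^ j), by simp [χ]; rfl⟩
    · exact ⟨x * y ^ (2 ^ j), by simp [χ]; rfl⟩
    · exact ⟨x * z ^ (2 ^ j), by simp [χ]; rfl⟩
    · refine ⟨α, ?_⟩
      simp [χ]; change algebraMap B T x * _ = _
      linear_combination algebraMap B T α * hxi
    · refine ⟨β, ?_⟩
      simp [χ]; change algebraMap B T x * _ = _
      linear_combination algebraMap B T β * hxi
    · refine ⟨γ, ?_⟩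
      simp [χ]; change algebraMap B T x * _ = _
      linear_combination algebraMap B T γ * hxi
  · intro c
    refine ⟨algebraMap K B c ^ (2 ^ j), ?_⟩
    simp [χ, iterateFrobenius_def]; rfl
  · intro p hp
    have e' := congrArg (algebraMap B T) e
    simp only [map_add, map_mul, map_pow] at e'
    have hr := congrArg (iterateFrobenius T 2 j) (congrArg (algebraMap B T) (root_eq t))
    simp only [map_add, map_mul, map_pow, map_zero] at hr
    have hle : JJ t ≤ RingHom.ker χ := by
      rw [JJ, Ideal.span_le]
      rintro p (rfl | rfl)
      · rw [SetLike.mem_coe, RingHom.mem_ker]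
        simp only [χ, coe_eval₂Hom, eval₂_add, eval₂_mul, eval₂_pow, eval₂_X, eval₂_C]
        simp only [iterateFrobenius_def] at hr
        simp [iterateFrobenius_def]
        exact hr
      · rw [SetLike.mem_coe, RingHom.mem_ker]
        simp [χ]
        have h4 : (2 : ℕ) ^ (j + 2) = 2 ^ j * 4 := by ring
        rw [h4] at e'
        simp only [mul_pow, pow_mul] at e'
        linear_combination xi * e' - ((algebraMap B T x ^ 2 ^ j) ^ 3 * (algebraMap B T y ^ 2 ^ j) ^ 3) * hxi
    exact hle hp

lemma JJ_ne_top' : Ideal.span (Set.range ![Ideal.Quotient.mk (JJ t) (X 0), Ideal.Quotient.mk (JJ t) (X 1)]) ≠ ⊤ := by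
  let f : MvPolynomial (Fin 6) K →+* K := eval (fun _ => 0)
  have hf : ∀ a ∈ JJ t, f a = 0 := by
    have hle : JJ t ≤ RingHom.ker f := by
      rw [JJ, Ideal.span_le]
      rintro p (rfl | rfl)
      · rw [SetLike.mem_coe, RingHom.mem_ker]
        simp [f]
      · rw [SetLike.mem_coe, RingHom.mem_ker]
        simp [f]
    exact fun a ha => hle ha
  intro h
  have hle : Ideal.span (Set.range ![Ideal.Quotient.mk (JJ t) (X 0), Ideal.Quotient.mk (JJ t) (X 1)]) ≤ RingHom.ker (Ideal.Quotient.lift (JJ t) f hf) := by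
    rw [Ideal.span_le]
    rintro p ⟨i, rfl⟩
    rw [SetLike.mem_coe, RingHom.mem_ker]
    fin_cases i <;> simp [f]
  rw [h] at hle
  have := hle (Submodule.mem_top (x := 1))
  rw [RingHom.mem_ker, map_one] at this
  exact one_ne_zero this

theorem partI (hg : ∀ i, 3 ≤ i → gg t i ≠ 0) : IsQSequence ![Ideal.Quotient.mk (JJ t) (X 0), Ideal.Quotient.mk (JJ t) (X 1)] := by
  refine ⟨JJ_ne_top' t, fun n hn => le_sInf ?_⟩
  rintro _ ⟨h, rfl, H⟩
  obtain ⟨mm, hx, hy, h1⟩ := lift_chain (JJ t) n h _ rfl H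
  have := bound_of_good (B := AdjoinRoot (gp t)) (T := Localization.Away (xx K (AdjoinRoot (gp t)))) (JJ t) (T_inj t) (bas t) n h mm hx hy h1 (exists_good t hg)
  exact_mod_cast this
end
end BM

namespace BM

lemma free_sub {A D : Type*} [CommRing A] [IsDomain A] [AddCommGroup D] [Module A D] [Module.Finite A D] :
    ∃ (c : A) (n : Type) (f : (n →₀ A) →ₗ[A] D), c ≠ 0 ∧ Function.Injective f ∧ ∀ d, ∃ v, c • d = f v := by
  obtain ⟨n, s, hs⟩ := Module.Finite.exists_fin (R := A) (M := D)
  obtain ⟨I, hI, hmax⟩ := exists_maximal_linearIndepOn A s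
  have : ∀ i, ∃ a : A, a ≠ 0 ∧ a • s i ∈ Submodule.span A (s '' I) := by
    intro i
    by_cases hi : i ∈ I
    · exact ⟨1, one_ne_zero, by rw [one_smul]; exact Submodule.subset_span ⟨i, hi, rfl⟩⟩
    · exact hmax i hi
  choose a ha0 ha using this
  refine ⟨∏ i, a i, I, Finsupp.linearCombination A (fun i : I => s i), Finset.prod_ne_zero_iff.2 fun i _ => ha0 i, hI, ?_⟩
  intro d
  have hd : d ∈ Submodule.span A (Set.range s) := by rw [hs]; trivial
  have : (∏ i, a i) • d ∈ Submodule.span A (s '' I) := by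
    induction hd using Submodule.span_induction with
    | mem x hx =>
      obtain ⟨i, rfl⟩ := hx
      rw [← Finset.prod_erase_mul _ _ (Finset.mem_univ i), mul_smul]
      exact Submodule.smul_mem _ _ (ha i)
    | zero => simp
    | add x y _ _ hx hy => rw [smul_add]; exact Submodule.add_mem _ hx hy
    | smul r x _ hx => rw [smul_comm]; exact Submodule.smul_mem _ _ hx
  rw [Set.image_eq_range, ← Finsupp.range_linearCombination] at this
  obtain ⟨v, hv⟩ := this
  exact ⟨v, hv.symm⟩

lemma colon_killer {A D : Type*} [CommRing A] [IsDomain A] [AddCommGroup D] [Module A D] [Module.Finite A D]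
     : ∃ c : A, c ≠ 0 ∧ ∀ x y : A, (∀ a b : A, x * a = y * b → y ∣ a) →
      ∀ a b : D, x • a = y • b → ∃ e : D, c • a = y • e := by
  obtain ⟨c, n, f, hc, hf, hcf⟩ := free_sub (A := A) (D := D)
  refine ⟨c, hc, fun x y hxy a b hab => ?_⟩
  obtain ⟨v, hv⟩ := hcf a
  obtain ⟨w, hw⟩ := hcf b
  have h1 : x • v = y • w := by
    apply hf
    rw [map_smul, map_smul, ← hv, ← hw, smul_comm, hab, smul_comm]
  have h2 : ∀ i, ∃ e, v i = y * e := fun i => hxy (v i) (w i) (by simpa using DFunLike.congr_fun h1 i)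
  choose e he using h2
  classical
  by_cases hy : y = 0
  · subst hy
    refine ⟨0, ?_⟩
    have : v = 0 := by ext i; rw [he]; simp
    rw [hv, this]; simp
  · refine ⟨f (Finsupp.onFinset v.support e ?_), ?_⟩
    · intro i hi
      rw [Finsupp.mem_support_iff, he]
      exact mul_ne_zero hy hi
    · rw [hv, ← map_smul]
      congr 1
      ext i
      simp [he]

lemma stab {R E : Type*} [CommRing R] [CommRing E] [IsDomain E] [Algebra R E] (N : Submodule R E)
    [IsNoetherian R N] (c b : E) (hc : c ≠ 0) (h : ∀ j : ℕ, c * b ^ (2 ^ j) ∈ N) :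
    ∃ (e : ℕ) (r : ℕ → R), b ^ (2 ^ e) = ∑ j ∈ Finset.range e, r j • b ^ (2 ^ j) := by
  let y : ℕ → N := fun j => ⟨_, h j⟩
  let f : ℕ →o Submodule R N := ⟨fun e => Submodule.span R (y '' (Finset.range e : Set ℕ)), fun a b hab =>
    Submodule.span_mono (Set.image_mono (by simpa using Finset.range_mono hab))⟩
  obtain ⟨e, he⟩ := monotone_stabilizes_iff_noetherian.2 ‹IsNoetherian R N› f
  have h1 : y e ∈ f (e + 1) := Submodule.subset_span ⟨e, by simp, rfl⟩
  rw [← he (e + 1) (by omega)] at h1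
  obtain ⟨r, hr⟩ := (Submodule.mem_span_image_finset_iff_exists_fun R).1 h1
  refine ⟨e, fun i => if hi : i ∈ Finset.range e then r ⟨i, hi⟩ else 0, mul_left_cancel₀ hc ?_⟩
  have := congrArg (Subtype.val) hr
  rw [Finset.mul_sum]
  simp only [mul_smul_comm]
  rw [show c * b ^ 2 ^ e = (y e : E) from rfl, ← this]
  rw [← Finset.sum_attach (Finset.range e) (fun i => (if hi : i ∈ Finset.range e then r ⟨i, hi⟩ else 0) • (c * b ^ 2 ^ i))]
  simp only [Submodule.coe_sum, Submodule.coe_smul, Finset.univ_eq_attach]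
  refine Finset.sum_congr rfl fun i _ => ?_
  rw [dif_pos i.2]

lemma stab_integral {R E : Type*} [CommRing R] [CommRing E] [Algebra R E] {b : E} {e : ℕ} {r : ℕ → R}
    (h : b ^ (2 ^ e) = ∑ j ∈ Finset.range e, r j • b ^ (2 ^ j)) : IsIntegral R b := by
  refine ⟨Polynomial.X ^ (2 ^ e) - ∑ j ∈ Finset.range e, Polynomial.C (r j) * Polynomial.X ^ (2 ^ j), ?_, ?_⟩
  · apply Polynomial.monic_X_pow_sub
    refine lt_of_le_of_lt (Polynomial.degree_sum_le _ _) ?_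
    rw [Finset.sup_lt_iff (WithBot.bot_lt_coe _)]
    intro j hj
    refine lt_of_le_of_lt (Polynomial.degree_C_mul_X_pow_le _ _) ?_
    exact_mod_cast Nat.pow_lt_pow_right (by norm_num) (Finset.mem_range.1 hj)
  · simp [Polynomial.eval₂_finsetSum, h, Algebra.smul_def]

end BM

namespace BM

lemma Hg.mem_pow {k D : Type*} [Field k] [CommRing D] (F : A2 k →+* D) {p : A2 k} {d : ℤ} (h : Hg p d) (n : ℕ) (hn : (n : ℤ) ≤ d) :
    F p ∈ (Ideal.span {F (X 0), F (X 1)}) ^ n := by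
  rw [expand p, map_sum]
  refine Ideal.sum_mem _ fun m hm => ?_
  have := Hg_iff.1 h m (mem_support_iff.1 hm)
  have h0 : F (X 0) ∈ Ideal.span {F (X 0), F (X 1)} := Ideal.subset_span (by simp)
  have h1 : F (X 1) ∈ Ideal.span {F (X 0), F (X 1)} := Ideal.subset_span (by simp)
  rw [map_mul, map_mul, map_pow, map_pow, mul_assoc]
  refine Ideal.mul_mem_left _ _ (Ideal.pow_le_pow_right (m := n) (n := m 0 + m 1) (by omega) ?_)
  rw [pow_add]
  exact Ideal.mul_mem_mul (Ideal.pow_mem_pow h0 _) (Ideal.pow_mem_pow h1 _)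

section
variable {k D : Type*} [Field k] [CharP k 2] {t : k} [CommRing D] [IsDomain D] [CharP D 2] (F : A2 k →+* D)

lemma step4 (z u v w c0 : D) (hF1 : F (X 1) ≠ 0) (hz : z ^ 4 + F (X 0) * F (X 1) * z ^ 2 + F (X 0) ^ 3 * z + F (X 1) ^ 3 * z
      + F (C t) * F (X 0) ^ 2 * F (X 1) ^ 2 = 0) (hf : F (X 0) ^ 3 * F (X 1) ^ 3 = u * F (X 0) ^ 4 + v * F (X 1) ^ 4 + w * z ^ 4)
    (hc : ∀ (Q : ℕ) (a b : D), F (X 0) ^ Q * a = F (X 1) ^ Q * b → ∃ e, c0 * a = F (X 1) ^ Q * e)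
    (hg : ∀ i, 3 ≤ i → gg t i ≠ 0) (j : ℕ) :
    F (X 0) ^ 2 * c0 * w ^ (2 ^ j) ∈ (Ideal.span {F (X 0), F (X 1)}) ^ (2 * 2 ^ j) ∧
    F (X 0) ^ 2 * c0 * F s3 * u ^ (2 ^ j) ∈ (Ideal.span {F (X 0), F (X 1)}) ^ (2 * 2 ^ j) := by
  obtain ⟨r1, a1, r2, a2, N, N', hS⟩ := syz_exists (t := t) j (fun i h _ => hg i h)
  have hκ : (if j = 0 then 1 else gg t (j + 2)) ≠ 0 := by split_ifs; exacts [one_ne_zero, hg _ (by omega)]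
  set κ := (if j = 0 then 1 else gg t (j + 2))
  have two := two_eq (k := k)
  have twoD : (2 : D) = 0 := CharTwo.two_eq_zero
  have hQ : (2 : ℕ) ^ (j + 2) = 4 * 2 ^ j := by ring
  have hq1 : 1 ≤ (2 : ℕ) ^ j := Nat.one_le_two_pow
  have hHg : Hg ((X 0 ^ 3 * X 1 ^ 3) ^ (2 ^ j) * s3 : A2 k) (6 * 2 ^ j + 3) :=
    (((Hg_Xpow 0 3).mul (Hg_Xpow 1 3) rfl).pow (2 ^ j) rfl).mul W_s3.hg (by push_cast; ring)
  obtain ⟨α1, β1, hα1, -, e1⟩ := (hHg.mul hS.hr1.hg rfl).split (2 ^ (j + 2)) (2 ^ (j + 2)) (by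
    push_cast [hQ]; linarith)
  obtain ⟨α2, β2, hα2, -, e2⟩ := (hHg.mul hS.hr2.hg rfl).split (2 ^ (j + 2)) (2 ^ (j + 2)) (by
    push_cast [hQ]; linarith)
  have rel1 := hS.rel1
  have rel2 := hS.rel2
  have det := hS.det
  have hzp := z_pow' t F z hz (j + 2)
  have hfp : (F (X 0) ^ 3 * F (X 1) ^ 3) ^ (2 ^ j) = u ^ (2 ^ j) * F (X 0) ^ (2 ^ (j + 2)) + v ^ (2 ^ j) * F (X 1) ^ (2 ^ (j + 2))
      + w ^ (2 ^ j) * z ^ (2 ^ (j + 2)) := by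
    rw [hf, add_pow_char_pow, add_pow_char_pow, hQ, mul_pow, mul_pow, mul_pow]
    simp only [pow_mul]
  set Q := 2 ^ (j + 2)
  set q := 2 ^ j
  set φ := phi t (j + 2)
  obtain ⟨ν, hν, -⟩ := coprime_xy (m := Q) (n := Q) (a := α1 * r2 + α2 * r1) (b := β1 * r2 + β2 * r1) (by
    linear_combination (norm := (ring_nf; simp only [two, mul_zero, neg_zero, add_zero, sub_zero])) r1 * e2 + r2 * e1)
  obtain ⟨μ, hμ, -⟩ := coprime_xy (m := Q) (n := Q) (a := α1 * a2 + α2 * a1) (b := (X 0 ^ 3 * X 1 ^ 3) ^ q * s3 * C κ + β1 * a2 + β2 * a1) (by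
    linear_combination (norm := (ring_nf; simp only [two, mul_zero, neg_zero, add_zero, sub_zero])) a1 * e2 + a2 * e1 + (X 0 ^ 3 * X 1 ^ 3) ^ q * s3 * det)
  have hXQ : Hg (X 1 ^ Q : A2 k) Q := Hg_Xpow 1 Q
  obtain ⟨ν', hν', hνd⟩ := exists_factor_Hg (p := α1 * r2 + α2 * r1) (d := 6 * q) ((hα1.mul hS.hr2.hg (by push_cast [hQ, Q, q]; ring)).add
    (hα2.mul hS.hr1.hg (by push_cast [hQ, Q, q]; ring))) hXQ ⟨ν, hν⟩
  obtain ⟨μ', hμ', hμd⟩ := exists_factor_Hg (p := α1 * a2 + α2 * a1) (d := 6 * q + 3) ((hα1.mul hS.ha2.hg (by push_cast [hQ, Q, q]; ring)).add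
    (hα2.mul hS.ha1.hg (by push_cast [hQ, Q, q]; ring))) hXQ ⟨μ, hμ⟩
  have Fe1 := congrArg F e1
  have Fe2 := congrArg F e2
  have Frel1 := congrArg F rel1
  have Frel2 := congrArg F rel2
  have Fdet := congrArg F det
  have Fν := congrArg F hν'
  have Fμ := congrArg F hμ'
  simp only [map_add, map_mul, map_pow] at Fe1 Fe2 Frel1 Frel2 Fdet Fν Fμ
  have hqZ : (q : ℤ) = 2 ^ j := by simp [q]
  have m_r1 : F r1 ∈ _ := hS.hr1.hg.mem_pow F (2 * q - 2) (by omega)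
  have m_r2 : F r2 ∈ _ := hS.hr2.hg.mem_pow F (2 * q - 2) (by omega)
  have m_a1 : F a1 ∈ _ := hS.ha1.hg.mem_pow F (2 * q) (by omega)
  have m_a2 : F a2 ∈ _ := hS.ha2.hg.mem_pow F (2 * q) (by omega)
  have m_ν : F ν' ∈ _ := hνd.mem_pow F (2 * q) (by omega)
  have m_μ : F μ' ∈ _ := hμd.mem_pow F (2 * q) (by omega)
  have hx0 : F (X 0) ∈ Ideal.span {F (X 0), F (X 1)} := Ideal.subset_span (by simp)
  set I : Ideal D := Ideal.span {F (X 0), F (X 1)}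
  set m := F (ll (j + 2)) * z ^ 2 + F (ll2 (j + 2)) * z
  set m' := F (sw (ll (j + 2))) * z ^ 2 + F (sw (ll2 (j + 2))) * z
  obtain ⟨η1, hη1⟩ := hc Q (u ^ q * F s3 * F r1 + w ^ q * (F r1 * m + F a1) + F α1)
    (v ^ q * F s3 * F r1 + w ^ q * (F r1 * m' + F (sw a1)) + F β1) (by
    linear_combination (norm := (ring_nf; simp only [twoD, mul_zero, neg_zero, add_zero, sub_zero])) Fe1 + F s3 * F r1 * hfp + w ^ q * F r1 * hzp + w ^ q * Frel1)
  obtain ⟨η2, hη2⟩ := hc Q (u ^ q * F s3 * F r2 + w ^ q * (F r2 * m + F a2) + F α2)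
    (v ^ q * F s3 * F r2 + w ^ q * (F r2 * m' + F (sw a2)) + F β2) (by
    linear_combination (norm := (ring_nf; simp only [twoD, mul_zero, neg_zero, add_zero, sub_zero])) Fe2 + F s3 * F r2 * hfp + w ^ q * F r2 * hzp + w ^ q * Frel2)
  have hκF : F (C κ⁻¹) * F (C κ) = 1 := by rw [← map_mul, ← C_mul, inv_mul_cancel₀ hκ, C_1, map_one]
  have hyQ : F (X 1) ^ Q ≠ 0 := pow_ne_zero _ hF1
  have eW : c0 * (F (C κ) * w ^ q) = c0 * F ν' + η1 * F r2 + η2 * F r1 := by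
    apply mul_left_cancel₀ hyQ
    linear_combination (norm := (ring_nf; simp only [twoD, mul_zero, neg_zero, add_zero, sub_zero])) F r2 * hη1 + F r1 * hη2 + c0 * w ^ q * Fdet + c0 * Fν
  have eU : c0 * (F s3 * F (C κ) * u ^ q) = c0 * (F (C κ) * w ^ q) * m + c0 * F μ' + η1 * F a2 + η2 * F a1 := by
    apply mul_left_cancel₀ hyQ
    linear_combination (norm := (ring_nf; simp only [twoD, mul_zero, neg_zero, add_zero, sub_zero])) F a2 * hη1 + F a1 * hη2 + c0 * (u ^ q * F s3 + w ^ q * m) * Fdet + c0 * Fμ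
  have up : ∀ a ∈ I ^ (2 * q - 2), F (X 0) ^ 2 * a ∈ I ^ (2 * q) := by
    intro a ha
    rw [show 2 * q = 2 + (2 * q - 2) by omega, pow_add]
    exact Ideal.mul_mem_mul (Ideal.pow_mem_pow hx0 2) ha
  have HW : F (X 0) ^ 2 * c0 * w ^ q ∈ I ^ (2 * q) := by
    have : F (X 0) ^ 2 * c0 * w ^ q = F (C κ⁻¹) * (F (X 0) ^ 2 * c0 * F ν' + η1 * (F (X 0) ^ 2 * F r2) + η2 * (F (X 0) ^ 2 * F r1)) := by
      linear_combination F (C κ⁻¹) * F (X 0) ^ 2 * eW - F (X 0) ^ 2 * c0 * w ^ q * hκF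
    rw [this]
    exact Ideal.mul_mem_left _ _ (Ideal.add_mem _ (Ideal.add_mem _ (Ideal.mul_mem_left _ _ m_ν) (Ideal.mul_mem_left _ _ (up _ m_r2))) (Ideal.mul_mem_left _ _ (up _ m_r1)))
  refine ⟨HW, ?_⟩
  have : F (X 0) ^ 2 * c0 * F s3 * u ^ q = m * (F (X 0) ^ 2 * c0 * w ^ q) + F (C κ⁻¹) * F (X 0) ^ 2 * (c0 * F μ' + η1 * F a2 + η2 * F a1) := by
    linear_combination F (C κ⁻¹) * F (X 0) ^ 2 * eU - (F (X 0) ^ 2 * c0 * F s3 * u ^ q - m * (F (X 0) ^ 2 * c0 * w ^ q)) * hκF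
  rw [this]
  exact Ideal.add_mem _ (Ideal.mul_mem_left _ _ HW) (Ideal.mul_mem_left _ _ (Ideal.add_mem _ (Ideal.add_mem _ (Ideal.mul_mem_left _ _ m_μ) (Ideal.mul_mem_left _ _ m_a2)) (Ideal.mul_mem_left _ _ m_a1)))

/-- all three elements -/
lemma step4_all (z u v w c0 : D) (hF : Function.Injective F) (hz : z ^ 4 + F (X 0) * F (X 1) * z ^ 2 + F (X 0) ^ 3 * z + F (X 1) ^ 3 * z
      + F (C t) * F (X 0) ^ 2 * F (X 1) ^ 2 = 0) (hf : F (X 0) ^ 3 * F (X 1) ^ 3 = u * F (X 0) ^ 4 + v * F (X 1) ^ 4 + w * z ^ 4)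
    (hc0 : c0 ≠ 0)
    (hc : ∀ (Q : ℕ) (a b : D), F (X 0) ^ Q * a = F (X 1) ^ Q * b → ∃ e, c0 * a = F (X 1) ^ Q * e)
    (hc' : ∀ (Q : ℕ) (a b : D), F (X 1) ^ Q * a = F (X 0) ^ Q * b → ∃ e, c0 * a = F (X 0) ^ Q * e)
    (hg : ∀ i, 3 ≤ i → gg t i ≠ 0) : ∃ c : D, c ≠ 0 ∧ ∀ j : ℕ, 
    c * u ^ (2 ^ j) ∈ (Ideal.span {F (X 0), F (X 1)}) ^ (2 * 2 ^ j) ∧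
    c * v ^ (2 ^ j) ∈ (Ideal.span {F (X 0), F (X 1)}) ^ (2 * 2 ^ j) ∧
    c * w ^ (2 ^ j) ∈ (Ideal.span {F (X 0), F (X 1)}) ^ (2 * 2 ^ j) := by
  have hn : ∀ p : A2 k, p ≠ 0 → F p ≠ 0 := fun p hp => by rwa [Ne, map_eq_zero_iff F hF]
  have h0 := hn _ (X_ne_zero 0)
  have h1 := hn _ (X_ne_zero 1)
  refine ⟨F (X 0) ^ 2 * F (X 1) ^ 2 * c0 * F s3, mul_ne_zero (mul_ne_zero (mul_ne_zero (pow_ne_zero _ h0) (pow_ne_zero _ h1)) hc0) (hn _ s3_ne), fun j => ?_⟩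
  obtain ⟨A1, A3⟩ := step4 F z u v w c0 h1 hz hf hc hg j
  obtain ⟨-, A4⟩ := step4 (t := t) (F.comp (sw : A2 k →ₐ[k] A2 k).toRingHom) z v u w c0 (by simpa using h0)
    (by simp; linear_combination hz) (by simp; linear_combination hf) (by simpa using hc') hg j
  simp [sw_s3] at A4
  rw [Set.pair_comm] at A4
  refine ⟨?_, ?_, ?_⟩
  · have := Ideal.mul_mem_left _ (F (X 1) ^ 2) A3
    convert this using 1; ring
  · have := Ideal.mul_mem_left _ (F (X 0) ^ 2) A4
    convert this using 1; ring
  · have := Ideal.mul_mem_left _ (F (X 1) ^ 2 * F s3) A1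
    convert this using 1; ring
end
end BM

namespace BM
lemma rees_stab {A D : Type*} [CommRing A] [IsNoetherianRing A] [CommRing D] [IsDomain D] [Algebra A D] [Module.Finite A D]
    (𝔞 : Ideal A) (c b : D) (hc : c ≠ 0) (h : ∀ j : ℕ, c * b ^ (2 ^ j) ∈ (𝔞.map (algebraMap A D)) ^ (2 * 2 ^ j)) :
    ∃ (e : ℕ) (s : ℕ → A), (∀ j < e, s j ∈ 𝔞 ^ (2 * (2 ^ e - 2 ^ j))) ∧
      b ^ (2 ^ e) = ∑ j ∈ Finset.range e, algebraMap A D (s j) * b ^ (2 ^ j) := by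
  let 𝓡 := reesAlgebra 𝔞
  let ψ : 𝓡 →+* Polynomial D := (Polynomial.mapRingHom (algebraMap A D)).comp 𝓡.val.toRingHom
  letI : Algebra 𝓡 (Polynomial D) := ψ.toAlgebra
  have hsm : ∀ (r : 𝓡) (p : Polynomial D), r • p = (r : Polynomial A).map (algebraMap A D) * p := fun r p => rfl
  obtain ⟨s, hs⟩ := (Module.finite_def (R := A) (M := D)).1 inferInstance
  let N : Submodule 𝓡 (Polynomial D) := Submodule.span 𝓡 (Polynomial.C '' (s : Set D))
  have hfg : N.FG := Submodule.fg_span ((s.finite_toSet).image _)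
  haveI : IsNoetherianRing 𝓡 := inferInstanceAs (IsNoetherianRing (reesAlgebra 𝔞))
  haveI : IsNoetherian 𝓡 N := isNoetherian_of_fg_of_noetherian N hfg
  have key : ∀ n : ℕ, ∀ e ∈ (𝔞.map (algebraMap A D)) ^ n, Polynomial.monomial n e ∈ N := by
    intro n e he
    rw [← Ideal.map_pow, Ideal.map] at he
    suffices ∀ d, Polynomial.monomial n (d * e) ∈ N by simpa using this 1
    induction he using Submodule.span_induction with
    | mem e he =>
      obtain ⟨a, ha, rfl⟩ := he
      intro d
      have hd : d ∈ Submodule.span A (s : Set D) := by rw [hs]; trivial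
      induction hd using Submodule.span_induction with
      | mem d hd =>
        have h1 : Polynomial.monomial n a ∈ 𝓡 := reesAlgebra.monomial_mem.2 ha
        have h2 : Polynomial.monomial n (d * algebraMap A D a) = (⟨_, h1⟩ : 𝓡) • Polynomial.C d := by
          rw [hsm]; simp [Polynomial.monomial_mul_C, mul_comm]
        rw [h2]
        exact Submodule.smul_mem _ _ (Submodule.subset_span ⟨d, hd, rfl⟩)
      | zero => simp
      | add x y _ _ hx hy => rw [add_mul, map_add]; exact Submodule.add_mem _ hx hy
      | smul r x _ hx =>
        have h1 : Polynomial.monomial n (r • x * algebraMap A D a) = (algebraMap A 𝓡 r) • Polynomial.monomial n (x * algebraMap A D a) := by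
          rw [hsm, Algebra.smul_def, mul_assoc]
          simp [Polynomial.C_mul_monomial]
        rw [h1]
        exact Submodule.smul_mem _ _ hx
    | zero => simp
    | add x y _ _ hx hy => intro d; rw [mul_add, map_add]; exact Submodule.add_mem _ (hx d) (hy d)
    | smul r x _ hx => intro d; rw [smul_eq_mul, ← mul_assoc]; exact hx _
  obtain ⟨e, r, hr⟩ := stab N (Polynomial.C c) (Polynomial.monomial 2 b) (by simpa using hc) (by
    intro j
    rw [Polynomial.monomial_pow, Polynomial.C_mul_monomial]
    exact key _ _ (h j))
  refine ⟨e, fun j => (r j : Polynomial A).coeff (2 * (2 ^ e - 2 ^ j)), fun j _ => (mem_reesAlgebra_iff _ _).1 (r j).2 _, ?_⟩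
  have := congrArg (fun p => Polynomial.coeff p (2 * 2 ^ e)) hr
  simp only [Polynomial.monomial_pow, Polynomial.coeff_monomial_same, Polynomial.finsetSum_coeff, hsm] at this
  rw [this]
  refine Finset.sum_congr rfl fun j hj => ?_
  have hj : (2 : ℕ) ^ j ≤ 2 ^ e := Nat.pow_le_pow_right (by norm_num) (Finset.mem_range.1 hj).le
  rw [show 2 * 2 ^ e = 2 * (2 ^ e - 2 ^ j) + 2 * 2 ^ j by omega, Polynomial.coeff_mul_monomial, Polynomial.coeff_map]
end BM

namespace BM
section
variable {k Ω : Type*} [Field k] [Field Ω] (F : A2 k →+* Ω)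

/-- additive homogeneous equation -/
def AddEq (e : ℕ) (b : Ω) : Prop := ∃ s : ℕ → A2 k, (∀ j < e, Hg (s j) (2 * (2 ^ e - 2 ^ j))) ∧
  b ^ (2 ^ e) = ∑ j ∈ Finset.range e, F (s j) * b ^ (2 ^ j)

/-- graded version of `F` -/
noncomputable def Ps0 : A2 k →+* Polynomial Ω :=
  eval₂Hom (Polynomial.C.comp (F.comp C)) (fun i => Polynomial.C (F (X i)) * Polynomial.X)

lemma Ps0_eval (p : A2 k) : (Ps0 F p).eval 1 = F p := by
  have : (Polynomial.evalRingHom (1 : Ω)).comp (Ps0 F) = F := by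
    apply MvPolynomial.ringHom_ext
    · intro r; simp [Ps0]
    · intro i; simp [Ps0]
  exact congrArg (fun f => f p) this

lemma Ps0_inj (hF : Function.Injective F) : Function.Injective (Ps0 F) := by
  intro a b h
  apply hF
  rw [← Ps0_eval, h, Ps0_eval]

/-- graded version of `F` -/
noncomputable def Ps : A2 k →+* RatFunc Ω := (algebraMap (Polynomial Ω) (RatFunc Ω)).comp (Ps0 F)

lemma Ps_inj (hF : Function.Injective F) : Function.Injective (Ps F) :=
  (RatFunc.algebraMap_injective Ω).comp (Ps0_inj F hF)

lemma Ps_C (c : k) : Ps F (C c) = RatFunc.C (F (C c)) := by simp [Ps, Ps0]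
lemma Ps_X (i : Fin 2) : Ps F (X i) = RatFunc.C (F (X i)) * RatFunc.X := by simp [Ps, Ps0]

lemma Ps_Hg {p : A2 k} {d : ℤ} (h : Hg p d) : Ps F p = RatFunc.C (F p) * RatFunc.X ^ d := by
  conv_lhs => rw [expand p]
  conv_rhs => rw [expand p]
  simp only [map_sum, Finset.sum_mul]
  refine Finset.sum_congr rfl fun m hm => ?_
  have := Hg_iff.1 h m (mem_support_iff.1 hm)
  simp only [map_mul, map_pow, Ps_C, Ps_X]
  rw [← this, zpow_add₀ RatFunc.X_ne_zero, zpow_natCast, zpow_natCast]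
  ring

/-- integral of degree `d` -/
def HI (d : ℤ) (b : Ω) : Prop := (Ps F).IsIntegralElem (RatFunc.C b * RatFunc.X ^ d)

variable {F}
lemma HI.mul {d d' e : ℤ} {a b : Ω} (ha : HI F d a) (hb : HI F d' b) (he : d + d' = e) : HI F e (a * b) := by
  have := RingHom.IsIntegralElem.mul (Ps F) ha hb
  have e1 : (RatFunc.C (a * b) * RatFunc.X ^ e : RatFunc Ω) = RatFunc.C a * RatFunc.X ^ d * (RatFunc.C b * RatFunc.X ^ d') := by
    rw [← he, zpow_add₀ RatFunc.X_ne_zero, map_mul]; ring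
  unfold HI
  rw [e1]; exact this

lemma HI.add {d : ℤ} {a b : Ω} (ha : HI F d a) (hb : HI F d b) : HI F d (a + b) := by
  have := RingHom.IsIntegralElem.add (Ps F) ha hb
  have e1 : (RatFunc.C (a + b) * RatFunc.X ^ d : RatFunc Ω) = RatFunc.C a * RatFunc.X ^ d + RatFunc.C b * RatFunc.X ^ d := by
    rw [map_add]; ring
  unfold HI
  rw [e1]; exact this

lemma HI.pow {d e : ℤ} {a : Ω} (ha : HI F d a) (n : ℕ) (he : n * d = e) : HI F e (a ^ n) := by
  subst he
  letI := (Ps F).toAlgebra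
  have : IsIntegral (A2 k) ((RatFunc.C a * RatFunc.X ^ d : RatFunc Ω) ^ n) := IsIntegral.pow (R := A2 k) ha n
  have e1 : (RatFunc.C (a ^ n) * RatFunc.X ^ ((n : ℤ) * d) : RatFunc Ω) = (RatFunc.C a * RatFunc.X ^ d) ^ n := by
    rw [mul_comm (n : ℤ), zpow_mul, map_pow, zpow_natCast, mul_pow]
  unfold HI
  rw [e1]; exact this

lemma HI_F {d : ℤ} {p : A2 k} (h : Hg p d) : HI F d (F p) := by
  unfold HI
  rw [← Ps_Hg F h]
  exact RingHom.isIntegralElem_map _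

lemma AddEq.HI {e : ℕ} {b : Ω} (h : AddEq F e b) : HI F 2 b := by
  obtain ⟨s, hs, he⟩ := h
  letI := (Ps F).toAlgebra
  refine stab_integral (R := A2 k) (e := e) (r := s) ?_
  rw [mul_pow, ← map_pow, he, map_sum, Finset.sum_mul]
  refine Finset.sum_congr rfl fun j hj => ?_
  rw [Algebra.smul_def]
  change _ = Ps F (s j) * _
  rw [Ps_Hg F (hs j (Finset.mem_range.1 hj)), map_mul, mul_pow, map_pow, mul_assoc, mul_assoc]
  congr 1
  rw [mul_left_comm]
  congr 1
  rw [← zpow_natCast, ← zpow_mul, ← zpow_natCast, ← zpow_mul, ← zpow_add₀ RatFunc.X_ne_zero]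
  congr 1
  push_cast; ring

lemma HI_z [CharP k 2] {t : k} {z : Ω} (hz : z ^ 4 + F (X 0) * F (X 1) * z ^ 2 + F (X 0) ^ 3 * z + F (X 1) ^ 3 * z
      + F (C t) * F (X 0) ^ 2 * F (X 1) ^ 2 = 0) : HI F 1 z := by
  refine ⟨gp t, gp_monic t, ?_⟩
  rw [gp_eval, Ps_X, Ps_X, Ps_C]
  have := congrArg (fun a => RatFunc.C a * RatFunc.X ^ 4) hz
  simp only [map_add, map_mul, map_pow, map_zero] at this
  rw [zpow_one]
  linear_combination this

lemma HI_zero (hF : Function.Injective F) {b : Ω} (M d : ℕ) (hd : d < M) (h0 : HI F d (b * F (X 0) ^ M)) (h1 : HI F d (b * F (X 1) ^ M)) :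
    b = 0 := by
  letI := (Ps F).toAlgebra
  have hal : ∀ p, algebraMap (A2 k) (RatFunc Ω) p = Ps F p := fun p => rfl
  set T : RatFunc Ω := RatFunc.X
  have hT : T ≠ 0 := RatFunc.X_ne_zero
  set θ : RatFunc Ω := RatFunc.C b * T ^ ((d : ℤ) - M) with hθ
  have hTM : T ^ ((d : ℤ) - M) * T ^ M = T ^ d := by
    rw [← zpow_natCast, ← zpow_add₀ hT, ← zpow_natCast]; congr 1; ring
  have e0 : θ * Ps F (X 0) ^ M = RatFunc.C (b * F (X 0) ^ M) * T ^ d := by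
    rw [Ps_X, hθ, map_mul, map_pow, mul_pow, ← hTM]; ring
  have e1 : θ * Ps F (X 1) ^ M = RatFunc.C (b * F (X 1) ^ M) * T ^ d := by
    rw [Ps_X, hθ, map_mul, map_pow, mul_pow, ← hTM]; ring
  have i0 : IsIntegral (A2 k) (θ * Ps F (X 0) ^ M) := by
    rw [e0, ← zpow_natCast T d]; exact h0
  have i1 : IsIntegral (A2 k) (θ * Ps F (X 1) ^ M) := by
    rw [e1, ← zpow_natCast T d]; exact h1
  set b0 := θ * Ps F (X 0) ^ M
  set b1 := θ * Ps F (X 1) ^ M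
  let Cc : Subalgebra (A2 k) (RatFunc Ω) := Algebra.adjoin (A2 k) {b0, b1}
  haveI : Module.Finite (A2 k) Cc := by
    change Module.Finite (A2 k) (Subalgebra.toSubmodule Cc)
    apply Module.Finite.of_fg
    refine fg_adjoin_of_finite (Set.toFinite _) ?_
    rintro x (rfl | rfl)
    exacts [i0, i1]
  obtain ⟨c, hc, hcol⟩ := colon_killer (A := A2 k) (D := Cc)
  have m0 : b0 ∈ Cc := Algebra.subset_adjoin (by simp)
  have m1 : b1 ∈ Cc := Algebra.subset_adjoin (by simp)
  have hy : Ps F (X 1) ≠ 0 := by rw [Ne, map_eq_zero_iff _ (Ps_inj F hF)]; exact X_ne_zero 1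
  have key : ∀ n : ℕ, Ps F c * θ ^ n ∈ Subalgebra.toSubmodule Cc := by
    intro n
    obtain ⟨e, he⟩ := hcol (X 0 ^ (M * n)) (X 1 ^ (M * n)) (fun a b h => by
      obtain ⟨c, hc, -⟩ := coprime_xy h
      exact ⟨c, hc⟩) (⟨b1, m1⟩ ^ n) (⟨b0, m0⟩ ^ n) (by
        apply Subtype.ext
        simp only [Algebra.smul_def, Subalgebra.coe_mul, Subalgebra.coe_pow, Subalgebra.coe_algebraMap, hal, map_pow, b0, b1]
        ring)
    have he := congrArg Subtype.val he
    simp only [Algebra.smul_def, Subalgebra.coe_mul, Subalgebra.coe_pow, Subalgebra.coe_algebraMap, hal, map_pow, b0, b1] at he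
    have : Ps F c * θ ^ n = e := by
      apply mul_left_cancel₀ (pow_ne_zero (M * n) hy)
      rw [← he]; ring
    rw [this]; exact e.2
  haveI : IsNoetherian (A2 k) (Subalgebra.toSubmodule Cc) := inferInstanceAs (IsNoetherian (A2 k) Cc)
  obtain ⟨e, r, hr⟩ := stab (Subalgebra.toSubmodule Cc) (Ps F c) θ (by rwa [Ne, map_eq_zero_iff _ (Ps_inj F hF)]) (fun j => key _)
  obtain ⟨p, hp, hpe⟩ := stab_integral hr
  have hintg : IsIntegral (Polynomial Ω) θ := ⟨p.map (Ps0 F), hp.map _, by rw [Polynomial.eval₂_map]; exact hpe⟩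
  obtain ⟨g, hg⟩ := IsIntegrallyClosed.isIntegral_iff.1 hintg
  have h2 : g * Polynomial.X ^ (M - d) = Polynomial.C b := by
    apply RatFunc.algebraMap_injective Ω
    rw [map_mul, hg, map_pow, RatFunc.algebraMap_X, RatFunc.algebraMap_C, hθ, mul_assoc, ← zpow_natCast, ← zpow_add₀ hT]
    rw [show ((d : ℤ) - M + ((M - d : ℕ) : ℤ)) = 0 by omega]; simp
  have := congrArg (Polynomial.eval 0) h2
  rw [Polynomial.eval_mul, Polynomial.eval_pow, Polynomial.eval_X, zero_pow (by omega : M - d ≠ 0), mul_zero, Polynomial.eval_C] at this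
  exact this.symm
end
end BM

namespace BM
section
variable {k : Type*} [Field k] [CharP k 2]

lemma gg_return [Finite k] (t : k) (m : ℕ) (hm : ∀ i, 3 ≤ i → i ≤ m + 3 → gg t i ≠ 0) :
    ∃ j, m < j ∧ gg t (j + 3) = 0 ∧ ∀ i, 3 ≤ i → i < j + 3 → gg t i ≠ 0 := by
  classical
  have hinj : Function.Injective (fun s : k => s ^ 2 + t) := by
    intro a b h
    have h : a ^ 2 + t = b ^ 2 + t := h
    have : a ^ 2 = b ^ 2 := add_right_cancel h
    exact frobenius_inj k 2 (by simpa [frobenius_def] using this)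
  let σ : Equiv.Perm k := Equiv.ofBijective _ (Finite.injective_iff_bijective.1 hinj)
  have hσ : ∀ n, gg t (n + 1) = (σ ^ n) 0 := by
    intro n
    induction n with
    | zero => simp [gg]
    | succ n ih =>
      rw [pow_succ', Equiv.Perm.mul_apply, ← ih]
      rfl
  have h0 : 0 < orderOf σ := orderOf_pos σ
  have hex : ∃ i, 3 ≤ i ∧ gg t i = 0 := by
    refine ⟨2 * orderOf σ + 1, by omega, ?_⟩
    rw [hσ, mul_comm, pow_mul, pow_orderOf_eq_one]; simp
  obtain ⟨h3, hz⟩ := Nat.find_spec hex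
  have hmin := fun i (hi : i < Nat.find hex) => Nat.find_min hex hi
  set n := Nat.find hex
  have hn : m + 3 < n := by
    by_contra h
    exact hm n h3 (by omega) hz
  refine ⟨n - 3, by omega, ?_, fun i hi hi' h => hmin i (by omega) ⟨hi, h⟩⟩
  rwa [show n - 3 + 3 = n by omega]

lemma sep_pow {E Ω : Type*} [Field E] [Field Ω] [Algebra E Ω] [CharP E 2] (e : ℕ) (b : Ω) (s : ℕ → E)
    (h : b ^ (2 ^ e) = ∑ j ∈ Finset.range e, algebraMap E Ω (s j) * b ^ (2 ^ j)) :
    b ^ (2 ^ e) ∈ separableClosure E Ω := by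
  induction e generalizing b s with
  | zero => rw [h]; simp
  | succ e ih =>
    by_cases h0 : s 0 = 0
    · have := ih (b ^ 2) (fun i => s (i + 1)) (by
        rw [← pow_mul, ← pow_succ', h, Finset.sum_range_succ', h0]
        simp only [map_zero, zero_mul, add_zero]
        refine Finset.sum_congr rfl fun j _ => ?_
        rw [← pow_mul, ← pow_succ'])
      rwa [← pow_mul, ← pow_succ'] at this
    · apply pow_mem
      rw [mem_separableClosure_iff]
      let p : Polynomial E := Polynomial.X ^ (2 ^ (e + 1)) - ∑ j ∈ Finset.range (e + 1), Polynomial.C (s j) * Polynomial.X ^ (2 ^ j)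
      have hd : Polynomial.derivative p = Polynomial.C (- s 0) := by
        have h2 : (2 : Polynomial E) = 0 := CharTwo.two_eq_zero
        have h2' : (2 : E) = 0 := CharTwo.two_eq_zero
        simp only [p, Polynomial.derivative_sub, Polynomial.derivative_sum, Polynomial.derivative_X_pow,
          Polynomial.derivative_C_mul]
        rw [Finset.sum_range_succ']
        simp [h2, pow_succ, h2']
      have hsep : p.Separable := by
        refine ⟨0, Polynomial.C (- s 0)⁻¹, ?_⟩
        rw [hd, zero_mul, zero_add, ← map_mul, inv_mul_cancel₀ (neg_ne_zero.2 h0), map_one]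
      refine hsep.of_dvd (minpoly.dvd E b ?_)
      simp [p, h]
end
end BM

namespace BM
section
variable {k Ω : Type*} [Field k] [CharP k 2] [Field Ω] [CharP Ω 2]

lemma ll_sq_id (F : A2 k →+* Ω) {s t : k} (hs : s ^ 2 = t) {z : Ω} (hz : z ^ 4 + F (X 0) * F (X 1) * z ^ 2 + F (X 0) ^ 3 * z + F (X 1) ^ 3 * z
      + F (C t) * F (X 0) ^ 2 * F (X 1) ^ 2 = 0) (n : ℕ) :
    ∃ α β γ : A2 k, F s3 * (F (ll n) * z ^ 2 + F (ll2 n) * z) = (F α * z + F β * z ^ 2 + F γ) ^ 2 := by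
  have two : (2 : Ω) = 0 := CharTwo.two_eq_zero
  rcases Nat.even_or_odd n with h | h
  · refine ⟨X 1 ^ 2, X 0, C s * X 0 ^ 2 * X 1, ?_⟩
    subst hs
    simp only [ll, ll2, h, if_true, s3, map_add, map_mul, map_pow] at *
    simp only [CharTwo.add_sq]
    linear_combination (norm := (ring_nf; simp only [two, mul_zero, neg_zero, add_zero, sub_zero])) F (X 0) ^ 2 * hz
  · refine ⟨X 0 ^ 2, X 1, C s * X 1 ^ 2 * X 0, ?_⟩
    subst hs
    have h : ¬ Even n := by simpa using h
    simp only [ll, ll2, h, if_false, s3, map_add, map_mul, map_pow] at *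
    simp only [CharTwo.add_sq]
    linear_combination (norm := (ring_nf; simp only [two, mul_zero, neg_zero, add_zero, sub_zero])) F (X 1) ^ 2 * hz

lemma Hg_ll (n : ℕ) : Hg (ll n : A2 k) 1 := by unfold ll; split_ifs <;> exact Hg_X _
lemma Hg_ll2 (n : ℕ) : Hg (ll2 n : A2 k) 2 := by unfold ll2; split_ifs <;> exact Hg_Xpow _ 2

lemma theoremN_L (F : A2 k →+* Ω) (hF : Function.Injective F) {t : k} {z u v w : Ω}
    (hz : z ^ 4 + F (X 0) * F (X 1) * z ^ 2 + F (X 0) ^ 3 * z + F (X 1) ^ 3 * z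
      + F (C t) * F (X 0) ^ 2 * F (X 1) ^ 2 = 0)
    (hf : F (X 0) ^ 3 * F (X 1) ^ 3 = u * F (X 0) ^ 4 + v * F (X 1) ^ 4 + w * z ^ 4)
    (hu : HI F 2 u) (hv : HI F 2 v) (hw : HI F 2 w)
    {j q : ℕ} (hq : q = 2 ^ j) {κ : k} {r1 a1 r2 a2 N N' U' : A2 k} (hS : Syz t j κ r1 a1 r2 a2 N N')
    (hU : UU t (j + 2) a1 r1 = s3 * U') (hU' : Hg U' (4 * q - 1)) :
    u ^ (2 * q) * F (s3 * r1 ^ 2) + w ^ (2 * q) * (F (r1 ^ 2) * (F (ll (j + 3)) * z ^ 2 + F (ll2 (j + 3)) * z) + F U')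
      + F (s3 * X 1 ^ (6 * q) * N ^ 2 + X 0 * X 1 ^ (8 * q - 2)) = 0 := by
  have two : (2 : Ω) = 0 := CharTwo.two_eq_zero
  have q1 : 1 ≤ q := by rw [hq]; exact Nat.one_le_two_pow
  have hqz : (q : ℤ) = 2 ^ j := by rw [hq]; push_cast; rfl
  set L := u ^ (2 * q) * F (s3 * r1 ^ 2) + w ^ (2 * q) * (F (r1 ^ 2) * (F (ll (j + 3)) * z ^ 2 + F (ll2 (j + 3)) * z) + F U')
      + F (s3 * X 1 ^ (6 * q) * N ^ 2 + X 0 * X 1 ^ (8 * q - 2)) with hL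
  set L' := v ^ (2 * q) * F (s3 * r1 ^ 2) + w ^ (2 * q) * (F (r1 ^ 2) * (F (sw (ll (j + 3))) * z ^ 2 + F (sw (ll2 (j + 3))) * z) + F (sw U'))
      + F (s3 * X 0 ^ (6 * q) * N' ^ 2 + X 1 * X 0 ^ (8 * q - 2)) with hL'
  have Hz := HI_z hz
  have Hs : HI F 3 (F s3) := HI_F W_s3.hg
  have hr1 : Hg r1 (2 * q - 2) := by rw [hqz]; exact hS.hr1.hg
  have hN : Hg N (q - 2) := by rw [hqz]; exact hS.hN
  have hN' : Hg N' (q - 2) := by rw [hqz]; exact hS.hN'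
  have hsr : Hg (s3 * r1 ^ 2) (4 * q - 1) := W_s3.hg.mul (hr1.pow 2 rfl) (by push_cast; ring)
  have hr2 : Hg (r1 ^ 2) (4 * q - 4) := hr1.pow 2 (by push_cast; ring)
  have HL : ∀ u' l l2 U α, HI F 2 u' → Hg l 1 → Hg l2 2 → Hg U (4 * q - 1) → Hg α (8 * q - 1) →
      HI F (8 * q - 1) (u' ^ (2 * q) * F (s3 * r1 ^ 2) + w ^ (2 * q) * (F (r1 ^ 2) * (F l * z ^ 2 + F l2 * z) + F U) + F α) := by
    intro u' l l2 U α hu' hl hl2 hU hα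
    refine (HI.add ?_ ?_).add (HI_F hα)
    · exact (hu'.pow _ rfl).mul (HI_F hsr) (by push_cast; ring)
    · refine (hw.pow _ rfl).mul (d' := 4 * q - 1) (((HI_F hr2).mul (d' := 3) (((HI_F hl).mul (Hz.pow 2 rfl) (by norm_num)).add
        ((HI_F hl2).mul Hz (by norm_num))) (by ring)).add (HI_F hU)) (by push_cast; ring)
  have H1 : HI F (8 * q - 1) L := by
    refine HL _ _ _ _ _ hu (Hg_ll _) (Hg_ll2 _) hU' (Hg.add ?_ ?_)
    · exact (W_s3.hg.mul (Hg_Xpow _ _) rfl).mul (hN.pow 2 rfl) (by push_cast; ring)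
    · exact (Hg_X _).mul (Hg_Xpow _ _) (by omega)
  have H2 : HI F (8 * q - 1) L' := by
    refine HL _ _ _ _ _ hv (Hg_ll _).sw (Hg_ll2 _).sw hU'.sw (Hg.add ?_ ?_)
    · exact (W_s3.hg.mul (Hg_Xpow _ _) rfl).mul (hN'.pow 2 rfl) (by push_cast; ring)
    · exact (Hg_X _).mul (Hg_Xpow _ _) (by omega)
  -- the relation
  have hQ : 2 * 2 ^ (j + 2) = 8 * q := by rw [hq]; ring
  have hQ' : 2 ^ (j + 3) = 8 * q := by rw [hq]; ring
  have R1 : r1 ^ 2 * phi t (j + 3) = U' * X 0 ^ (8 * q) + sw U' * X 1 ^ (8 * q) := by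
    have := UU_rel rfl hS.sw1 hS.rel1
    rw [hU, map_mul, sw_s3, hQ] at this
    apply mul_left_cancel₀ (s3_ne (k := k))
    linear_combination this
  have R2 : (X 0 * X 1) ^ (6 * q) * s3 * r1 ^ 2 = (s3 * X 1 ^ (6 * q) * N ^ 2 + X 0 * X 1 ^ (8 * q - 2)) * X 0 ^ (8 * q)
      + (s3 * X 0 ^ (6 * q) * N' ^ 2 + X 1 * X 0 ^ (8 * q - 2)) * X 1 ^ (8 * q) := by
    have hd := hS.decomp
    rw [← hq] at hd
    obtain ⟨q', rfl⟩ : ∃ q', q = q' + 1 := ⟨q - 1, by omega⟩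
    rw [hd]
    rw [show q' + 1 - 1 = q' by omega, show 8 * (q' + 1) - 2 = 8 * q' + 6 by omega]
    simp only [CharTwo.add_sq, s3]
    ring
  have R3 := z_pow' t F z hz (j + 3)
  rw [hQ'] at R3
  have R4 : (F (X 0) ^ 3 * F (X 1) ^ 3) ^ (2 * q) = u ^ (2 * q) * F (X 0) ^ (8 * q) + v ^ (2 * q) * F (X 1) ^ (8 * q) + w ^ (2 * q) * z ^ (8 * q) := by
    rw [hf, show 2 * q = 2 ^ (j + 1) by rw [hq]; ring, add_pow_char_pow, add_pow_char_pow]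
    simp only [mul_pow, ← pow_mul]
    rw [show 4 * 2 ^ (j + 1) = 8 * q by rw [hq]; ring]
  have R1 := congrArg F R1
  have R2 := congrArg F R2
  simp only [map_add, map_mul, map_pow] at R1 R2
  have rel : F (X 0) ^ (8 * q) * L = F (X 1) ^ (8 * q) * L' := by
    rw [hL, hL']
    simp only [map_add, map_mul, map_pow]
    have R4' : (F (X 0) * F (X 1)) ^ (6 * q) = (F (X 0) ^ 3 * F (X 1) ^ 3) ^ (2 * q) := by
      rw [← mul_pow, ← pow_mul]; congr 1; ring
    rw [R4', R4] at R2
    generalize F (X 0) ^ (8 * q) = xP at *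
    generalize F (X 1) ^ (8 * q) = yP at *
    generalize z ^ (8 * q) = zP at *
    linear_combination (norm := (ring_nf; simp only [two, mul_zero, neg_zero, add_zero, sub_zero])) R2 + w ^ (2 * q) * F r1 ^ 2 * R3 + w ^ (2 * q) * R1
  have hy : F (X 1) ^ (8 * q) ≠ 0 := pow_ne_zero _ (by rw [Ne, map_eq_zero_iff _ hF]; exact X_ne_zero 1)
  have e1 : L / F (X 1) ^ (8 * q) * F (X 1) ^ (8 * q) = L := div_mul_cancel₀ _ hy
  have e0 : L / F (X 1) ^ (8 * q) * F (X 0) ^ (8 * q) = L' := by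
    rw [div_mul_eq_mul_div, div_eq_iff hy]; linear_combination rel
  have hcast : (((8 * q - 1 : ℕ)) : ℤ) = 8 * q - 1 := by omega
  have := HI_zero hF (b := L / F (X 1) ^ (8 * q)) (8 * q) (8 * q - 1) (by omega) (by rw [e0, hcast]; exact H2) (by rw [e1, hcast]; exact H1)
  rw [← e1, this, zero_mul]
end
end BM

namespace BM
section
variable {k Ω : Type*} [Field k] [CharP k 2] [Field Ω] [CharP Ω 2]

lemma AddEq.sep {F : A2 k →+* Ω} {E : Type*} [Field E] [Algebra (A2 k) E] [Algebra E Ω] [CharP E 2]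
    (hE : ∀ p, algebraMap E Ω (algebraMap (A2 k) E p) = F p) {e j : ℕ} (hej : e ≤ j) {b : Ω} (h : AddEq F e b) :
    b ^ (2 ^ j) ∈ separableClosure E Ω := by
  obtain ⟨s, -, hs⟩ := h
  have := sep_pow (E := E) e b (fun i => algebraMap (A2 k) E (s i)) (by simp only [hE]; exact hs)
  obtain ⟨d, rfl⟩ := Nat.exists_eq_add_of_le hej
  rw [pow_add, pow_mul]
  exact pow_mem this _

theorem theoremN [Finite k] (F : A2 k →+* Ω) (hF : Function.Injective F) {t : k} {z u v w : Ω}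
    (hz : z ^ 4 + F (X 0) * F (X 1) * z ^ 2 + F (X 0) ^ 3 * z + F (X 1) ^ 3 * z
      + F (C t) * F (X 0) ^ 2 * F (X 1) ^ 2 = 0)
    (hf : F (X 0) ^ 3 * F (X 1) ^ 3 = u * F (X 0) ^ 4 + v * F (X 1) ^ 4 + w * z ^ 4)
    {e eu ev ew : ℕ} (hu : AddEq F eu u) (hv : AddEq F ev v) (hw : AddEq F ew w)
    (heu : eu ≤ e) (hew : ew ≤ e)
    (hg : ∀ i, 3 ≤ i → i ≤ e + 3 → gg t i ≠ 0) : False := by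
  have two : (2 : Ω) = 0 := CharTwo.two_eq_zero
  obtain ⟨j, hej, hgj, hmin⟩ := gg_return t e hg
  obtain ⟨r1, a1, r2, a2, N, N', hS⟩ := syz_exists (t := t) j (fun i h1 h2 => hmin i h1 (by omega))
  obtain ⟨U', hU, hU'⟩ := W.div_s3 (UU_W (t := t) hS.hr1 hS.ha1 (by ring)) (by
    simpa [UU, hS.ev_a1, hS.ev1, gg] using hgj)
  set q := 2 ^ j with hq
  have q1 : 1 ≤ q := by rw [hq]; exact Nat.one_le_two_pow
  have hL := theoremN_L F hF hz hf hu.HI hv.HI hw.HI hq hS hU (hU'.hg.cast (by rw [hq]; push_cast; ring))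
  obtain ⟨s, hs⟩ := FiniteField.isSquare_of_char_two (F := k) (by exact (CharP.eq k (ringChar.charP k) inferInstance)) t
  obtain ⟨α, β, γ, hρ⟩ := ll_sq_id F (s := s) (by rw [hs]; ring) hz (j + 3)
  set θ := u ^ q * F (s3 * r1) + w ^ q * (F r1 * (F α * z + F β * z ^ 2 + F γ) + F (a1 + C s * X 0 * X 1 * ll (j + 2) * r1))
    + F (s3 * X 1 ^ (3 * q) * N) with hθ
  have hy : F (X 1) ≠ 0 := by rw [Ne, map_eq_zero_iff _ hF]; exact X_ne_zero 1
  have hθ2 : θ ^ 2 = F s3 * F (X 0) * (F (X 1) ^ (4 * q - 1)) ^ 2 := by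
    have hU := congrArg F hU
    have e1 : (F (X 1) ^ (4 * q - 1)) ^ 2 = F (X 1) ^ (8 * q - 2) := by
      rw [← pow_mul]; congr 1; omega
    rw [e1, hθ]
    simp only [UU, map_add, map_mul, map_pow, hs, CharTwo.add_sq] at hL hU hρ ⊢
    linear_combination (norm := (ring_nf; simp only [two, mul_zero, neg_zero, add_zero, sub_zero])) F s3 * hL + w ^ (2 * q) * hU + w ^ (2 * q) * F r1 ^ 2 * hρ
  -- field theory
  let E := FractionRing (A2 k)
  letI : Algebra E Ω := (IsFractionRing.lift (K := E) hF).toAlgebra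
  have hE : ∀ p, algebraMap E Ω (algebraMap (A2 k) E p) = F p := fun p => IsFractionRing.lift_algebraMap hF p
  haveI : CharP E 2 := charP_of_injective_algebraMap (IsFractionRing.injective (A2 k) E) 2
  let M := separableClosure E Ω
  have hFM : ∀ p, F p ∈ M := fun p => by rw [← hE]; exact algebraMap_mem M _
  have hzM : z ∈ M := by
    have two1 : (2 : Polynomial E) = 0 := CharTwo.two_eq_zero
    change z ∈ separableClosure E Ω
    rw [mem_separableClosure_iff]
    let a := algebraMap (A2 k) E
    let p : Polynomial E := Polynomial.X ^ 4 + Polynomial.C (a (X 0 * X 1)) * Polynomial.X ^ 2 + Polynomial.C (a s3) * Polynomial.X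
      + Polynomial.C (a (C t * X 0 ^ 2 * X 1 ^ 2))
    have ha0 : a s3 ≠ 0 := by rw [Ne, map_eq_zero_iff _ (IsFractionRing.injective (A2 k) E)]; exact s3_ne
    have hd : Polynomial.derivative p = Polynomial.C (a s3) := by
      simp only [p, Polynomial.derivative_add, Polynomial.derivative_X_pow, Polynomial.derivative_C_mul, Polynomial.derivative_X,
        Polynomial.derivative_C, Polynomial.derivative_C]
      have e4 : (Polynomial.C ((4 : ℕ) : E)) = 0 := by
        rw [show (4 : ℕ) = 2 * 2 by norm_num, Nat.cast_mul, Nat.cast_two, CharTwo.two_eq_zero (R := E)]; simp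
      have e2 : (Polynomial.C ((2 : ℕ) : E)) = 0 := by
        push_cast; rw [CharTwo.two_eq_zero (R := E)]; simp
      rw [e4, e2]; simp
    have hsep : p.Separable := by
      refine ⟨0, Polynomial.C (a s3)⁻¹, ?_⟩
      rw [hd, zero_mul, zero_add, ← map_mul, inv_mul_cancel₀ ha0, map_one]
    refine hsep.of_dvd (minpoly.dvd E z ?_)
    simp only [p, a, map_add, map_mul, map_pow, Polynomial.aeval_X, Polynomial.aeval_C, hE, s3]
    linear_combination hz
  have huM : u ^ q ∈ M := hu.sep hE (by omega)
  have hwM : w ^ q ∈ M := hw.sep hE (by omega)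
  have hθM : θ ∈ M := by
    refine add_mem (add_mem (mul_mem huM (hFM _)) (mul_mem hwM (add_mem (mul_mem (hFM _) ?_) (hFM _)))) (hFM _)
    exact add_mem (add_mem (mul_mem (hFM _) hzM) (mul_mem (hFM _) (pow_mem hzM 2))) (hFM _)
  have hθ'M : θ / F (X 1) ^ (4 * q - 1) ∈ M := div_mem hθM (pow_mem (hFM _) _)
  have hθ'2 : (θ / F (X 1) ^ (4 * q - 1)) ^ 2 = algebraMap E Ω (algebraMap (A2 k) E (s3 * X 0)) := by
    rw [div_pow, hθ2, hE, map_mul, mul_div_assoc, div_self (pow_ne_zero _ (pow_ne_zero _ hy)), mul_one]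
  have hbot : θ / F (X 1) ^ (4 * q - 1) ∈ (⊥ : IntermediateField E Ω) := by
    rw [← separableClosure_inf_perfectClosure]
    refine ⟨hθ'M, ?_⟩
    haveI : ExpChar E 2 := .prime Nat.prime_two
    rw [SetLike.mem_coe, mem_perfectClosure_iff_pow_mem 2]
    exact ⟨1, by rw [pow_one, hθ'2]; exact ⟨_, rfl⟩⟩
  obtain ⟨e', he'⟩ := IntermediateField.mem_bot.1 hbot
  rw [← he', ← map_pow] at hθ'2
  have h3 := (algebraMap E Ω).injective hθ'2
  obtain ⟨p, r, hr, rfl⟩ := IsFractionRing.div_surjective (A := A2 k) e'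
  have hr0 : r ≠ 0 := nonZeroDivisors.ne_zero hr
  rw [div_pow, div_eq_iff (pow_ne_zero _ (by rw [Ne, map_eq_zero_iff _ (IsFractionRing.injective (A2 k) E)]; exact hr0)), ← map_pow, ← map_pow, ← map_mul] at h3
  have h3 := IsFractionRing.injective (A2 k) E h3
  have h4 := congrArg (pderiv 0) h3
  have two' : (2 : A2 k) = 0 := two_eq
  simp only [Derivation.leibniz, Derivation.leibniz_pow, smul_eq_mul, s3, map_add, pderiv_X_self, nsmul_eq_mul] at h4
  simp [two'] at h4
  rcases h4 with h4 | h4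
  · exact hr0 h4
  · have : (X 1 : A2 k) ^ 3 = 0 := by linear_combination h4 - 2 * X 0 ^ 3 * two'
    exact pow_ne_zero 3 (X_ne_zero 1) this
end
end BM

namespace BM
section
lemma lying_over {P B : Type*} {G : Type u} [CommRing P] [CommRing G] [Algebra P G] [Algebra.IsIntegral P G] [CommRing B] [IsDomain B]
    (hinj : Function.Injective (algebraMap P G)) (π : P →+* B) (hπ : Function.Surjective π) :
    ∃ (Ω : Type u) (_ : Field Ω) (γ : G →+* Ω) (F : B →+* Ω), Function.Injective F ∧
      ∀ p, F (π p) = γ (algebraMap P G p) := by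
  haveI : (RingHom.ker π).IsPrime := RingHom.ker_isPrime π
  obtain ⟨Q, -, hQ, hQc⟩ := Ideal.exists_ideal_over_prime_of_isIntegral (S := G) (RingHom.ker π) ⊥ (by
    rw [← RingHom.ker_eq_comap_bot, (RingHom.injective_iff_ker_eq_bot _).1 hinj]; exact bot_le)
  have hmem : ∀ p, algebraMap P G p ∈ Q ↔ π p = 0 := by
    intro p
    rw [← Ideal.mem_comap, hQc, RingHom.mem_ker]
  let ψ : P →+* G ⧸ Q := (Ideal.Quotient.mk Q).comp (algebraMap P G)
  let F := RingHom.liftOfSurjective π hπ ⟨ψ, fun p hp => by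
    rw [RingHom.mem_ker] at hp ⊢
    exact Ideal.Quotient.eq_zero_iff_mem.2 ((hmem p).2 hp)⟩
  have hF : ∀ p, F (π p) = Ideal.Quotient.mk Q (algebraMap P G p) := fun p =>
    RingHom.liftOfRightInverse_comp_apply π _ _ _ p
  refine ⟨FractionRing (G ⧸ Q), inferInstance, (algebraMap (G ⧸ Q) _).comp (Ideal.Quotient.mk Q), (algebraMap (G ⧸ Q) _).comp F, ?_, ?_⟩
  · refine (IsFractionRing.injective (G ⧸ Q) _).comp ?_
    rw [injective_iff_map_eq_zero]
    intro b hb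
    obtain ⟨p, rfl⟩ := hπ b
    rw [hF, Ideal.Quotient.eq_zero_iff_mem, hmem] at hb
    exact hb
  · intro p
    rw [RingHom.comp_apply, hF]; rfl

lemma finite_residue {κ : Type*} [Field κ] [Algebra (ZMod 2) κ] {B : Set κ} (hB : B.Finite) :
    ∃ n : Ideal (Algebra.adjoin (ZMod 2) B), n.IsMaximal ∧ Finite (Algebra.adjoin (ZMod 2) B ⧸ n) := by
  obtain ⟨n, hn⟩ := Ideal.exists_maximal (Algebra.adjoin (ZMod 2) B)
  refine ⟨n, hn, ?_⟩
  haveI : Algebra.FiniteType (ZMod 2) (Algebra.adjoin (ZMod 2) B) :=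
    Subalgebra.fg_iff_finiteType _ |>.1 ⟨hB.toFinset, by simp⟩
  letI := Ideal.Quotient.field n
  haveI : Algebra.FiniteType (ZMod 2) (Algebra.adjoin (ZMod 2) B ⧸ n) := inferInstance
  haveI : Module.Finite (ZMod 2) (Algebra.adjoin (ZMod 2) B ⧸ n) := finite_of_finite_type_of_isJacobsonRing _ _
  exact Module.finite_of_finite (ZMod 2)
end
end BM

namespace BM
section
variable {κ D0 κ₀ : Type*} [Field κ] [CommRing D0] [Field κ₀] (ι : D0 →+* κ) (mk : D0 →+* κ₀)

/-- power series with constant term defined over `D0` -/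
noncomputable def PP : Subring (PowerSeries (A2 κ)) :=
  (MvPolynomial.map ι : MvPolynomial (Fin 2) D0 →+* A2 κ).range.comap (PowerSeries.constantCoeff (R := A2 κ))

variable {ι} in
lemma exists_pi (hι : Function.Injective ι) (hmk : Function.Surjective mk) :
    ∃ π : PP ι →+* A2 κ₀, Function.Surjective π ∧ ∀ (p : PP ι) (f : MvPolynomial (Fin 2) D0),
      PowerSeries.constantCoeff p.1 = MvPolynomial.map ι f → π p = MvPolynomial.map mk f := by
  have hb : Function.Bijective (MvPolynomial.map ι : MvPolynomial (Fin 2) D0 →+* A2 κ).rangeRestrict := by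
    refine ⟨fun a b h => MvPolynomial.map_injective ι hι (congrArg Subtype.val h), RingHom.rangeRestrict_surjective _⟩
  let r := RingEquiv.ofBijective _ hb
  let c : PP ι →+* (MvPolynomial.map ι : MvPolynomial (Fin 2) D0 →+* A2 κ).range :=
    RingHom.restrict (PowerSeries.constantCoeff (R := A2 κ)) (PP ι) _ (fun x hx => hx)
  let π : PP ι →+* A2 κ₀ := (MvPolynomial.map mk).comp ((r.symm : _ →+* _).comp c)
  have hπ : ∀ (p : PP ι) (f : MvPolynomial (Fin 2) D0),
      PowerSeries.constantCoeff p.1 = MvPolynomial.map ι f → π p = MvPolynomial.map mk f := by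
    intro p f h
    have : c p = r f := Subtype.ext h
    change MvPolynomial.map mk (r.symm (c p)) = _
    rw [this, RingEquiv.symm_apply_apply]
  refine ⟨π, ?_, hπ⟩
  intro g
  obtain ⟨f, rfl⟩ := MvPolynomial.map_surjective mk hmk g
  exact ⟨⟨PowerSeries.C (MvPolynomial.map ι f), ⟨f, by simp⟩⟩, hπ _ _ (by simp)⟩

/-- additive equation over power series -/
def PSEq {E : Type*} [Field E] (ι2 : PowerSeries (A2 κ) →+* E) (e : ℕ) (σ : ℕ → PowerSeries (A2 κ)) (b : E) : Prop :=
  (∀ j < e, Hg (PowerSeries.constantCoeff (σ j)) (2 * (2 ^ e - 2 ^ j))) ∧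
  b ^ (2 ^ e) = ∑ j ∈ Finset.range e, ι2 (σ j) * b ^ (2 ^ j)

lemma gg_map [CharP κ 2] [CharP κ₀ 2] (t0 : D0) (i : ℕ) : ∃ d, ι d = gg (ι t0) i ∧ mk d = gg (mk t0) i := by
  match i with
  | 0 => exact ⟨0, by simp [gg]⟩
  | 1 => exact ⟨0, by simp [gg]⟩
  | n + 2 =>
    obtain ⟨d, h1, h2⟩ := gg_map t0 (n + 1)
    exact ⟨d ^ 2 + t0, by simp [gg, h1], by simp [gg, h2]⟩

theorem lemmaR [CharP κ 2] {t : κ} (hg : ∀ i, 3 ≤ i → gg t i ≠ 0) {E : Type*} [Field E] (ι2 : PowerSeries (A2 κ) →+* E)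
    (hι2 : Function.Injective ι2) {z u v w x y : E} (hx : x = ι2 (PowerSeries.C (X 0))) (hy : y = ι2 (PowerSeries.C (X 1)))
    (hz : z ^ 4 + x * y * z ^ 2 + x ^ 3 * z + y ^ 3 * z + ι2 (PowerSeries.C (C t)) * x ^ 2 * y ^ 2 = 0)
    (hf : x ^ 3 * y ^ 3 = u * x ^ 4 + v * y ^ 4 + w * z ^ 4)
    {eu ev ew : ℕ} {σu σv σw : ℕ → PowerSeries (A2 κ)}
    (hu : PSEq ι2 eu σu u) (hv : PSEq ι2 ev σv v) (hw : PSEq ι2 ew σw w) : False := by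
  classical
  letI : Algebra (ZMod 2) κ := ZMod.algebra κ 2
  set e := max eu ew
  let cf : (ℕ → PowerSeries (A2 κ)) → ℕ → Set κ := fun σ e =>
    ⋃ j ∈ Finset.range e, ((PowerSeries.constantCoeff (σ j)).coeffs : Set κ)
  let B : Set κ := {t} ∪ cf σu eu ∪ cf σv ev ∪ cf σw ew ∪ ((fun i => (gg t i)⁻¹) '' (Finset.range (e + 4) : Set ℕ))
  have hcf : ∀ σ e, (cf σ e).Finite := fun σ e => (Finset.finite_toSet _).biUnion fun j _ => Finset.finite_toSet _
  have hB : B.Finite := ((((Set.finite_singleton t).union (hcf _ _)).union (hcf _ _)).union (hcf _ _)).union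
    ((Finset.finite_toSet _).image _)
  obtain ⟨n, hn, hfin⟩ := finite_residue hB
  let D0 := Algebra.adjoin (ZMod 2) B
  letI := Ideal.Quotient.field n
  have hBD : B ⊆ D0 := Algebra.subset_adjoin
  let ι : D0 →+* κ := D0.val
  let mk : D0 →+* D0 ⧸ n := Ideal.Quotient.mk n
  haveI : CharP (D0 ⧸ n) 2 := charP_of_injective_algebraMap (algebraMap (ZMod 2) (D0 ⧸ n)).injective 2
  obtain ⟨π, hπs, hπ⟩ := exists_pi (ι := ι) mk Subtype.val_injective Ideal.Quotient.mk_surjective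
  letI : Algebra (PP ι) E := (ι2.comp (PP ι).subtype).toAlgebra
  have hal : ∀ p : PP ι, algebraMap (PP ι) E p = ι2 p.1 := fun p => rfl
  obtain ⟨Ω, _, γ, F, hF, hFπ⟩ := lying_over (P := PP ι) (G := integralClosure (PP ι) E) (fun a b h => by
    have h1 : algebraMap (PP ι) E a = algebraMap (PP ι) E b := congrArg Subtype.val h
    exact Subtype.val_injective (hι2 h1)) π hπs
  haveI : CharP (A2 (D0 ⧸ n)) 2 := inferInstance
  haveI : CharP Ω 2 := charP_of_injective_ringHom hF 2
  have hred : ∀ b e σ, cf σ e ⊆ B → PSEq ι2 e σ b → ∃ hb : b ∈ integralClosure (PP ι) E, AddEq F e (γ ⟨b, hb⟩) := by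
    intro b e σ hσB h
    obtain ⟨hh, heq⟩ := h
    have hmem : ∀ j < e, ∃ f : MvPolynomial (Fin 2) D0, MvPolynomial.map ι f = PowerSeries.constantCoeff (σ j) := by
      intro j hj
      have := (mem_range_map_iff_coeffs_subset (f := ι) (x := PowerSeries.constantCoeff (σ j))).2 (by
        intro c hc
        have : c ∈ cf σ e := Set.mem_biUnion (by simpa using hj) hc
        exact ⟨⟨c, hBD (hσB this)⟩, rfl⟩)
      exact this
    let σ' : ℕ → PP ι := fun j => if h : j < e then ⟨σ j, hmem j h⟩ else 0
    have hσ' : ∀ j < e, (σ' j).1 = σ j := fun j hj => by simp [σ', hj]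
    have heq' : b ^ (2 ^ e) = ∑ j ∈ Finset.range e, σ' j • b ^ (2 ^ j) := by
      rw [heq]
      refine Finset.sum_congr rfl fun j hj => ?_
      rw [Algebra.smul_def, hal, hσ' j (Finset.mem_range.1 hj)]
    have hb : b ∈ integralClosure (PP ι) E := stab_integral heq'
    refine ⟨hb, fun j => π (σ' j), ?_, ?_⟩
    · intro j hj
      obtain ⟨f, hf⟩ := hmem j hj
      beta_reduce
      rw [hπ (σ' j) f (by rw [hσ' j hj, hf])]
      have h1 := Hg_iff.1 (hh j hj)
      rw [Hg_iff]
      intro m hm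
      apply h1 m
      rw [← hf, coeff_map]
      intro h0
      have h0' : coeff m f = 0 := Subtype.val_injective h0
      rw [coeff_map, h0', map_zero] at hm
      exact hm rfl
    · have : (⟨b, hb⟩ : integralClosure (PP ι) E) ^ (2 ^ e) = ∑ j ∈ Finset.range e, algebraMap (PP ι) (integralClosure (PP ι) E) (σ' j) * ⟨b, hb⟩ ^ (2 ^ j) := by
        apply Subtype.ext
        simp only [Algebra.smul_def] at heq'
        push_cast
        exact heq'
      rw [← map_pow, this, map_sum]
      refine Finset.sum_congr rfl fun j hj => ?_
      rw [map_mul, map_pow, hFπ]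
  obtain ⟨hbu, hu'⟩ := hred u eu σu (fun c hc => by simp [B, hc]) hu
  obtain ⟨hbv, hv'⟩ := hred v ev σv (fun c hc => by simp [B, hc]) hv
  obtain ⟨hbw, hw'⟩ := hred w ew σw (fun c hc => by simp [B, hc]) hw
  let t0 : D0 := ⟨t, hBD (by simp [B])⟩
  have hC : ∀ f : MvPolynomial (Fin 2) D0, ∃ p : PP ι, algebraMap (PP ι) E p = ι2 (PowerSeries.C (MvPolynomial.map ι f)) ∧ π p = MvPolynomial.map mk f := by
    intro f
    exact ⟨⟨PowerSeries.C (MvPolynomial.map ι f), ⟨f, by simp⟩⟩, rfl, hπ _ _ (by simp)⟩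
  obtain ⟨xp, hxp, hxπ⟩ := hC (X 0)
  obtain ⟨yp, hyp, hyπ⟩ := hC (X 1)
  obtain ⟨tp, htp, htπ⟩ := hC (C t0)
  rw [map_X] at hxp hxπ hyp hyπ
  rw [map_C] at htp htπ
  rw [← hx] at hxp
  rw [← hy] at hyp
  have ht0 : ι t0 = t := rfl
  rw [ht0] at htp
  rw [← htp, ← hxp, ← hyp] at hz
  have hzint : z ∈ integralClosure (PP ι) E := by
    refine ⟨Polynomial.X ^ 4 + (Polynomial.C (xp * yp) * Polynomial.X ^ 2 + Polynomial.C (xp ^ 3 + yp ^ 3) * Polynomial.X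
      + Polynomial.C (tp * xp ^ 2 * yp ^ 2)), ?_, ?_⟩
    · apply Polynomial.monic_X_pow_add
      refine lt_of_le_of_lt (b := ((2 : ℕ) : WithBot ℕ)) ?_ (by norm_num)
      compute_degree
      exact le_rfl
    · simp only [Polynomial.eval₂_add, Polynomial.eval₂_mul, Polynomial.eval₂_pow, Polynomial.eval₂_X, Polynomial.eval₂_C, map_add, map_mul, map_pow]
      linear_combination hz
  let al := algebraMap (PP ι) (integralClosure (PP ι) E)
  have hz' : (⟨z, hzint⟩ : integralClosure (PP ι) E) ^ 4 + al xp * al yp * ⟨z, hzint⟩ ^ 2 + al xp ^ 3 * ⟨z, hzint⟩ + al yp ^ 3 * ⟨z, hzint⟩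
      + al tp * al xp ^ 2 * al yp ^ 2 = 0 := by
    apply Subtype.ext
    exact hz
  have hf' : al xp ^ 3 * al yp ^ 3 = (⟨u, hbu⟩ : integralClosure (PP ι) E) * al xp ^ 4 + ⟨v, hbv⟩ * al yp ^ 4 + ⟨w, hbw⟩ * ⟨z, hzint⟩ ^ 4 := by
    apply Subtype.ext
    rw [← hxp, ← hyp] at hf
    exact hf
  have hz' := congrArg γ hz'
  have hf' := congrArg γ hf'
  simp only [map_add, map_mul, map_pow, map_zero, al, ← hFπ, hxπ, hyπ, htπ] at hz' hf'
  refine theoremN F hF hz' hf' hu' hv' hw' (le_max_left eu ew) (le_max_right eu ew) ?_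
  intro i h3 hi h0
  obtain ⟨d, h1, h2⟩ := gg_map ι mk t0 i
  have hm : (gg t i)⁻¹ ∈ D0 := hBD (by
    refine Or.inr ⟨i, ?_, rfl⟩
    simp only [Finset.coe_range, Set.mem_Iio]; omega)
  have h4 : d * ⟨_, hm⟩ = 1 := by
    apply Subtype.ext
    change ι d * (gg t i)⁻¹ = 1
    rw [h1]
    exact mul_inv_cancel₀ (hg i h3)
  have h5 := congrArg mk h4
  rw [map_mul, h2, map_one] at h5
  rw [h0, zero_mul] at h5
  exact zero_ne_one h5
end
end BM

namespace BM
section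
variable {κ : Type*} [Field κ]

/-- homogeneous component of a power series, as a polynomial -/
noncomputable def hcomp (n : ℕ) (a : MvPowerSeries (Fin 2) κ) : A2 κ := homogeneousComponent n (MvPowerSeries.truncTotal (n + 1) a)

lemma coeff_hcomp (n : ℕ) (a : MvPowerSeries (Fin 2) κ) (m : Fin 2 →₀ ℕ) :
    coeff m (hcomp n a) = if m.degree = n then MvPowerSeries.coeff m a else 0 := by
  rw [hcomp, coeff_homogeneousComponent]
  split_ifs with h
  · rw [MvPowerSeries.coeff_truncTotal _ (by omega)]
  · rfl

lemma deg_eq (m : Fin 2 →₀ ℕ) : m.degree = m 0 + m 1 := by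
  rw [Finsupp.degree_eq_sum]; simp [Fin.sum_univ_two]

lemma Hg_hcomp (n : ℕ) (a : MvPowerSeries (Fin 2) κ) : Hg (hcomp n a) n := by
  rw [Hg_iff]
  intro m hm
  rw [coeff_hcomp] at hm
  split_ifs at hm with h
  · rw [deg_eq] at h
    exact_mod_cast h
  · exact absurd rfl hm

lemma hcomp_mul (n : ℕ) (a b : MvPowerSeries (Fin 2) κ) :
    hcomp n (a * b) = ∑ p ∈ Finset.HasAntidiagonal.antidiagonal n, hcomp p.1 a * hcomp p.2 b := by
  classical
  ext m
  rw [coeff_hcomp, coeff_sum]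
  simp only [coeff_mul, coeff_hcomp]
  rw [Finset.sum_comm]
  have h1 : ∀ q ∈ Finset.HasAntidiagonal.antidiagonal m, (∑ p ∈ Finset.HasAntidiagonal.antidiagonal n, (if q.1.degree = p.1 then MvPowerSeries.coeff q.1 a else 0) *
      (if q.2.degree = p.2 then MvPowerSeries.coeff q.2 b else 0)) = if m.degree = n then MvPowerSeries.coeff q.1 a * MvPowerSeries.coeff q.2 b else 0 := by
    intro q hq
    have hd : q.1.degree + q.2.degree = m.degree := by
      rw [← Finset.HasAntidiagonal.mem_antidiagonal.1 hq, map_add]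
    split_ifs with h
    · rw [Finset.sum_eq_single (q.1.degree, q.2.degree)]
      · simp
      · intro p hp hne
        by_cases h1 : q.1.degree = p.1
        · by_cases h2 : q.2.degree = p.2
          · exact absurd (Prod.ext h1.symm h2.symm) hne
          · simp [h2]
        · simp [h1]
      · intro hnot
        exact absurd (Finset.HasAntidiagonal.mem_antidiagonal.2 (by simp [hd, h])) hnot
    · refine Finset.sum_eq_zero fun p hp => ?_
      have := Finset.HasAntidiagonal.mem_antidiagonal.1 hp
      by_cases h1 : q.1.degree = p.1
      · have h2 : q.2.degree ≠ p.2 := by omega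
        simp [h2]
      · simp [h1]
  rw [Finset.sum_congr rfl h1]
  split_ifs with h
  · rw [MvPowerSeries.coeff_mul]
  · simp

/-- the grading homomorphism -/
noncomputable def Lam : MvPowerSeries (Fin 2) κ →+* PowerSeries (A2 κ) where
  toFun a := PowerSeries.mk fun n => hcomp n a
  map_one' := by
    classical
    ext n m
    rw [PowerSeries.coeff_mk, coeff_hcomp, PowerSeries.coeff_one, MvPowerSeries.coeff_one]
    by_cases hm : m = 0
    · subst hm
      by_cases hn : n = 0
      · subst hn; simp
      · have : ¬ (0 = n) := fun h => hn h.symm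
        simp [hn, this]
    · have : ¬ (0 = m) := fun h => hm h.symm
      split_ifs <;> simp [coeff_one, this]
  map_zero' := by
    ext n m
    rw [PowerSeries.coeff_mk, coeff_hcomp]; simp
  map_add' a b := by
    ext n m
    rw [map_add, PowerSeries.coeff_mk, PowerSeries.coeff_mk, PowerSeries.coeff_mk, coeff_add, coeff_hcomp, coeff_hcomp, coeff_hcomp]
    split_ifs <;> simp
  map_mul' a b := by
    ext1 n
    rw [PowerSeries.coeff_mul]
    simp only [PowerSeries.coeff_mk]
    exact hcomp_mul n a b

lemma coeff_Lam (n : ℕ) (a : MvPowerSeries (Fin 2) κ) : PowerSeries.coeff n (Lam a) = hcomp n a := by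
  change PowerSeries.coeff n (PowerSeries.mk fun n => hcomp n a) = _
  rw [PowerSeries.coeff_mk]

lemma Lam_inj : Function.Injective (Lam (κ := κ)) := by
  intro a b h
  ext m
  have := congrArg (fun p => coeff m (PowerSeries.coeff m.degree p)) h
  simpa [coeff_Lam, coeff_hcomp] using this

lemma Lam_X (i : Fin 2) : Lam (MvPowerSeries.X i : MvPowerSeries (Fin 2) κ) = PowerSeries.C (X i) * PowerSeries.X := by
  classical
  ext n m
  rw [coeff_Lam, coeff_hcomp, PowerSeries.coeff_C_mul, PowerSeries.coeff_X, MvPowerSeries.coeff_X]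
  by_cases hm : m = Finsupp.single i 1
  · subst hm
    by_cases hn : n = 1
    · subst hn; simp
    · have : ¬ (1 = n) := fun h => hn h.symm
      simp [hn, this]
  · have : ¬ (Finsupp.single i 1 = m) := fun h => hm h.symm
    by_cases hn : n = 1
    · simp [hm, hn, coeff_X, this]
    · simp [hm, hn]

lemma Lam_C (c : κ) : Lam (MvPowerSeries.C c : MvPowerSeries (Fin 2) κ) = PowerSeries.C (C c) := by
  classical
  ext n m
  rw [coeff_Lam, coeff_hcomp, PowerSeries.coeff_C, MvPowerSeries.coeff_C]
  by_cases hm : m = 0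
  · subst hm
    by_cases hn : n = 0
    · subst hn; simp
    · have : ¬ (0 = n) := fun h => hn h.symm
      simp [hn, this]
  · have : ¬ (0 = m) := fun h => hm h.symm
    by_cases hn : n = 0
    · simp [hm, hn, coeff_C, this]
    · simp [hm, hn]

lemma Lam_pow {a : MvPowerSeries (Fin 2) κ} {d : ℕ} (h : a ∈ (Ideal.span {MvPowerSeries.X 0, MvPowerSeries.X 1} : Ideal (MvPowerSeries (Fin 2) κ)) ^ d) :
    ∃ σ, Lam a = PowerSeries.X ^ d * σ ∧ Hg (PowerSeries.constantCoeff σ) d := by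
  have h1 : (Ideal.span {MvPowerSeries.X 0, MvPowerSeries.X 1} : Ideal (MvPowerSeries (Fin 2) κ)) ≤
      Ideal.comap Lam (Ideal.span {PowerSeries.X}) := by
    rw [Ideal.span_le]
    rintro x (rfl | rfl)
    · rw [SetLike.mem_coe, Ideal.mem_comap, Lam_X]; exact Ideal.mul_mem_left _ _ (Ideal.mem_span_singleton_self _)
    · rw [SetLike.mem_coe, Ideal.mem_comap, Lam_X]; exact Ideal.mul_mem_left _ _ (Ideal.mem_span_singleton_self _)
  have h2 := (Ideal.le_comap_pow _ d) (Ideal.pow_right_mono h1 d h)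
  rw [Ideal.mem_comap, Ideal.span_singleton_pow, Ideal.mem_span_singleton] at h2
  obtain ⟨σ, hσ⟩ := h2
  refine ⟨σ, hσ, ?_⟩
  have : PowerSeries.constantCoeff σ = hcomp d a := by
    rw [← coeff_Lam, hσ, PowerSeries.coeff_X_pow_mul']; simp
  rw [this]
  exact Hg_hcomp d a

lemma ps_coprime {i j : Fin 2} (hij : i ≠ j) (Q : ℕ) (a b : MvPowerSeries (Fin 2) κ)
    (h : MvPowerSeries.X i ^ Q * a = MvPowerSeries.X j ^ Q * b) : MvPowerSeries.X j ^ Q ∣ a := by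
  rw [MvPowerSeries.X_pow_dvd_iff]
  intro m hm
  have h1 : MvPowerSeries.coeff (Finsupp.single i Q + m) (MvPowerSeries.X j ^ Q * b) = 0 := by
    apply (MvPowerSeries.X_pow_dvd_iff (n := Q) (s := j)).1 (dvd_mul_right _ b)
    simpa [Finsupp.single_apply, hij] using hm
  rw [← h, MvPowerSeries.X_pow_eq, MvPowerSeries.coeff_add_monomial_mul, one_mul] at h1
  exact h1
end
end BM

namespace BM
section
variable {κ : Type*} [Field κ]

lemma PSEq_of {D E : Type*} [CommRing D] [Field E] [Algebra (MvPowerSeries (Fin 2) κ) D]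
    (ι2 : PowerSeries (A2 κ) →+* E) (g : D →+* E)
    (hg : ∀ a, g (algebraMap (MvPowerSeries (Fin 2) κ) D a) = ι2 (Lam a)) (hS : ι2 PowerSeries.X ≠ 0)
    {b : D} {e : ℕ} {s : ℕ → MvPowerSeries (Fin 2) κ}
    (hs : ∀ j < e, s j ∈ (Ideal.span {MvPowerSeries.X 0, MvPowerSeries.X 1} : Ideal (MvPowerSeries (Fin 2) κ)) ^ (2 * (2 ^ e - 2 ^ j)))
    (hb : b ^ (2 ^ e) = ∑ j ∈ Finset.range e, algebraMap (MvPowerSeries (Fin 2) κ) D (s j) * b ^ (2 ^ j)) :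
    ∃ σ, PSEq ι2 e σ (g b / ι2 PowerSeries.X ^ 2) := by
  choose! σ h1 h2 using fun j (hj : j < e) => Lam_pow (hs j hj)
  refine ⟨σ, fun j hj => ?_, ?_⟩
  · have := h2 j hj
    have h3 : 2 ^ j ≤ 2 ^ e := Nat.pow_le_pow_right (by norm_num) hj.le
    push_cast [h3] at this
    exact this
  · have h4 := congrArg g hb
    rw [map_pow, map_sum] at h4
    rw [div_pow, h4, Finset.sum_div]
    refine Finset.sum_congr rfl fun j hj => ?_
    have hj := Finset.mem_range.1 hj
    have h3 : 2 ^ j ≤ 2 ^ e := Nat.pow_le_pow_right (by norm_num) hj.le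
    rw [map_mul, hg, h1 j hj, map_mul, map_pow, map_pow, div_pow, ← pow_mul, ← pow_mul]
    have h5 : 2 * 2 ^ e = 2 * (2 ^ e - 2 ^ j) + 2 * 2 ^ j := by omega
    rw [h5, pow_add]
    field_simp

lemma alg_z {E : Type*} [Field E] {s x y z τ : E} (hs : s ≠ 0)
    (h : z ^ 4 + x * s * (y * s) * z ^ 2 + (x * s) ^ 3 * z + (y * s) ^ 3 * z + τ * (x * s) ^ 2 * (y * s) ^ 2 = 0) :
    (z / s) ^ 4 + x * y * (z / s) ^ 2 + x ^ 3 * (z / s) + y ^ 3 * (z / s) + τ * x ^ 2 * y ^ 2 = 0 := by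
  field_simp
  linear_combination h

lemma alg_f {E : Type*} [Field E] {s x y z u v w : E} (hs : s ≠ 0)
    (h : (x * s) ^ 3 * (y * s) ^ 3 = u * (x * s) ^ 4 + v * (y * s) ^ 4 + w * z ^ 4) :
    x ^ 3 * y ^ 3 = u / s ^ 2 * x ^ 4 + v / s ^ 2 * y ^ 4 + w / s ^ 2 * (z / s) ^ 4 := by
  field_simp
  linear_combination h

/-- Theorem M -/
theorem theoremM [CharP κ 2] {t : κ} (hg : ∀ i, 3 ≤ i → gg t i ≠ 0) {D : Type*} [CommRing D] [IsDomain D]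
    [Algebra (MvPowerSeries (Fin 2) κ) D] [Module.Finite (MvPowerSeries (Fin 2) κ) D]
    (hinj : Function.Injective (algebraMap (MvPowerSeries (Fin 2) κ) D)) {x y z u v w τ : D}
    (hx : x = algebraMap (MvPowerSeries (Fin 2) κ) D (MvPowerSeries.X 0))
    (hy : y = algebraMap (MvPowerSeries (Fin 2) κ) D (MvPowerSeries.X 1))
    (ht : τ = algebraMap (MvPowerSeries (Fin 2) κ) D (MvPowerSeries.C t))
    (hz : z ^ 4 + x * y * z ^ 2 + x ^ 3 * z + y ^ 3 * z + τ * x ^ 2 * y ^ 2 = 0)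
    (hf : x ^ 3 * y ^ 3 = u * x ^ 4 + v * y ^ 4 + w * z ^ 4) : False := by
  let F : A2 κ →+* D := (algebraMap (MvPowerSeries (Fin 2) κ) D).comp MvPolynomial.coeToMvPowerSeries.ringHom
  have hF : Function.Injective F := hinj.comp (MvPolynomial.coe_injective _ _)
  have hF0 : F (X 0) = x := by rw [hx]; simp [F]
  have hF1 : F (X 1) = y := by rw [hy]; simp [F]
  have hFt : F (C t) = τ := by rw [ht]; simp [F]
  haveI : CharP D 2 := by
    haveI : CharP (A2 κ) 2 := inferInstance
    exact charP_of_injective_ringHom hF 2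
  haveI : IsDomain (MvPowerSeries (Fin 2) κ) := hinj.isDomain (algebraMap (MvPowerSeries (Fin 2) κ) D)
  obtain ⟨c, hc, hck⟩ := colon_killer (A := MvPowerSeries (Fin 2) κ) (D := D)
  have hck' : ∀ (i j : Fin 2), i ≠ j → ∀ (Q : ℕ) (a b : D), algebraMap _ D (MvPowerSeries.X i : MvPowerSeries (Fin 2) κ) ^ Q * a = algebraMap _ D (MvPowerSeries.X j : MvPowerSeries (Fin 2) κ) ^ Q * b →
      ∃ e, algebraMap _ D c * a = algebraMap _ D (MvPowerSeries.X j : MvPowerSeries (Fin 2) κ) ^ Q * e := by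
    intro i j hij Q a b hab
    obtain ⟨e, he⟩ := hck (MvPowerSeries.X i ^ Q) (MvPowerSeries.X j ^ Q) (fun a b h => ps_coprime hij Q a b h) a b (by
      rw [Algebra.smul_def, Algebra.smul_def, map_pow, map_pow, hab])
    refine ⟨e, ?_⟩
    rw [Algebra.smul_def, Algebra.smul_def, map_pow] at he
    exact he
  obtain ⟨c1, hc1, H⟩ := step4_all (t := t) F z u v w (algebraMap _ D c) hF (by rw [hF0, hF1, hFt]; exact hz) (by rw [hF0, hF1]; exact hf)
    (by rwa [Ne, map_eq_zero_iff _ hinj]) (by rw [hF0, hF1, hx, hy]; exact hck' 0 1 (by decide)) (by rw [hF0, hF1, hx, hy]; exact hck' 1 0 (by decide)) hg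
  have hI : Ideal.span {F (X 0), F (X 1)} = (Ideal.span {MvPowerSeries.X 0, MvPowerSeries.X 1} : Ideal (MvPowerSeries (Fin 2) κ)).map (algebraMap _ D) := by
    rw [Ideal.map_span, Set.image_pair, hF0, hF1, hx, hy]
  rw [hI] at H
  obtain ⟨eu, su, hsu, hbu⟩ := rees_stab _ c1 u hc1 fun j => (H j).1
  obtain ⟨ev, sv, hsv, hbv⟩ := rees_stab _ c1 v hc1 fun j => (H j).2.1
  obtain ⟨ew, sw, hsw, hbw⟩ := rees_stab _ c1 w hc1 fun j => (H j).2.2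
  let E := AlgebraicClosure (FractionRing (PowerSeries (A2 κ)))
  let ι2 : PowerSeries (A2 κ) →+* E := (algebraMap (FractionRing (PowerSeries (A2 κ))) E).comp (algebraMap _ _)
  have hι2 : Function.Injective ι2 := (algebraMap (FractionRing (PowerSeries (A2 κ))) E).injective.comp (IsFractionRing.injective _ _)
  letI : Algebra (MvPowerSeries (Fin 2) κ) E := (ι2.comp Lam).toAlgebra
  have hE : Function.Injective (algebraMap (MvPowerSeries (Fin 2) κ) E) := hι2.comp Lam_inj
  haveI : FaithfulSMul (MvPowerSeries (Fin 2) κ) E := (faithfulSMul_iff_algebraMap_injective _ _).2 hE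
  haveI : FaithfulSMul (MvPowerSeries (Fin 2) κ) D := (faithfulSMul_iff_algebraMap_injective _ _).2 hinj
  haveI : Algebra.IsAlgebraic (MvPowerSeries (Fin 2) κ) D := inferInstance
  let g : D →ₐ[MvPowerSeries (Fin 2) κ] E := IsAlgClosed.lift
  have hgg : ∀ a, (g : D →+* E) (algebraMap (MvPowerSeries (Fin 2) κ) D a) = ι2 (Lam a) := fun a => g.commutes a
  have hS : ι2 PowerSeries.X ≠ 0 := by rw [Ne, map_eq_zero_iff _ hι2]; exact PowerSeries.X_ne_zero
  obtain ⟨σu, Hu⟩ := PSEq_of ι2 (g : D →+* E) hgg hS hsu hbu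
  obtain ⟨σv, Hv⟩ := PSEq_of ι2 (g : D →+* E) hgg hS hsv hbv
  obtain ⟨σw, Hw⟩ := PSEq_of ι2 (g : D →+* E) hgg hS hsw hbw
  have gx : (g : D →+* E) x = ι2 (PowerSeries.C (X 0)) * ι2 PowerSeries.X := by rw [hx, hgg, Lam_X, map_mul]
  have gy : (g : D →+* E) y = ι2 (PowerSeries.C (X 1)) * ι2 PowerSeries.X := by rw [hy, hgg, Lam_X, map_mul]
  have gt : (g : D →+* E) τ = ι2 (PowerSeries.C (C t)) := by rw [ht, hgg, Lam_C]
  have hz' := congrArg (g : D →+* E) hz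
  have hf' := congrArg (g : D →+* E) hf
  simp only [map_add, map_mul, map_pow, map_zero, gx, gy, gt] at hz' hf'
  exact lemmaR hg ι2 hι2 (z := (g : D →+* E) z / ι2 PowerSeries.X) rfl rfl (alg_z hS hz') (alg_f hS hf') Hu Hv Hw
end
end BM

namespace BM
section
/-- adjoining a square root of an element of a subring, characteristic two -/
def adjSq {A : Type*} [CommRing A] (L : Subring A) (a : A) (ha : a ^ 2 ∈ L) : Subring A where
  carrier := {b | ∃ l1 ∈ L, ∃ l2 ∈ L, b = l1 + l2 * a}
  mul_mem' := by
    rintro _ _ ⟨l1, h1, l2, h2, rfl⟩ ⟨l3, h3, l4, h4, rfl⟩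
    exact ⟨l1 * l3 + l2 * l4 * a ^ 2, L.add_mem (L.mul_mem h1 h3) (L.mul_mem (L.mul_mem h2 h4) ha),
      l1 * l4 + l2 * l3, L.add_mem (L.mul_mem h1 h4) (L.mul_mem h2 h3), by ring⟩
  one_mem' := ⟨1, L.one_mem, 0, L.zero_mem, by ring⟩
  add_mem' := by
    rintro _ _ ⟨l1, h1, l2, h2, rfl⟩ ⟨l3, h3, l4, h4, rfl⟩
    exact ⟨l1 + l3, L.add_mem h1 h3, l2 + l4, L.add_mem h2 h4, by ring⟩
  zero_mem' := ⟨0, L.zero_mem, 0, L.zero_mem, by ring⟩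
  neg_mem' := by
    rintro _ ⟨l1, h1, l2, h2, rfl⟩
    exact ⟨-l1, L.neg_mem h1, -l2, L.neg_mem h2, by ring⟩

lemma coef_section {A κ : Type*} [CommRing A] [CharP A 2] [Field κ] (π : A →+* κ) (hs : Function.Surjective π)
    (hk : ∀ a b, π a = 0 → π b = 0 → a * b = 0) : ∃ σ : κ →+* A, ∀ k, π (σ k) = k := by
  have two : (2 : A) = 0 := CharTwo.two_eq_zero
  -- the subring of squares
  let Sq : Subring A := (frobenius A 2).range
  have hsq : ∀ a : A, a ^ 2 ∈ Sq := fun a => ⟨a, rfl⟩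
  let T : Set (Subring A) := {L | Sq ≤ L ∧ ∀ l ∈ L, π l = 0 → l = 0}
  have hSq : Sq ∈ T := by
    refine ⟨le_rfl, ?_⟩
    rintro _ ⟨a, rfl⟩ h
    rw [frobenius_def, map_pow] at h
    have := pow_eq_zero_iff (two_ne_zero) |>.1 h
    rw [frobenius_def, pow_two, hk a a this this]
  obtain ⟨L, hL1, hL⟩ := zorn_le_nonempty₀ T (fun c hc hch L hLc => by
    refine ⟨sSup c, ⟨(hc hLc).1.trans (le_sSup hLc), ?_⟩, fun z hz => le_sSup hz⟩
    intro l hl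
    rw [Subring.mem_sSup_of_directedOn ⟨L, hLc⟩ hch.directedOn] at hl
    obtain ⟨s, hs, hl⟩ := hl
    exact (hc hs).2 l hl) Sq hSq
  have hLT := hL.prop
  have hunit : ∀ l ∈ L, π l ≠ 0 → ∃ l' ∈ L, π l' * π l = 1 := by
    intro l hl h0
    obtain ⟨b, hb⟩ := hs (π l)⁻¹
    refine ⟨l * b ^ 2, L.mul_mem hl (hLT.1 (hsq b)), ?_⟩
    rw [map_mul, map_pow, hb]; field_simp
  have hsurj : ∀ k, ∃ l ∈ L, π l = k := by
    intro k
    by_contra hcon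
    push Not at hcon
    obtain ⟨a, rfl⟩ := hs k
    have ha : a ^ 2 ∈ L := hLT.1 (hsq a)
    have hle : L ≤ adjSq L a ha := fun l hl => ⟨l, hl, 0, L.zero_mem, by ring⟩
    have hmem : adjSq L a ha ∈ T := by
      refine ⟨hLT.1.trans hle, ?_⟩
      rintro _ ⟨l1, h1, l2, h2, rfl⟩ h
      by_cases h0 : π l2 = 0
      · have := hLT.2 _ h2 h0
        subst this
        simp only [zero_mul, add_zero] at h ⊢
        exact hLT.2 _ h1 h
      · obtain ⟨l', hl', he⟩ := hunit l2 h2 h0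
        refine absurd ?_ (hcon (-(l' * l1)) (L.neg_mem (L.mul_mem hl' h1)))
        rw [map_add, map_mul] at h
        rw [map_neg, map_mul]
        linear_combination (-π l') * h + π a * he
    have := hL.eq_of_le hmem hle
    have ha' : a ∈ L := by rw [this]; exact ⟨0, L.zero_mem, 1, L.one_mem, by ring⟩
    exact hcon a ha' rfl
  have hbij : Function.Bijective (π.comp L.subtype) := by
    refine ⟨(injective_iff_map_eq_zero _).2 fun l hl => Subtype.ext (hLT.2 l l.2 hl), fun k => ?_⟩
    obtain ⟨l, hl, h⟩ := hsurj k
    exact ⟨⟨l, hl⟩, h⟩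
  let e := RingEquiv.ofBijective _ hbij
  exact ⟨L.subtype.comp e.symm.toRingHom, fun k => e.apply_symm_apply k⟩

lemma formallySmooth {K κ : Type u} [Field K] [CharP K 2] [Field κ] [Algebra K κ] (hK : ∀ a : K, ∃ b, b ^ 2 = a) :
    Algebra.FormallySmooth K κ := by
  refine Algebra.FormallySmooth.of_comp_surjective fun B _ _ I hI f => ?_
  have hII : ∀ a b, a ∈ I → b ∈ I → a * b = 0 := fun a b ha hb => by
    have : a * b ∈ I ^ 2 := by rw [pow_two]; exact Ideal.mul_mem_mul ha hb
    rwa [hI] at this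
  rcases subsingleton_or_nontrivial B with hB | hB
  · refine ⟨⟨⟨⟨⟨fun _ => 0, Subsingleton.elim _ _⟩, fun _ _ => Subsingleton.elim _ _⟩, Subsingleton.elim _ _, fun _ _ => Subsingleton.elim _ _⟩, fun _ => Subsingleton.elim _ _⟩, ?_⟩
    haveI : Subsingleton (B ⧸ I) := Function.Surjective.subsingleton Ideal.Quotient.mk_surjective
    ext; exact Subsingleton.elim _ _
  haveI : CharP B 2 := charP_of_injective_algebraMap (algebraMap K B).injective 2
  haveI : CharP κ 2 := charP_of_injective_algebraMap (algebraMap K κ).injective 2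
  let A : Subring (B × κ) := RingHom.eqLocus ((Ideal.Quotient.mk I).comp (RingHom.fst B κ)) (f.toRingHom.comp (RingHom.snd B κ))
  haveI : CharP A 2 := (RingHom.charP_iff A.subtype Subtype.val_injective 2).2 inferInstance
  have hA : ∀ a : A, Ideal.Quotient.mk I a.1.1 = f a.1.2 := fun a => a.2
  obtain ⟨σ, hσ⟩ := coef_section ((RingHom.snd B κ).comp A.subtype) (fun k => by
    obtain ⟨b, hb⟩ := Ideal.Quotient.mk_surjective (f k)
    exact ⟨⟨(b, k), hb⟩, rfl⟩) (fun a b ha hb => by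
      have ha : a.1.2 = 0 := ha
      have hb : b.1.2 = 0 := hb
      have h1 := hA a
      have h2 := hA b
      rw [ha, map_zero, Ideal.Quotient.eq_zero_iff_mem] at h1
      rw [hb, map_zero, Ideal.Quotient.eq_zero_iff_mem] at h2
      refine Subtype.ext (Prod.ext (hII _ _ h1 h2) ?_)
      change a.1.2 * b.1.2 = 0
      rw [ha, zero_mul])
  have hσ' : ∀ k, (σ k).1.2 = k := hσ
  have hl : ∀ k, Ideal.Quotient.mk I (σ k).1.1 = f k := fun k => by rw [hA, hσ']
  let g : κ →+* B := (RingHom.fst B κ).comp (A.subtype.comp σ)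
  have hg : ∀ k, Ideal.Quotient.mk I (g k) = f k := hl
  refine ⟨{ g with commutes' := fun a => ?_ }, AlgHom.ext hg⟩
  change g (algebraMap K κ a) = algebraMap K B a
  obtain ⟨b, rfl⟩ := hK a
  have h1 : g (algebraMap K κ b) - algebraMap K B b ∈ I := by
    rw [← Ideal.Quotient.eq, hg, f.commutes]; rfl
  have h2 := hII _ _ h1 h1
  have two : (2 : B) = 0 := CharTwo.two_eq_zero
  rw [map_pow, map_pow, map_pow]
  linear_combination h2 - (algebraMap K B b ^ 2 - g (algebraMap K κ b) * algebraMap K B b) * two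
end
end BM

namespace BM
section
lemma isPrecomplete_pi {A : Type*} [CommRing A] (I : Ideal A) [IsPrecomplete I A] (r : ℕ) : IsPrecomplete I (Fin r → A) := by
  refine ⟨fun f hf => ?_⟩
  have h1 : ∀ (n : ℕ) (v : Fin r → A), v ∈ (I ^ n • ⊤ : Submodule A (Fin r → A)) → ∀ i, v i ∈ (I ^ n • ⊤ : Submodule A A) := by
    intro n v hv i
    have : v i ∈ (I ^ n • ⊤ : Submodule A (Fin r → A)).map (LinearMap.proj i : (Fin r → A) →ₗ[A] A) := ⟨v, hv, rfl⟩
    rw [Submodule.map_smul''] at this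
    exact (Submodule.smul_mono le_rfl le_top : _ ≤ _) this
  have h2 : ∀ (n : ℕ) (v : Fin r → A), (∀ i, v i ∈ (I ^ n • ⊤ : Submodule A A)) → v ∈ (I ^ n • ⊤ : Submodule A (Fin r → A)) := by
    intro n v hv
    have : v = ∑ i, LinearMap.single A (fun _ => A) i (v i) := by
      ext j; simp [Finset.sum_apply, Pi.single_apply]
    rw [this]
    refine Submodule.sum_mem _ fun i _ => ?_
    have h3 : LinearMap.single A (fun _ => A) i (v i) ∈ (I ^ n • ⊤ : Submodule A A).map (LinearMap.single A (fun _ => A) i) := ⟨v i, hv i, rfl⟩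
    rw [Submodule.map_smul''] at h3
    exact (Submodule.smul_mono le_rfl le_top : _ ≤ _) h3
  have h3 : ∀ i, ∃ L : A, ∀ n, f n i ≡ L [SMOD (I ^ n • ⊤ : Submodule A A)] := by
    intro i
    refine IsPrecomplete.prec' (I := I) (fun n => f n i) fun {m n} hmn => ?_
    have := hf hmn
    rw [SModEq.sub_mem] at this ⊢
    exact h1 m _ this i
  choose L hL using h3
  refine ⟨L, fun n => ?_⟩
  rw [SModEq.sub_mem]
  exact h2 n _ fun i => SModEq.sub_mem.1 (hL i n)

lemma finite_of_complete {A C : Type*} [CommRing A] [CommRing C] [Algebra A C] (I : Ideal A) [IsPrecomplete I A]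
    [IsHausdorff I C] (W : Submodule A C) (hW : W.FG) (h : ⊤ ≤ W ⊔ (I • ⊤ : Submodule A C)) : Module.Finite A C := by
  obtain ⟨r, s, hs⟩ := Submodule.fg_iff_exists_fin_generating_family.1 hW
  haveI := isPrecomplete_pi I r
  have hsurj : Function.Surjective (Fintype.linearCombination A s) := by
    apply surjective_of_mkQ_comp_surjective (I := I)
    intro q
    obtain ⟨c, rfl⟩ := Submodule.mkQ_surjective _ q
    obtain ⟨w, hw, i, hi, rfl⟩ := Submodule.mem_sup.1 (h (Submodule.mem_top (x := c)))
    rw [← hs, ← Fintype.range_linearCombination] at hw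
    obtain ⟨v, rfl⟩ := hw
    refine ⟨v, ?_⟩
    rw [LinearMap.comp_apply, map_add, (Submodule.Quotient.mk_eq_zero _).2 hi |> fun h => (h : Submodule.mkQ _ i = 0), add_zero]
  exact Module.Finite.of_surjective _ hsurj

lemma filt {A C : Type*} [CommRing A] [CommRing C] [Algebra A C] (M : Ideal C) (hfg : M.FG)
    (hM : ∀ c : C, ∃ a : A, c - algebraMap A C a ∈ M) (n : ℕ) :
    ∃ W : Submodule A C, W.FG ∧ ⊤ ≤ W ⊔ (M ^ n).restrictScalars A := by
  induction n with
  | zero => exact ⟨⊥, Submodule.fg_bot, by simp⟩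
  | succ n ih =>
    obtain ⟨W, hW, h⟩ := ih
    obtain ⟨T, hT⟩ := Ideal.FG.pow (n := n) hfg
    refine ⟨W ⊔ Submodule.span A T, hW.sup ⟨T, rfl⟩, ?_⟩
    have key : (M ^ n).restrictScalars A ≤ Submodule.span A T ⊔ (M ^ (n + 1)).restrictScalars A := by
      intro c hc
      rw [Submodule.restrictScalars_mem, ← hT] at hc
      refine Submodule.span_induction (p := fun c _ => c ∈ Submodule.span A (T : Set C) ⊔ (M ^ (n + 1)).restrictScalars A) ?_ (Submodule.zero_mem _) (fun _ _ _ _ => Submodule.add_mem _) ?_ hc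
      · intro x hx
        exact Submodule.mem_sup_left (Submodule.subset_span hx)
      · intro c x _ hx
        obtain ⟨a, ha⟩ := hM c
        have hxM : x ∈ M ^ n := by
          have : Submodule.span A (T : Set C) ⊔ (M ^ (n + 1)).restrictScalars A ≤ (M ^ n).restrictScalars A := by
            rw [sup_le_iff]
            constructor
            · rw [Submodule.span_le, ← hT]; exact fun y hy => Submodule.subset_span hy
            · exact fun y hy => Ideal.pow_le_pow_right (Nat.le_succ n) hy
          exact this hx
        have : c • x = a • x + (c - algebraMap A C a) * x := by rw [smul_eq_mul, Algebra.smul_def]; ring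
        rw [this]
        refine Submodule.add_mem _ (Submodule.smul_mem _ _ hx) (Submodule.mem_sup_right ?_)
        rw [Submodule.restrictScalars_mem, pow_succ']
        exact Ideal.mul_mem_mul ha hxM
    refine h.trans (sup_le (le_sup_left.trans le_sup_left) (key.trans ?_))
    exact sup_le (le_sup_right.trans le_sup_left) le_sup_right
end
end BM

namespace BM
section
lemma hom_eval {κ R : Type*} [Field κ] [CommRing R] (s : κ →+* R) (l c : R) {h : A2 κ} {n : ℕ} (hh : Hg h n) :
    eval₂ s ![l * c, c] h = eval₂ s ![l, 1] h * c ^ n := by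
  rw [eval₂_eq', eval₂_eq', Finset.sum_mul]
  refine Finset.sum_congr rfl fun m hm => ?_
  have h1 := (Hg_iff.1 hh) m (mem_support_iff.1 hm)
  have h2 : m 0 + m 1 = n := by exact_mod_cast h1
  simp only [Fin.prod_univ_two, Matrix.cons_val_zero, Matrix.cons_val_one, one_pow, mul_one]
  rw [← h2]; ring

lemma exists_lam {K κ : Type*} [Field K] [Infinite K] [Field κ] [Algebra K κ] {h : A2 κ} {n : ℕ} (hh : Hg h n) (h0 : h ≠ 0) :
    ∃ l : K, eval₂ (RingHom.id κ) ![algebraMap K κ l, 1] h ≠ 0 := by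
  by_contra hcon
  push Not at hcon
  have : X 1 * h = 0 := by
    refine MvPolynomial.funext_set (fun _ => Set.range (algebraMap K κ)) (fun _ => Set.infinite_range_of_injective (algebraMap K κ).injective) fun v hv => ?_
    obtain ⟨a, ha⟩ := hv 0 (Set.mem_univ _)
    obtain ⟨b, hb⟩ := hv 1 (Set.mem_univ _)
    rw [map_mul, eval_X, map_zero]
    by_cases hv1 : v 1 = 0
    · rw [hv1, zero_mul]
    · have hv : v = ![algebraMap K κ (a / b) * v 1, v 1] := by
        ext i; fin_cases i
        · simp only [Fin.zero_eta, Matrix.cons_val_zero]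
          rw [map_div₀, ha, hb, div_mul_cancel₀ _ hv1]
        · simp
      have h3 : eval v h = eval₂ (RingHom.id κ) v h := rfl
      rw [h3, hv, hom_eval _ _ _ hh, hcon]; simp
  exact h0 ((mul_eq_zero.1 this).resolve_left (X_ne_zero 1))

lemma sup_pow_le {B : Type*} [CommRing B] (P Q : Ideal B) (n : ℕ) : (P ⊔ Q) ^ n ≤ P ⊔ Q ^ n := by
  induction n with
  | zero => simp
  | succ n ih =>
    rw [pow_succ, pow_succ]
    refine (Ideal.mul_mono_left ih).trans ?_
    have h1 : P * (P ⊔ Q) ≤ P := Ideal.mul_le_left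
    have h2 : Q ^ n * P ≤ P := Ideal.mul_le_right
    rw [Ideal.sup_mul, Ideal.mul_sup (Q ^ n)]
    exact sup_le (h1.trans le_sup_left) (sup_le (h2.trans le_sup_left) le_sup_right)

lemma core_height {K κ B : Type*} [Field K] [Infinite K] [Field κ] [Algebra K κ] [CommRing B] [IsLocalRing B] [IsNoetherianRing B]
    [Algebra K B] {m : Ideal B} (hm : m = IsLocalRing.maximalIdeal B) {x y : B} {e n N : ℕ} (hx : x ∈ m) (hy : y ∈ m)
    (he : m ^ e ≤ Ideal.span {x, y})
    (hN : m ^ N ≤ Ideal.span {x, y} ^ (n + 1))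
    (s : κ →ₐ[K] B ⧸ m ^ N) {h : A2 κ} (hh : Hg h n) (h0 : h ≠ 0)
    (hev : eval₂ s.toRingHom ![Ideal.Quotient.mk _ x, Ideal.Quotient.mk _ y] h ∈
      (Ideal.span {x, y} ^ (n + 1)).map (Ideal.Quotient.mk (m ^ N))) :
    m.height ≤ 1 := by
  have hmm : m.IsMaximal := hm ▸ inferInstance
  have hmp : m.IsPrime := hmm.isPrime
  set I : Ideal B := Ideal.span {x, y}
  obtain ⟨l, hl⟩ := exists_lam (K := K) hh h0
  set x' : B := x - algebraMap K B l * y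
  have hxI : x ∈ I := Ideal.subset_span (by simp)
  have hyI : y ∈ I := Ideal.subset_span (by simp)
  have hIm : I ≤ m := by 
    rw [Ideal.span_le, Set.insert_subset_iff, Set.singleton_subset_iff]; exact ⟨hx, hy⟩
  have hx'I : x' ∈ I := Ideal.sub_mem _ hxI (Ideal.mul_mem_left _ _ hyI)
  set 𝔮 : Ideal B := Ideal.span {x'} ⊔ I ^ (n + 1)
  have hNq : m ^ N ≤ 𝔮 := hN.trans le_sup_right
  let q : B ⧸ m ^ N →+* B ⧸ 𝔮 := Ideal.Quotient.factor hNq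
  have hq : ∀ b, q (Ideal.Quotient.mk _ b) = Ideal.Quotient.mk _ b := fun b => rfl
  have h1 : q (eval₂ s.toRingHom ![Ideal.Quotient.mk _ x, Ideal.Quotient.mk _ y] h) = 0 := by
    have h2 : (I ^ (n + 1)).map (Ideal.Quotient.mk (m ^ N)) ≤ RingHom.ker q := by
      rw [Ideal.map_le_iff_le_comap]
      intro b hb
      rw [Ideal.mem_comap, RingHom.mem_ker, hq, Ideal.Quotient.eq_zero_iff_mem]
      exact (le_sup_right : _ ≤ 𝔮) hb
    exact h2 hev
  have hxl : Ideal.Quotient.mk 𝔮 x = (q.comp s.toRingHom) (algebraMap K κ l) * Ideal.Quotient.mk 𝔮 y := by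
    have : (q.comp s.toRingHom) (algebraMap K κ l) = Ideal.Quotient.mk 𝔮 (algebraMap K B l) := by
      change q (s (algebraMap K κ l)) = _
      rw [s.commutes]; rfl
    rw [this, ← map_mul, Ideal.Quotient.eq]
    exact (le_sup_left : _ ≤ 𝔮) (Ideal.mem_span_singleton_self _)
  have h3 : eval₂ (q.comp s.toRingHom) ![(q.comp s.toRingHom) (algebraMap K κ l) * Ideal.Quotient.mk 𝔮 y, Ideal.Quotient.mk 𝔮 y] h = 0 := by
    rw [← hxl, ← h1, eval₂_comp_left q]
    congr 1
    ext i; fin_cases i <;> rfl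
  rw [hom_eval _ _ _ hh] at h3
  have h4 : eval₂ (q.comp s.toRingHom) ![(q.comp s.toRingHom) (algebraMap K κ l), 1] h = (q.comp s.toRingHom) (eval₂ (RingHom.id κ) ![algebraMap K κ l, 1] h) := by
    rw [eval₂_comp_left (q.comp s.toRingHom)]
    congr 1
    ext i; fin_cases i <;> simp
  rw [h4] at h3
  have h5 : IsUnit ((q.comp s.toRingHom) (eval₂ (RingHom.id κ) ![algebraMap K κ l, 1] h)) := (IsUnit.mk0 _ hl).map _
  rw [h5.mul_right_eq_zero, ← map_pow, Ideal.Quotient.eq_zero_iff_mem] at h3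
  have hI2 : I = Ideal.span {x'} ⊔ Ideal.span {y} := by
    apply le_antisymm
    · rw [Ideal.span_le]
      rw [Set.insert_subset_iff, Set.singleton_subset_iff]
      constructor
      · have : x = x' + algebraMap K B l * y := by simp [x']
        have h6 : x' + algebraMap K B l * y ∈ Ideal.span {x'} ⊔ Ideal.span {y} :=
          Ideal.add_mem _ (Ideal.mem_sup_left (Ideal.mem_span_singleton_self _)) (Ideal.mul_mem_left _ _ (Ideal.mem_sup_right (Ideal.mem_span_singleton_self _)))
        rw [← this] at h6
        exact h6
      · exact Ideal.mem_sup_right (Ideal.mem_span_singleton_self _)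
    · rw [sup_le_iff, Ideal.span_singleton_le_iff_mem, Ideal.span_singleton_le_iff_mem]
      exact ⟨hx'I, hyI⟩
  have h6 : I ^ n ≤ Ideal.span {x'} ⊔ I • I ^ n := by
    have h7 : I ^ n ≤ Ideal.span {x'} ⊔ Ideal.span {y} ^ n := by
      conv_lhs => rw [hI2]
      exact sup_pow_le _ _ _
    refine h7.trans (sup_le le_sup_left ?_)
    rw [Ideal.span_singleton_pow, Ideal.span_singleton_le_iff_mem, smul_eq_mul, ← pow_succ']
    exact h3
  have h8 : I ^ n ≤ Ideal.span {x'} := by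
    refine Submodule.le_of_le_smul_of_le_jacobson_bot (IsNoetherian.noetherian _) ((hIm.trans hm.le).trans (IsLocalRing.maximalIdeal_le_jacobson _)) h6
  refine Ideal.height_le_one_of_isPrincipal_of_mem_minimalPrimes (Ideal.span {x'}) m ⟨⟨hmp, ?_⟩, ?_⟩
  · rw [Ideal.span_singleton_le_iff_mem]; exact hIm hx'I
  · rintro p ⟨hp, hpx⟩ -
    exact hp.le_of_pow_le (he.trans (hp.le_of_pow_le (h8.trans hpx)))
end
end BM

namespace BM
section
variable {κ B : Type*} [Field κ] [CommRing B] {m : Ideal B} {x y : B}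

noncomputable def evn (σ : κ →+* AdicCompletion m B) (x y : B) (n : ℕ) : A2 κ →+* B ⧸ m ^ n :=
  eval₂Hom ((AdicCompletion.evalₐ m n).toRingHom.comp σ) ![Ideal.Quotient.mk _ x, Ideal.Quotient.mk _ y]

lemma evn_mem (σ : κ →+* AdicCompletion m B) (x y : B) (n l : ℕ) {p : A2 κ} (hp : p ∈ idealOfVars (Fin 2) κ ^ l) :
    evn σ x y n p ∈ (Ideal.span {x, y} ^ l).map (Ideal.Quotient.mk (m ^ n)) := by
  have h1 : idealOfVars (Fin 2) κ ≤ ((Ideal.span {x, y}).map (Ideal.Quotient.mk (m ^ n))).comap (evn σ x y n) := by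
    rw [idealOfVars, Ideal.span_le]
    rintro _ ⟨i, rfl⟩
    fin_cases i
    · simp only [SetLike.mem_coe, Ideal.mem_comap]
      change evn σ x y n (X 0) ∈ _
      rw [evn, eval₂Hom_X']
      exact Ideal.mem_map_of_mem _ (Ideal.subset_span (by simp))
    · simp only [SetLike.mem_coe, Ideal.mem_comap]
      change evn σ x y n (X 1) ∈ _
      rw [evn, eval₂Hom_X']
      exact Ideal.mem_map_of_mem _ (Ideal.subset_span (by simp))
  have h2 := (Ideal.pow_right_mono h1 l).trans (Ideal.le_comap_pow _ _) hp
  rw [Ideal.map_pow]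
  exact h2

lemma evn_zero (σ : κ →+* AdicCompletion m B) (hx : x ∈ m) (hy : y ∈ m) (n : ℕ) (p : A2 κ) (hp : p ∈ idealOfVars (Fin 2) κ ^ n) :
    evn σ x y n p = 0 := by
  have h1 := evn_mem σ x y n n hp
  have h2 : Ideal.span {x, y} ≤ m := by
    rw [Ideal.span_le, Set.insert_subset_iff, Set.singleton_subset_iff]; exact ⟨hx, hy⟩
  have h3 := Ideal.map_mono (f := Ideal.Quotient.mk (m ^ n)) (Ideal.pow_right_mono h2 n) h1
  rwa [Ideal.map_quotient_self, Ideal.mem_bot] at h3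

lemma factor_evn (σ : κ →+* AdicCompletion m B) (x y : B) {k n : ℕ} (h : k ≤ n) :
    (Ideal.Quotient.factorPow m h).comp (evn σ x y n) = evn σ x y k := by
  refine MvPolynomial.ringHom_ext (fun r => ?_) fun i => ?_
  · simp only [RingHom.comp_apply, evn, eval₂Hom_C]
    obtain ⟨c, hc⟩ := AdicCompletion.mk_surjective m B (σ r)
    change Ideal.Quotient.factorPow m h (AdicCompletion.evalₐ m n (σ r)) = AdicCompletion.evalₐ m k (σ r)
    rw [← hc, AdicCompletion.evalₐ_mk, AdicCompletion.evalₐ_mk, ← AdicCompletion.Ideal.mk_eq_mk m h]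
    rfl
  · simp only [RingHom.comp_apply, evn, eval₂Hom_X']
    fin_cases i <;> rfl

lemma exists_psi (σ : κ →+* AdicCompletion m B) (hx : x ∈ m) (hy : y ∈ m) :
    ∃ ψ : MvPowerSeries (Fin 2) κ →+* AdicCompletion m B,
      (∀ n a, AdicCompletion.evalₐ m n (ψ a) = evn σ x y n (MvPowerSeries.truncTotal n a)) ∧
      (∀ p : A2 κ, ψ p = eval₂ σ ![algebraMap B _ x, algebraMap B _ y] p) := by
  let f : (n : ℕ) → MvPowerSeries (Fin 2) κ →+* B ⧸ m ^ n := fun n =>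
    (Ideal.Quotient.lift (idealOfVars (Fin 2) κ ^ n) (evn σ x y n) (evn_zero σ hx hy n)).comp
      (MvPowerSeries.truncTotalAlgHom (Fin 2) κ n).toRingHom
  have hfa : ∀ n a, f n a = evn σ x y n (MvPowerSeries.truncTotal n a) := fun n a => rfl
  have hf : ∀ {k n : ℕ} (hle : k ≤ n), (Ideal.Quotient.factorPow m hle).comp (f n) = f k := by
    intro k n hle
    ext a
    rw [RingHom.comp_apply, hfa, hfa, ← RingHom.comp_apply, factor_evn, ← sub_eq_zero, ← map_sub]
    exact evn_zero σ hx hy k _ (MvPowerSeries.truncTotal_sub_truncTotal_mem_pow_idealOfVars hle le_rfl a)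
  have hev : ∀ n a, AdicCompletion.evalₐ m n (AdicCompletion.liftRingHom m f hf a) = f n a := fun n a => AdicCompletion.evalₐ_liftRingHom m f hf n a
  refine ⟨AdicCompletion.liftRingHom m f hf, hev, fun p => AdicCompletion.ext_evalₐ fun n => ?_⟩
  rw [hev]
  have h1 : f n p = evn σ x y n p := by
    have := (MvPowerSeries.truncTotalAlgHom (Fin 2) κ n).commutes p
    change Ideal.Quotient.lift (idealOfVars (Fin 2) κ ^ n) (evn σ x y n) (evn_zero σ hx hy n) (MvPowerSeries.truncTotalAlgHom (Fin 2) κ n (algebraMap _ _ p)) = _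
    rw [this]; rfl
  rw [h1]
  change eval₂ _ _ _ = (AdicCompletion.evalₐ m n).toRingHom _
  rw [eval₂_comp_left]
  congr 1
  ext i; fin_cases i <;> rfl
end
end BM

namespace BM
section
variable {K κ B : Type*} [Field K] [Infinite K] [Field κ] [Algebra K κ] [CommRing B] [IsLocalRing B] [IsNoetherianRing B]
    [Algebra K B] {m : Ideal B} {x y : B}

lemma psi_inj (hm : m = IsLocalRing.maximalIdeal B) (hx : x ∈ m) (hy : y ∈ m) {e : ℕ}
    (he : m ^ e ≤ Ideal.span {x, y}) (hht : ¬ m.height ≤ 1) (σ : κ →ₐ[K] AdicCompletion m B)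
    (ψ : MvPowerSeries (Fin 2) κ →+* AdicCompletion m B)
    (hψ : ∀ n a, AdicCompletion.evalₐ m n (ψ a) = evn σ.toRingHom x y n (MvPowerSeries.truncTotal n a)) :
    Function.Injective ψ := by
  rw [injective_iff_map_eq_zero]
  intro a ha
  by_contra ha0
  have hex : ∃ n, hcomp n a ≠ 0 := by
    by_contra hcon
    push Not at hcon
    apply ha0
    ext d
    have := congrArg (coeff d) (hcon d.degree)
    rw [coeff_hcomp, if_pos rfl] at this
    simpa using this
  classical
  let n := Nat.find hex
  have hn : hcomp n a ≠ 0 := Nat.find_spec hex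
  have hmin : ∀ k < n, hcomp k a = 0 := fun k hk => not_not.1 (Nat.find_min hex hk)
  let N := e * (n + 1) + (n + 1)
  have hN : m ^ N ≤ Ideal.span {x, y} ^ (n + 1) := by
    refine (Ideal.pow_le_pow_right (Nat.le_add_right (e * (n + 1)) (n + 1))).trans ?_
    rw [pow_mul]
    exact Ideal.pow_right_mono he _
  have hdiff : MvPowerSeries.truncTotal N a - hcomp n a ∈ idealOfVars (Fin 2) κ ^ (n + 1) := by
    rw [mem_pow_idealOfVars_iff']
    intro d hd
    rw [coeff_sub, coeff_hcomp, MvPowerSeries.coeff_truncTotal _ (by omega)]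
    split_ifs with h
    · simp
    · have := congrArg (coeff d) (hmin d.degree (by omega))
      rw [coeff_hcomp, if_pos rfl] at this
      rw [this]; simp
  have h1 := evn_mem σ.toRingHom x y N (n + 1) hdiff
  rw [map_sub, ← hψ, ha, map_zero, zero_sub, neg_mem_iff] at h1
  exact hht (core_height hm hx hy he hN (((AdicCompletion.evalₐ m N).restrictScalars K).comp σ) (Hg_hcomp n a) hn h1)
end
section
variable {κ B : Type*} [Field κ] [CommRing B] [IsNoetherianRing B] {m : Ideal B} {x y : B}
lemma psi_finite {e : ℕ} (hx : x ∈ m) (hy : y ∈ m)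
    (he : m ^ e ≤ Ideal.span {x, y}) [Algebra (MvPowerSeries (Fin 2) κ) (AdicCompletion m B)]
    (hX : algebraMap (MvPowerSeries (Fin 2) κ) (AdicCompletion m B) (MvPowerSeries.X 0) = algebraMap B _ x)
    (hY : algebraMap (MvPowerSeries (Fin 2) κ) (AdicCompletion m B) (MvPowerSeries.X 1) = algebraMap B _ y)
    (hs : ∀ c : AdicCompletion m B, ∃ a : MvPowerSeries (Fin 2) κ, AdicCompletion.evalOneₐ m (algebraMap _ _ a) = AdicCompletion.evalOneₐ m c) :
    Module.Finite (MvPowerSeries (Fin 2) κ) (AdicCompletion m B) := by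
  have fg : m.FG := IsNoetherian.noetherian _
  let I : Ideal (MvPowerSeries (Fin 2) κ) := Ideal.span (Set.range MvPowerSeries.X)
  let M : Ideal (AdicCompletion m B) := m.map (algebraMap B _)
  have hker : RingHom.ker (AdicCompletion.evalOneₐ m) = M := AdicCompletion.ker_evalOneₐ_eq_map m fg
  have hI : I.map (algebraMap _ (AdicCompletion m B)) = (Ideal.span {x, y}).map (algebraMap B _) := by
    rw [Ideal.map_span, Ideal.map_span, ← Set.range_comp, Set.image_pair]
    congr 1
    ext c
    simp only [Set.mem_range, Function.comp, Fin.exists_fin_two, hX, hY, Set.mem_insert_iff, Set.mem_singleton_iff, eq_comm]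
  have hIM : I.map (algebraMap _ (AdicCompletion m B)) ≤ M := by
    rw [hI]
    apply Ideal.map_mono
    rw [Ideal.span_le, Set.insert_subset_iff, Set.singleton_subset_iff]; exact ⟨hx, hy⟩
  have hMI : M ^ e ≤ I.map (algebraMap _ (AdicCompletion m B)) := by
    rw [hI, ← Ideal.map_pow]
    exact Ideal.map_mono he
  have hH : IsHausdorff M (AdicCompletion m B) := by
    have := (AdicCompletion.isAdicComplete_self m fg).toIsHausdorff
    exact this
  have hH2 : IsHausdorff (I.map (algebraMap _ (AdicCompletion m B))) (AdicCompletion m B) := by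
    constructor
    intro c hc
    refine hH.haus c fun n => ?_
    exact (hc n).mono (Submodule.smul_mono_left (Ideal.pow_right_mono hIM n))
  have hH3 : IsHausdorff I (AdicCompletion m B) := IsHausdorff.map_algebraMap_iff.1 hH2
  obtain ⟨W, hW, hWt⟩ := filt (A := MvPowerSeries (Fin 2) κ) M (fg.map _) (fun c => by
    obtain ⟨a, ha⟩ := hs c
    refine ⟨a, ?_⟩
    rw [← hker, RingHom.mem_ker, map_sub, ha, sub_self]) e
  refine finite_of_complete I W hW (hWt.trans (sup_le_sup_left ?_ _))
  rw [Ideal.smul_top_eq_map]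
  exact fun c hc => hMI hc
end
end BM

namespace BM
lemma gg_alg {K κ : Type*} [Field K] [Field κ] [Algebra K κ] (t : K) (i : ℕ) : gg (algebraMap K κ t) i = algebraMap K κ (gg t i) := by
  induction i using Nat.twoStepInduction with
  | zero => simp [gg]
  | one => simp [gg]
  | more n _ ih => simp [gg, ih]

set_option maxHeartbeats 1000000 in
theorem local_thm {K B : Type u} [Field K] [CharP K 2] [Infinite K] (hK : ∀ a : K, ∃ b, b ^ 2 = a)
    {t : K} (hg : ∀ i, 3 ≤ i → gg t i ≠ 0) [CommRing B] [IsLocalRing B] [IsNoetherianRing B]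
    [Algebra K B] {m : Ideal B} (hm : m = IsLocalRing.maximalIdeal B) {x y z u v w : B} (hx : x ∈ m) (hy : y ∈ m) {e : ℕ}
    (he : m ^ e ≤ Ideal.span {x, y})
    (hz : z ^ 4 + x * y * z ^ 2 + x ^ 3 * z + y ^ 3 * z + algebraMap K B t * x ^ 2 * y ^ 2 = 0)
    (hf : x ^ 3 * y ^ 3 = u * x ^ 4 + v * y ^ 4 + w * z ^ 4) : m.height ≤ 1 := by
  by_contra hht
  haveI hmm : m.IsMaximal := hm ▸ inferInstance
  letI : Field (B ⧸ m) := Ideal.Quotient.field m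
  haveI : CharP (B ⧸ m) 2 := charP_of_injective_algebraMap (algebraMap K (B ⧸ m)).injective 2
  haveI : Algebra.FormallySmooth K (B ⧸ m) := formallySmooth hK
  obtain ⟨σ, hσ⟩ := Algebra.FormallySmooth.exists_adicCompletionEvalOneₐ_comp_eq (R := K) (S := B) (I := m) (AlgHom.id K (B ⧸ m))
  obtain ⟨ψ, hψ1, hψ2⟩ := exists_psi σ.toRingHom hx hy
  have hinj : Function.Injective ψ := psi_inj hm hx hy he hht σ ψ hψ1
  letI : Algebra (MvPowerSeries (Fin 2) (B ⧸ m)) (AdicCompletion m B) := ψ.toAlgebra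
  have hX : ψ (MvPowerSeries.X 0) = algebraMap B _ x := by
    have := hψ2 (X 0)
    rw [coe_X, eval₂_X] at this
    exact this
  have hY : ψ (MvPowerSeries.X 1) = algebraMap B _ y := by
    have := hψ2 (X 1)
    rw [coe_X, eval₂_X] at this
    exact this
  have hC : ∀ c, ψ (MvPowerSeries.C c) = σ c := by
    intro c
    have := hψ2 (C c)
    rw [coe_C, eval₂_C] at this
    exact this
  haveI : Module.Finite (MvPowerSeries (Fin 2) (B ⧸ m)) (AdicCompletion m B) := by
    refine psi_finite hx hy he hX hY fun c => ⟨MvPowerSeries.C (AdicCompletion.evalOneₐ m c), ?_⟩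
    change AdicCompletion.evalOneₐ m (ψ _) = _
    rw [hC]
    exact DFunLike.congr_fun hσ _
  obtain ⟨𝔭, h𝔭, h𝔭2⟩ := Ideal.exists_ideal_over_prime_of_isIntegral (S := AdicCompletion m B) (⊥ : Ideal (MvPowerSeries (Fin 2) (B ⧸ m))) ⊥ (by
    rw [← RingHom.ker_eq_comap_bot]
    exact ((RingHom.injective_iff_ker_eq_bot _).1 hinj).le)
  obtain ⟨h𝔭1, h𝔭2⟩ := h𝔭2
  have hinj2 : Function.Injective (algebraMap (MvPowerSeries (Fin 2) (B ⧸ m)) (AdicCompletion m B ⧸ 𝔭)) := by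
    rw [injective_iff_map_eq_zero]
    intro a ha
    have : a ∈ 𝔭.comap (algebraMap (MvPowerSeries (Fin 2) (B ⧸ m)) (AdicCompletion m B)) := by
      rw [Ideal.mem_comap]
      exact Ideal.Quotient.eq_zero_iff_mem.1 ha
    rw [h𝔭2] at this
    exact this
  let q : B →+* AdicCompletion m B ⧸ 𝔭 := (Ideal.Quotient.mk 𝔭).comp (algebraMap B _)
  refine theoremM (κ := B ⧸ m) (t := algebraMap K (B ⧸ m) t) ?_ hinj2 (x := q x) (y := q y) (z := q z) (u := q u) (v := q v) (w := q w) (τ := q (algebraMap K B t)) ?_ ?_ ?_ ?_ ?_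
  · intro i hi
    rw [gg_alg]
    exact (map_ne_zero _).2 (hg i hi)
  · change _ = Ideal.Quotient.mk 𝔭 (ψ _)
    rw [hX]; rfl
  · change _ = Ideal.Quotient.mk 𝔭 (ψ _)
    rw [hY]; rfl
  · change _ = Ideal.Quotient.mk 𝔭 (ψ _)
    rw [hC, σ.commutes]; rfl
  · have := congrArg q hz
    simpa only [map_add, map_mul, map_pow, map_zero] using this
  · have := congrArg q hf
    simpa only [map_add, map_mul, map_pow, map_zero] using this
end BM

namespace BM
theorem global_thm {K S : Type u} [Field K] [CharP K 2] [Infinite K] (hK : ∀ a : K, ∃ b, b ^ 2 = a)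
    {t : K} (hg : ∀ i, 3 ≤ i → gg t i ≠ 0) [CommRing S] [IsNoetherianRing S]
    [Algebra K S] {x y z u v w : S} (hI : Ideal.span {x, y} ≠ ⊤)
    (hz : z ^ 4 + x * y * z ^ 2 + x ^ 3 * z + y ^ 3 * z + algebraMap K S t * x ^ 2 * y ^ 2 = 0)
    (hf : x ^ 3 * y ^ 3 = u * x ^ 4 + v * y ^ 4 + w * z ^ 4) :
    ∃ P : PrimeSpectrum S, Ideal.span {x, y} ≤ P.asIdeal ∧ Order.height P ≤ 1 := by
  obtain ⟨P, hP⟩ := Ideal.nonempty_minimalPrimes hI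
  haveI hPp : P.IsPrime := hP.1.1
  refine ⟨⟨P, hPp⟩, hP.1.2, ?_⟩
  rw [← PrimeSpectrum.height_eq_orderHeight]
  change P.height ≤ 1
  let B := Localization.AtPrime P
  haveI : IsNoetherianRing B := IsLocalization.isNoetherianRing P.primeCompl B inferInstance
  have hmap : P.map (algebraMap S B) = IsLocalRing.maximalIdeal B := Localization.AtPrime.map_eq_maximalIdeal
  have hcomap : (IsLocalRing.maximalIdeal B).under S = P := Localization.AtPrime.under_maximalIdeal
  have hxP : x ∈ P := hP.1.2 (Ideal.subset_span (by simp))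
  have hyP : y ∈ P := hP.1.2 (Ideal.subset_span (by simp))
  have hrad : IsLocalRing.maximalIdeal B ≤ (Ideal.span {algebraMap S B x, algebraMap S B y}).radical := by
    rw [Ideal.radical_eq_sInf]
    refine le_sInf ?_
    rintro q ⟨hq1, hq2⟩
    have h1 : (q.comap (algebraMap S B)).IsPrime := Ideal.IsPrime.comap _
    have h2 : q.comap (algebraMap S B) ≤ P := by
      exact (Ideal.comap_mono (IsLocalRing.le_maximalIdeal hq2.ne_top)).trans hcomap.le
    have h3 : Ideal.span {x, y} ≤ q.comap (algebraMap S B) := by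
      rw [Ideal.span_le, Set.insert_subset_iff, Set.singleton_subset_iff]
      exact ⟨hq1 (Ideal.subset_span (by simp)), hq1 (Ideal.subset_span (by simp))⟩
    rw [← hmap, Ideal.map_le_iff_le_comap]
    exact hP.2 ⟨h1, h3⟩ h2
  obtain ⟨e, he⟩ := Ideal.exists_radical_pow_le_of_fg (Ideal.span {algebraMap S B x, algebraMap S B y}) (IsNoetherian.noetherian _)
  have h1 := local_thm (B := B) hK hg rfl (x := algebraMap S B x) (y := algebraMap S B y) (z := algebraMap S B z)
    (u := algebraMap S B u) (v := algebraMap S B v) (w := algebraMap S B w)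
    (hmap ▸ Ideal.mem_map_of_mem _ hxP) (hmap ▸ Ideal.mem_map_of_mem _ hyP) ((Ideal.pow_right_mono hrad e).trans he)
    (by
      have := congrArg (algebraMap S B) hz
      rw [IsScalarTower.algebraMap_apply K S B]
      simpa only [map_add, map_mul, map_pow, map_zero] using this)
    (by
      have := congrArg (algebraMap S B) hf
      simpa only [map_add, map_mul, map_pow, map_zero] using this)
  have h2 := IsLocalization.height_under P.primeCompl (IsLocalRing.maximalIdeal B)
  exact (congrArg Ideal.height hcomap).symm.le.trans (h2.le.trans h1)

noncomputable def ggP : ℕ → Polynomial (ZMod 2)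
  | 0 => 0
  | 1 => 0
  | n + 2 => ggP (n + 1) ^ 2 + Polynomial.X

lemma ggP_map (i : ℕ) : algebraMap (Polynomial (ZMod 2)) (RatFunc (ZMod 2)) (ggP i) = gg RatFunc.X i := by
  induction i using Nat.twoStepInduction with
  | zero => simp [gg, ggP]
  | one => simp [gg, ggP]
  | more n _ ih => simp [gg, ggP, ih]

lemma ggP_der (n : ℕ) : Polynomial.derivative (ggP (n + 2)) = 1 := by
  simp [ggP, Polynomial.derivative_pow, CharTwo.two_eq_zero]

lemma gg_ne (K : Type*) [Field K] [Algebra (RatFunc (ZMod 2)) K] (i : ℕ) (hi : 3 ≤ i) :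
    gg (algebraMap (RatFunc (ZMod 2)) K RatFunc.X) i ≠ 0 := by
  rw [gg_alg, ← ggP_map]
  refine (map_ne_zero _).2 ((map_ne_zero_iff _ (RatFunc.algebraMap_injective _)).2 fun h => ?_)
  obtain ⟨n, rfl⟩ : ∃ n, i = n + 2 := ⟨i - 2, by omega⟩
  have := ggP_der n
  rw [h] at this
  simp at this
end BM

/-- **Brenner–Monsky example.** Let `K` be an algebraic closure of
`𝔽₂(t)` and `R = K[x,y,z,u,v,w]/(z⁴+xyz²+x³z+y³z+tx²y², x³y³−ux⁴−vy⁴−wz⁴)`.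
Then `x, y` is a Q-sequence in `R`, but the superheight of `(x,y)R` is `1`: in every
Noetherian `R`-algebra `S` in which `(x,y)S` is proper, the height of `(x,y)S` is
at most `1`. -/
theorem brennerMonsky_QSequence_superheight_one
    (K : Type u) [Field K] [Algebra (RatFunc (ZMod 2)) K]
    [IsAlgClosure (RatFunc (ZMod 2)) K] :
    let t : MvPolynomial (Fin 6) K := C (algebraMap (RatFunc (ZMod 2)) K RatFunc.X)
    let x : MvPolynomial (Fin 6) K := X 0
    let y : MvPolynomial (Fin 6) K := X 1
    let z : MvPolynomial (Fin 6) K := X 2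
    let u : MvPolynomial (Fin 6) K := X 3
    let v : MvPolynomial (Fin 6) K := X 4
    let w : MvPolynomial (Fin 6) K := X 5
    let J : Ideal (MvPolynomial (Fin 6) K) := Ideal.span
      {z ^ 4 + x * y * z ^ 2 + x ^ 3 * z + y ^ 3 * z + t * x ^ 2 * y ^ 2,
        x ^ 3 * y ^ 3 - u * x ^ 4 - v * y ^ 4 - w * z ^ 4}
    let R := MvPolynomial (Fin 6) K ⧸ J
    let xR : R := Ideal.Quotient.mk J x
    let yR : R := Ideal.Quotient.mk J y
    IsQSequence ![xR, yR] ∧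
    ∀ (S : Type u) [CommRing S] [IsNoetherianRing S] [Algebra R S],
      Ideal.span {algebraMap R S xR, algebraMap R S yR} ≠ ⊤ →
      idealHeight S (Ideal.span {algebraMap R S xR, algebraMap R S yR}) ≤ 1 := by
  intro t x y z u v w J R xR yR
  haveI hc2 : CharP K 2 := by
    haveI : CharP (RatFunc (ZMod 2)) 2 := charP_of_injective_algebraMap (RatFunc.algebraMap_injective (ZMod 2)) 2
    exact charP_of_injective_algebraMap (algebraMap (RatFunc (ZMod 2)) K).injective 2
  haveI hac : IsAlgClosed K := IsAlgClosure.isAlgClosed (RatFunc (ZMod 2))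
  haveI hinf : Infinite K := IsAlgClosed.instInfinite
  have hg := BM.gg_ne K
  refine ⟨BM.partI (algebraMap (RatFunc (ZMod 2)) K RatFunc.X) hg, ?_⟩
  intro S _ _ _ hne
  letI : Algebra K S := ((algebraMap R S).comp ((Ideal.Quotient.mk J).comp (C : K →+* MvPolynomial (Fin 6) K))).toAlgebra
  let q : MvPolynomial (Fin 6) K →+* S := (algebraMap R S).comp (Ideal.Quotient.mk J)
  have hq : ∀ p ∈ J, q p = 0 := by
    intro p hp
    change algebraMap R S (Ideal.Quotient.mk J p) = 0
    rw [Ideal.Quotient.eq_zero_iff_mem.2 hp, map_zero]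
  obtain ⟨P, hP1, hP2⟩ := BM.global_thm (K := K) (S := S)
    (fun a => by
      obtain ⟨b, hb⟩ := IsAlgClosed.exists_pow_nat_eq a (n := 2) (by norm_num)
      exact ⟨b, hb⟩)
    hg (x := q x) (y := q y) (z := q z) (u := q u) (v := q v) (w := q w) hne
    (by
      have h := hq _ (Ideal.subset_span (Set.mem_insert _ _))
      simp only [map_add, map_mul, map_pow] at h
      exact h)
    (by
      have h := hq _ (Ideal.subset_span (Set.mem_insert_of_mem _ (Set.mem_singleton _)))
      simp only [map_sub, map_mul, map_pow] at h
      linear_combination h)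
  exact (iInf₂_le P hP1).trans hP2
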